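/- For every n ≥ 1 and r ≥ 1, the quotient topological space of GL_n(ℂ)^r by the diagonal conjugation action of GL_n(ℂ) has trivial second homotopy group at every basepoint. -/

import Mathlib

/-!
The quotient `GL_n(ℂ)^r / GL_n(ℂ)` is not Hausdorff, which helps: if every value of a map `f`
specializes to the corresponding value of a continuous map `g`, then jumping from `f` to `g` at the
last instant is a homotopy (`RepQuot.bdHom_of_specializes`). The proof rests on three facts.

* *Closed orbits.* The closure of every conjugation orbit contains exactly one closed orbit, that of
  a vector of minimal length (a balanced tuple, as in the theorem of Kempf and Ness). Sending an
  orbit to this closed orbit is a continuous self-map `ss` of the quotient, and every point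
  specializes to its image (`RepQuot.exists_semisimplification`). So every square is homotopic to
  one consisting of closed orbits.
* *Lifting.* At a balanced tuple the action has a slice (`RepQuot.exists_slice`). The image of a
  slice in the quotient is an open contractible set; its preimage is path connected, and each loop in
  the preimage is homotopic to a loop moving inside an orbit, because stabilizers are connected
  (`RepQuot.poly_of_bal`). Cutting a square into small pieces shows that a square of closed orbits
  whose boundary goes to the class of the trivial representation, a class with a single element,
  lifts up to homotopy to a square in `GL_n(ℂ)^r` (`RepQuot.lift_map_square`).
* *The lifted square dies.* A square in the group `GL_n(ℂ)^r` is the product of its coordinates, so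
  it suffices to treat one coordinate at a time (`RepQuot.null_mul`). For one matrix, the image under
  `ss` depends only on the characteristic polynomial (`RepQuot.ss_eq_of_charpoly`), so the square may
  be replaced by one of companion matrices. There the coefficients are contracted linearly, and the
  constant coefficient, which must stay nonzero, through its logarithm (`RepQuot.single_null`).

The homotopies so obtained are constant on the boundary at each time but may move the base point;
`RepQuot.null_of_bdHom` repairs this, and `RepQuot.square_null` puts everything together.
-/

/-- The general linear group `GL_n(ℂ)` of invertible `n × n` complex matrices. -/
abbrev GLn (n : ℕ) : Type := Matrix.GeneralLinearGroup (Fin n) ℂ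

/-- The quotient topological space of `GL_n(ℂ)^r` by the diagonal conjugation action
`g • (A₁, …, A_r) = (g A₁ g⁻¹, …, g A_r g⁻¹)`, i.e. `Hom(F_r, GL_n(ℂ))/GL_n(ℂ)`. -/
abbrev RepQuotGL (n r : ℕ) : Type :=
  Quotient (MulAction.orbitRel (ConjAct (GLn n)) (Fin r → GLn n))

/-! ### Balanced tuples and intertwiners -/

namespace RepQuot

open Matrix Topology unitInterval

attribute [local instance] Matrix.frobeniusNormedRing Matrix.frobeniusNormedAlgebra

/-- Tuples of matrices. -/
abbrev Tup (n r : ℕ) : Type := Fin r → Matrix (Fin n) (Fin n) ℂ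

/-- Balanced tuples: zeros of the moment map `∑ [yᵢ, yᵢᴴ]` of the conjugation action. -/
def Bal {n r : ℕ} (y : Tup n r) : Prop := ∑ i, y i * (y i)ᴴ = ∑ i, (y i)ᴴ * y i

/-- The squared Hilbert–Schmidt norm of a tuple. -/
noncomputable def nsq {n r : ℕ} (y : Tup n r) : ℝ := ∑ i, (trace ((y i)ᴴ * y i)).re

variable {n r : ℕ}

lemma nsq_eq (y : Tup n r) : nsq y = ∑ i, ∑ a, ∑ b, ‖y i a b‖ ^ 2 := by
  unfold nsq
  refine Finset.sum_congr rfl fun i _ => ?_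
  simp only [trace, diag, mul_apply, conjTranspose_apply, Complex.re_sum]
  rw [Finset.sum_comm]
  refine Finset.sum_congr rfl fun a _ => Finset.sum_congr rfl fun b _ => ?_
  rw [Complex.star_def, mul_comm, Complex.mul_conj, Complex.normSq_eq_norm_sq]
  exact Complex.ofReal_re _

lemma eq_zero_of_nsq_eq_zero {y : Tup n r} (h : nsq y = 0) : y = 0 := by
  rw [nsq_eq] at h
  funext i; ext a b
  have h1 := (Finset.sum_eq_zero_iff_of_nonneg (fun i _ => by positivity)).1 h i (Finset.mem_univ _)
  have h2 := (Finset.sum_eq_zero_iff_of_nonneg (fun i _ => by positivity)).1 h1 a (Finset.mem_univ _)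
  have h3 := (Finset.sum_eq_zero_iff_of_nonneg (fun i _ => by positivity)).1 h2 b (Finset.mem_univ _)
  simpa using h3

lemma eq_zero_of_sum_trace {y : Tup n r} (h : ∑ i, trace ((y i)ᴴ * y i) = 0) : y = 0 := by
  apply eq_zero_of_nsq_eq_zero
  rw [nsq, ← Complex.re_sum, h]; rfl

/-- Intertwiners between balanced tuples also intertwine the adjoint tuples. -/
lemma Bal.star_intertwine {y y' : Tup n r} (hy : Bal y) (hy' : Bal y')
    {g : Matrix (Fin n) (Fin n) ℂ} (h : ∀ i, g * y i = y' i * g) (i : Fin r) :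
    g * (y i)ᴴ = (y' i)ᴴ * g := by
  have key : (fun i => (y' i)ᴴ * g - g * (y i)ᴴ) = (0 : Tup n r) := by
    apply eq_zero_of_sum_trace
    have hs : ∀ i, (y i)ᴴ * gᴴ = gᴴ * (y' i)ᴴ := fun i => by
      rw [← conjTranspose_mul, h, conjTranspose_mul]
    have e : ∀ i, trace (((y' i)ᴴ * g - g * (y i)ᴴ)ᴴ * ((y' i)ᴴ * g - g * (y i)ᴴ)) =
        trace (g * gᴴ * (y' i * (y' i)ᴴ)) - trace (gᴴ * g * (y i * (y i)ᴴ))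
        - trace (gᴴ * g * (y i * (y i)ᴴ)) + trace (gᴴ * g * ((y i)ᴴ * y i)) := by
      intro i
      have e1 : ((y' i)ᴴ * g - g * (y i)ᴴ)ᴴ * ((y' i)ᴴ * g - g * (y i)ᴴ) =
          gᴴ * (y' i * (y' i)ᴴ) * g - gᴴ * (y' i * g) * (y i)ᴴ - y i * (gᴴ * (y' i)ᴴ) * g
          + y i * gᴴ * g * (y i)ᴴ := by
        simp only [conjTranspose_sub, conjTranspose_mul, conjTranspose_conjTranspose]
        noncomm_ring
      rw [e1, ← h i, ← hs i, trace_add, trace_sub, trace_sub]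
      have c1 : trace (gᴴ * (y' i * (y' i)ᴴ) * g) = trace (g * gᴴ * (y' i * (y' i)ᴴ)) := by
        rw [trace_mul_comm, mul_assoc g]
      have c2 : gᴴ * (g * y i) * (y i)ᴴ = gᴴ * g * (y i * (y i)ᴴ) := by noncomm_ring
      have c3 : trace (y i * ((y i)ᴴ * gᴴ) * g) = trace (gᴴ * g * (y i * (y i)ᴴ)) := by
        rw [trace_mul_comm (gᴴ * g)]; congr 1; noncomm_ring
      have c4 : trace (y i * gᴴ * g * (y i)ᴴ) = trace (gᴴ * g * ((y i)ᴴ * y i)) := by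
        rw [trace_mul_comm, trace_mul_comm (gᴴ * g)]; congr 1; noncomm_ring
      rw [c1, c2, c3, c4]
    have f : ∀ i, trace (g * gᴴ * ((y' i)ᴴ * y' i)) = trace (gᴴ * g * (y i * (y i)ᴴ)) := by
      intro i
      have : trace (g * gᴴ * ((y' i)ᴴ * y' i)) = trace ((gᴴ * (y' i)ᴴ) * (y' i * g)) := by
        rw [mul_assoc g, trace_mul_comm]; congr 1; noncomm_ring
      rw [this, ← h, ← hs, trace_mul_comm (gᴴ * g), trace_mul_comm (_ * _) (g * y i),
        trace_mul_comm (y i * _)]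
      rw [show g * y i * ((y i)ᴴ * gᴴ) = g * (y i * (y i)ᴴ * gᴴ) by noncomm_ring, trace_mul_comm]
      rw [trace_mul_comm (gᴴ * g)]; congr 1; noncomm_ring
    simp only [e, Finset.sum_add_distrib, Finset.sum_sub_distrib]
    simp only [← trace_sum, ← Finset.mul_sum] at f ⊢
    rw [hy', ← hy, Finset.mul_sum, trace_sum, Finset.sum_congr rfl fun i _ => f i]
    simp only [← trace_sum, ← Finset.mul_sum]
    ring
  have := congrFun key i
  simp only [Pi.zero_apply] at this
  exact (sub_eq_zero.1 this).symm

end RepQuot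

namespace RepQuot

open Matrix Topology unitInterval

attribute [local instance] Matrix.frobeniusNormedRing Matrix.frobeniusNormedAlgebra

variable {n r : ℕ}

/-- The infinitesimal intertwining operator `k ↦ (k yᵢ - y'ᵢ k)ᵢ`. -/
def amap (y y' : Tup n r) : Matrix (Fin n) (Fin n) ℂ →ₗ[ℂ] Tup n r where
  toFun k := fun i => k * y i - y' i * k
  map_add' k l := by funext i; simp only [Pi.add_apply]; noncomm_ring
  map_smul' c k := by funext i; simp [smul_sub]

/-- The adjoint of `amap y y'` for the Hilbert–Schmidt inner products. -/
def bmap (y y' : Tup n r) : Tup n r →ₗ[ℂ] Matrix (Fin n) (Fin n) ℂ where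
  toFun e := ∑ i, (e i * (y i)ᴴ - (y' i)ᴴ * e i)
  map_add' k l := by
    simp only [Pi.add_apply]; rw [← Finset.sum_add_distrib]
    exact Finset.sum_congr rfl fun i _ => by noncomm_ring
  map_smul' c k := by simp [smul_sub, Finset.smul_sum]

lemma amap_apply (y y' : Tup n r) (k i) : amap y y' k i = k * y i - y' i * k := rfl

lemma bmap_apply (y y' : Tup n r) (e) :
    bmap y y' e = ∑ i, (e i * (y i)ᴴ - (y' i)ᴴ * e i) := rfl

lemma trace_adj (y y' : Tup n r) (g) (e) :
    ∑ i, trace ((amap y y' g i)ᴴ * e i) = trace (gᴴ * bmap y y' e) := by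
  rw [bmap_apply, Finset.mul_sum, trace_sum]
  refine Finset.sum_congr rfl fun i _ => ?_
  rw [amap_apply, conjTranspose_sub, conjTranspose_mul, conjTranspose_mul, sub_mul, mul_sub,
    trace_sub, trace_sub]
  congr 1
  · rw [mul_assoc, trace_mul_comm, mul_assoc]
  · rw [mul_assoc]

lemma amap_eq_zero_of_bmap (y y' : Tup n r) {g} (h : bmap y y' (amap y y' g) = 0) :
    amap y y' g = 0 := by
  apply eq_zero_of_sum_trace
  rw [trace_adj, h, mul_zero, trace_zero]

lemma eq_zero_of_trace {g : Matrix (Fin n) (Fin n) ℂ} (h : trace (gᴴ * g) = 0) : g = 0 := by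
  have := eq_zero_of_sum_trace (y := fun _ : Fin 1 => g) (by simpa using h)
  exact congrFun this 0

lemma bmap_eq_zero_of_amap (y y' : Tup n r) {e} (h : amap y y' (bmap y y' e) = 0) :
    bmap y y' e = 0 := by
  apply eq_zero_of_trace
  rw [← trace_adj, h]; simp

/-- The linear slice at `y`: the kernel of the adjoint of the infinitesimal action. -/
def Nsp (y : Tup n r) : Submodule ℂ (Tup n r) := LinearMap.ker (bmap y y)

lemma mem_Nsp {y e : Tup n r} : e ∈ Nsp y ↔ ∑ i, (e i * (y i)ᴴ - (y i)ᴴ * e i) = 0 := Iff.rfl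

lemma amap_eq_zero {y y' : Tup n r} {g} : amap y y' g = 0 ↔ ∀ i, g * y i = y' i * g := by
  rw [funext_iff]
  exact forall_congr' fun i => by rw [amap_apply]; simp [sub_eq_zero]

lemma bmap_left {y y' : Tup n r} (hy : Bal y) (hy' : Bal y') {h} (hh : ∀ i, h * y i = y' i * h)
    {ν : Tup n r} (hν : ν ∈ Nsp y) : bmap y y' (fun i => h * ν i) = 0 := by
  rw [bmap_apply, ← mul_zero h, ← mem_Nsp.1 hν, Finset.mul_sum]
  refine Finset.sum_congr rfl fun i _ => ?_
  rw [← mul_assoc, ← hy.star_intertwine hy' hh i]; noncomm_ring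

lemma bmap_right {y y' : Tup n r} (hy : Bal y) (hy' : Bal y') {h} (hh : ∀ i, h * y i = y' i * h)
    {ν : Tup n r} (hν : ν ∈ Nsp y') : bmap y y' (fun i => ν i * h) = 0 := by
  rw [bmap_apply, ← zero_mul h, ← mem_Nsp.1 hν, Finset.sum_mul]
  refine Finset.sum_congr rfl fun i _ => ?_
  rw [mul_assoc, hy.star_intertwine hy' hh i]; noncomm_ring

/-- Intertwiners between points of small slices at balanced tuples intertwine the centres. -/
lemma intertwine {y y' : Tup n r} (hy : Bal y) (hy' : Bal y') :
    ∃ δ > (0 : ℝ), ∀ ν ∈ Nsp y, ∀ ν' ∈ Nsp y', ‖ν‖ < δ → ‖ν'‖ < δ →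
      ∀ g, (∀ i, g * (y i + ν i) = (y' i + ν' i) * g) → ∀ i, g * y i = y' i * g := by
  obtain ⟨m, hm⟩ := (LinearMap.ker (amap y y')).exists_isCompl
  let D : m →ₗ[ℂ] Matrix (Fin n) (Fin n) ℂ := (bmap y y' ∘ₗ amap y y').domRestrict m
  have hD : LinearMap.ker D = ⊥ := by
    rw [LinearMap.ker_eq_bot']
    intro k hk
    have h1 : (k : Matrix (Fin n) (Fin n) ℂ) ∈ LinearMap.ker (amap y y') :=
      amap_eq_zero_of_bmap y y' hk
    exact Subtype.ext (Submodule.disjoint_def.1 hm.disjoint _ h1 k.2)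
  obtain ⟨K, K0, hK⟩ := D.exists_antilipschitzWith hD
  have hK' : ∀ k ∈ m, ‖k‖ ≤ K * ‖bmap y y' (amap y y' k)‖ := fun k hk =>
    ZeroHomClass.bound_of_antilipschitz D hK ⟨k, hk⟩
  obtain ⟨B, hB0, hB'⟩ : ∃ B : ℝ, 0 ≤ B ∧ ∀ e, ‖bmap y y' e‖ ≤ B * ‖e‖ := by
    refine ⟨∑ i, (‖(y i)ᴴ‖ + ‖(y' i)ᴴ‖), by positivity, fun e => ?_⟩
    rw [bmap_apply, Finset.sum_mul]
    refine (norm_sum_le _ _).trans (Finset.sum_le_sum fun i _ => ?_)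
    calc _ ≤ ‖e i‖ * ‖(y i)ᴴ‖ + ‖(y' i)ᴴ‖ * ‖e i‖ :=
          (norm_sub_le _ _).trans (add_le_add (norm_mul_le _ _) (norm_mul_le _ _))
      _ ≤ ‖e‖ * ‖(y i)ᴴ‖ + ‖(y' i)ᴴ‖ * ‖e‖ := by gcongr <;> exact norm_le_pi_norm e i
      _ = _ := by ring
  have hK0 : (0 : ℝ) < K := K0
  refine ⟨1 / (2 * (K * B + 1)), by positivity, fun ν hν ν' hν' nν nν' g hg => ?_⟩
  obtain ⟨h, hh, k, hk, rfl⟩ := Submodule.mem_sup.1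
    (hm.sup_eq_top ▸ Submodule.mem_top : g ∈ LinearMap.ker (amap y y') ⊔ m)
  have hh' := amap_eq_zero.1 hh
  have e1 : amap y y' k = (fun i => ν' i * h) - (fun i => h * ν i)
      + (fun i => ν' i * k - k * ν i) := by
    funext i
    have := hg i
    simp only [Pi.add_apply, Pi.sub_apply, amap_apply]
    have h3 : (h + k) * (y i + ν i) = h * y i + h * ν i + k * y i + k * ν i := by noncomm_ring
    have h4 : (y' i + ν' i) * (h + k) = y' i * h + ν' i * h + y' i * k + ν' i * k := by
      noncomm_ring
    rw [h3, h4, hh' i] at this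
    have h5 : k * y i = (y' i * h + h * ν i + k * y i + k * ν i) - y' i * h - h * ν i - k * ν i := by
      abel
    rw [h5, this]; abel
  have e2 : bmap y y' (amap y y' k) = bmap y y' (fun i => ν' i * k - k * ν i) := by
    rw [e1, map_add, map_sub, bmap_left hy hy' hh' hν, bmap_right hy hy' hh' hν']; simp
  have e3 : ‖(fun i => ν' i * k - k * ν i : Tup n r)‖ ≤ (1 / (K * B + 1)) * ‖k‖ := by
    refine (pi_norm_le_iff_of_nonneg (by positivity)).2 fun i => ?_
    calc ‖ν' i * k - k * ν i‖ ≤ ‖ν' i‖ * ‖k‖ + ‖k‖ * ‖ν i‖ :=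
          (norm_sub_le _ _).trans (add_le_add (norm_mul_le _ _) (norm_mul_le _ _))
      _ ≤ (1 / (2 * (K * B + 1))) * ‖k‖ + ‖k‖ * (1 / (2 * (K * B + 1))) := by
          gcongr
          · exact (norm_le_pi_norm ν' i).trans nν'.le
          · exact (norm_le_pi_norm ν i).trans nν.le
      _ = _ := by field_simp; ring
  have e4 : ‖k‖ ≤ K * (B * ((1 / (K * B + 1)) * ‖k‖)) := by
    refine (hK' k hk).trans ?_
    gcongr
    rw [e2]
    exact (hB' _).trans (by gcongr)
  have e5 : ‖k‖ = 0 := by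
    have : K * (B * ((1 / (K * B + 1)) * ‖k‖)) = ‖k‖ - ‖k‖ / (K * B + 1) := by
      field_simp; ring
    rw [this] at e4
    have h6 : ‖k‖ / (K * B + 1) ≤ 0 := by linarith
    by_contra hne
    have : 0 < ‖k‖ / (K * B + 1) := by
      have := lt_of_le_of_ne (norm_nonneg k) (Ne.symm hne)
      positivity
    linarith
  rw [norm_eq_zero] at e5
  simpa [e5] using hh'

end RepQuot

/-! ### Local sections of the conjugation action -/

namespace RepQuot

open Matrix Topology unitInterval

/-- If `N` is a complement of the tangent space at `y` of the simultaneous conjugation orbit, then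
the tuples near `y` are conjugate, by continuously varying units, to points of `y + N`. -/
lemma exists_local_section {R : Type*} [NormedRing R] [NormedAlgebra ℂ R] [FiniteDimensional ℂ R]
    {r : ℕ} (y : Fin r → R) (N : Submodule ℂ (Fin r → R)) (a : R →ₗ[ℂ] (Fin r → R))
    (ha : ∀ k i, a k i = k * y i - y i * k) (hN : IsCompl (LinearMap.range a) N) :
    ∃ δ₀ > (0 : ℝ), ∀ δ, 0 < δ → δ ≤ δ₀ → ∃ (O : Set (Fin r → R)) (c : (Fin r → R) → R),
      IsOpen O ∧ ContinuousOn c O ∧ (∀ ν ∈ N, ‖ν‖ < δ → y + ν ∈ O) ∧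
      ∀ e ∈ O, IsUnit (c e) ∧ ∃ ν ∈ N, ‖ν‖ < δ ∧ ∀ i, e i * c e = c e * (y i + ν i) := by
  have : CompleteSpace R := FiniteDimensional.complete ℂ R
  obtain ⟨m, hm⟩ := (LinearMap.ker a).exists_isCompl
  let L : (m × N) →ₗ[ℂ] (Fin r → R) :=
    (a ∘ₗ m.subtype) ∘ₗ LinearMap.fst ℂ m N + N.subtype ∘ₗ LinearMap.snd ℂ m N
  have Lapp : ∀ p : m × N, L p = a p.1 + p.2 := fun p => rfl
  have Linj : Function.Injective L := by
    rw [← LinearMap.ker_eq_bot, LinearMap.ker_eq_bot']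
    rintro ⟨k, ν⟩ h
    rw [Lapp] at h
    simp only at h
    have h1 : a k ∈ N := by
      rw [eq_neg_of_add_eq_zero_left h]; exact N.neg_mem ν.2
    have h2 : a k = 0 := Submodule.disjoint_def.1 hN.disjoint _ ⟨k, rfl⟩ h1
    have h3 : (k : R) = 0 := Submodule.disjoint_def.1 hm.disjoint _ h2 k.2
    rw [h2, zero_add] at h
    exact Prod.ext (Subtype.ext h3) (Subtype.ext h)
  have Lsurj : Function.Surjective L := by
    intro e
    obtain ⟨_, ⟨g, rfl⟩, ν, hν, rfl⟩ := Submodule.mem_sup.1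
      (hN.sup_eq_top ▸ Submodule.mem_top : e ∈ LinearMap.range a ⊔ N)
    obtain ⟨h, hh, k, hk, rfl⟩ := Submodule.mem_sup.1
      (hm.sup_eq_top ▸ Submodule.mem_top : g ∈ LinearMap.ker a ⊔ m)
    refine ⟨(⟨k, hk⟩, ⟨ν, hν⟩), ?_⟩
    rw [Lapp, map_add, LinearMap.mem_ker.1 hh, zero_add]
  let L' : (m × N) ≃L[ℂ] (Fin r → R) :=
    (LinearEquiv.ofBijective L ⟨Linj, Lsurj⟩).toContinuousLinearEquiv
  have L'app : ∀ p : m × N, L' p = a p.1 + p.2 := fun p => rfl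
  let ψ : (m × N) → (Fin r → R) := fun p i =>
    (1 + (p.1 : R)) * (y i + (p.2 : Fin r → R) i) * Ring.inverse (1 + (p.1 : R))
  have hψ : HasStrictFDerivAt ψ (L' : (m × N) →L[ℂ] (Fin r → R)) 0 := by
    refine hasStrictFDerivAt_pi'.2 fun i => ?_
    have d1 : HasStrictFDerivAt (fun p : m × N => 1 + (p.1 : R))
        (m.subtypeL ∘L ContinuousLinearMap.fst ℂ m N) 0 :=
      ((m.subtypeL ∘L ContinuousLinearMap.fst ℂ m N).hasStrictFDerivAt).const_add 1
    have d2 : HasStrictFDerivAt (fun p : m × N => y i + (p.2 : Fin r → R) i)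
        (ContinuousLinearMap.proj (R := ℂ) (φ := fun _ : Fin r => R) i ∘L N.subtypeL ∘L
          ContinuousLinearMap.snd ℂ m N) 0 :=
      ((ContinuousLinearMap.proj (R := ℂ) (φ := fun _ : Fin r => R) i ∘L N.subtypeL ∘L
          ContinuousLinearMap.snd ℂ m N).hasStrictFDerivAt).const_add _
    have d3 : HasStrictFDerivAt (fun p : m × N => Ring.inverse (1 + (p.1 : R)))
        ((-ContinuousLinearMap.mulLeftRight ℂ R ↑(1 : Rˣ)⁻¹ ↑(1 : Rˣ)⁻¹) ∘L
          (m.subtypeL ∘L ContinuousLinearMap.fst ℂ m N)) 0 := by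
      refine HasStrictFDerivAt.comp (0 : m × N) ?_ d1
      have := hasStrictFDerivAt_ringInverse (𝕜 := ℂ) (1 : Rˣ)
      simpa using this
    refine ((d1.mul' d2).mul' d3).congr_fderiv ?_
    ext p
    · simp [L'app, ha, sub_eq_add_neg, add_comm]
    · simp [L'app]
  let P := hψ.toOpenPartialHomeomorph ψ
  have hP : ∀ p, P p = ψ p := fun p => rfl
  have h0 : P.source ∈ 𝓝 (0 : m × N) :=
    P.open_source.mem_nhds hψ.mem_toOpenPartialHomeomorph_source
  obtain ⟨ε, hε, hball⟩ := Metric.mem_nhds_iff.1 h0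
  set ε' := min ε 1
  have hε' : 0 < ε' := lt_min hε one_pos
  refine ⟨ε', hε', fun δ hδ hδ' => ?_⟩
  let W : Set (m × N) := Metric.ball 0 ε' ×ˢ Metric.ball 0 δ
  have hW : W ⊆ P.source := by
    rintro ⟨k, ν⟩ ⟨h1, h2⟩
    apply hball
    rw [Metric.mem_ball, Prod.dist_eq, max_lt_iff]
    exact ⟨lt_of_lt_of_le h1 (min_le_left _ _), lt_of_lt_of_le h2 (hδ'.trans (min_le_left _ _))⟩
  have hWo : IsOpen W := Metric.isOpen_ball.prod Metric.isOpen_ball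
  have hunit : ∀ k : m, k ∈ Metric.ball (0 : m) ε' → IsUnit (1 + (k : R)) := by
    intro k hk
    have : ‖-(k : R)‖ < 1 := by
      rw [norm_neg]
      have := lt_of_lt_of_le (Metric.mem_ball.1 hk) (min_le_right _ _)
      rwa [dist_zero_right] at this
    simpa using isUnit_one_sub_of_norm_lt_one this
  refine ⟨P '' W, fun e => 1 + ((P.symm e).1 : R), P.isOpen_image_of_subset_source hWo hW, ?_, ?_, ?_⟩
  · refine ContinuousOn.add continuousOn_const (continuous_subtype_val.comp_continuousOn
      (continuous_fst.comp_continuousOn (P.continuousOn_symm.mono ?_)))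
    rintro _ ⟨p, hp, rfl⟩
    exact P.map_source (hW hp)
  · intro ν hν hn
    refine ⟨(0, ⟨ν, hν⟩), ⟨Metric.mem_ball_self hε', by simpa using hn⟩, ?_⟩
    rw [hP]
    funext i
    simp [ψ]
  · rintro _ ⟨p, hp, rfl⟩
    beta_reduce
    rw [P.left_inv (hW hp)]
    have hu := hunit p.1 hp.1
    refine ⟨hu, p.2, p.2.2, by simpa using hp.2, fun i => ?_⟩
    rw [hP]
    simp only [ψ]
    rw [mul_assoc, Ring.inverse_mul_cancel _ hu, mul_one]

attribute [local instance] Matrix.frobeniusNormedRing Matrix.frobeniusNormedAlgebra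

variable {n r : ℕ}

lemma isCompl_range_Nsp (y : Tup n r) : IsCompl (LinearMap.range (amap y y)) (Nsp y) := by
  have hd : Disjoint (LinearMap.range (amap y y)) (Nsp y) := by
    rw [Submodule.disjoint_def]
    rintro _ ⟨k, rfl⟩ hk
    exact amap_eq_zero_of_bmap y y hk
  have hd' : Disjoint (LinearMap.range (bmap y y)) (LinearMap.ker (amap y y)) := by
    rw [Submodule.disjoint_def]
    rintro _ ⟨k, rfl⟩ hk
    exact bmap_eq_zero_of_amap y y hk
  refine Submodule.isCompl_iff_disjoint _ _ ?_ |>.2 hd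
  have h1 := LinearMap.finrank_range_add_finrank_ker (amap y y)
  have h2 := LinearMap.finrank_range_add_finrank_ker (bmap y y)
  have h3 := Submodule.finrank_add_finrank_le_of_disjoint hd'
  have : Module.finrank ℂ (Nsp y) = Module.finrank ℂ (LinearMap.ker (bmap y y)) := rfl
  omega

end RepQuot

/-! ### Representations, slices and separation of closed orbits -/

namespace RepQuot

open Matrix Topology unitInterval

attribute [local instance] Matrix.frobeniusNormedRing Matrix.frobeniusNormedAlgebra

variable {n r : ℕ}

/-- Tuples of invertible matrices, i.e. `Hom(F_r, GL_n(ℂ))`. -/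
abbrev Rep (n r : ℕ) : Type := Fin r → GLn n

/-- Simultaneous conjugation. -/
def act (g : GLn n) (A : Rep n r) : Rep n r := fun i => g * A i * g⁻¹

lemma act_one (A : Rep n r) : act 1 A = A := by funext i; simp [act]

lemma act_mul (g h : GLn n) (A : Rep n r) : act (g * h) A = act g (act h A) := by
  funext i; simp [act, mul_assoc]

lemma act_inv_act (g : GLn n) (A : Rep n r) : act g⁻¹ (act g A) = A := by
  rw [← act_mul, inv_mul_cancel, act_one]

lemma act_act_inv (g : GLn n) (A : Rep n r) : act g (act g⁻¹ A) = A := by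
  rw [← act_mul, mul_inv_cancel, act_one]

lemma act_inv_eq {g : GLn n} {A B : Rep n r} (h : act g A = B) : act g⁻¹ B = A := by
  rw [← h, act_inv_act]

lemma act_fix (g : GLn n) : act g (1 : Rep n r) = 1 := by
  funext i; simp [act]

lemma continuous_act : Continuous fun p : GLn n × Rep n r => act p.1 p.2 :=
  continuous_pi fun i => by
    have h : Continuous fun p : GLn n × Rep n r => p.2 i :=
      (continuous_apply i).comp continuous_snd
    exact (continuous_fst.mul h).mul continuous_fst.inv

lemma _root_.Continuous.act {X : Type*} [TopologicalSpace X] {f : X → GLn n} {g : X → Rep n r}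
    (hf : Continuous f) (hg : Continuous g) : Continuous fun x => act (f x) (g x) :=
  continuous_pi fun i => by
    have h : Continuous fun x => g x i := (continuous_apply i).comp hg
    exact (hf.mul h).mul hf.inv

lemma continuous_act_left (g : GLn n) : Continuous fun A : Rep n r => act g A :=
  continuous_pi fun i => by
    have h : Continuous fun A : Rep n r => A i := continuous_apply i
    exact (continuous_const.mul h).mul continuous_const

/-- The underlying tuple of matrices. -/
def toE (A : Rep n r) : Tup n r := fun i => (A i : Matrix (Fin n) (Fin n) ℂ)

/-- The invertible matrix underlying a matrix, with junk value `1` at singular matrices. -/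
noncomputable def toG (m : Matrix (Fin n) (Fin n) ℂ) : GLn n :=
  open Classical in if h : IsUnit m then h.unit else 1

lemma toG_val {m : Matrix (Fin n) (Fin n) ℂ} (h : IsUnit m) :
    (toG m : Matrix (Fin n) (Fin n) ℂ) = m := by
  rw [toG, dif_pos h]; rfl

lemma val_toG (g : GLn n) : toG (g : Matrix (Fin n) (Fin n) ℂ) = g :=
  Units.ext (toG_val g.isUnit)

lemma isOpenEmbedding_val :
    IsOpenEmbedding (Units.val : GLn n → Matrix (Fin n) (Fin n) ℂ) :=
  Units.isOpenEmbedding_val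

lemma isOpen_isUnit : IsOpen {m : Matrix (Fin n) (Fin n) ℂ | IsUnit m} := by
  have : {m : Matrix (Fin n) (Fin n) ℂ | IsUnit m} = Set.range (Units.val : GLn n → _) := by
    ext m; exact ⟨fun h => ⟨h.unit, rfl⟩, fun ⟨u, hu⟩ => hu ▸ u.isUnit⟩
  rw [this]; exact isOpenEmbedding_val.isOpen_range

lemma continuousOn_toG : ContinuousOn toG {m : Matrix (Fin n) (Fin n) ℂ | IsUnit m} := by
  rw [isOpenEmbedding_val.isInducing.continuousOn_iff]
  exact continuousOn_id.congr fun m hm => toG_val hm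

/-- The tuple of invertible matrices underlying a tuple of matrices (entrywise junk values). -/
noncomputable def toY (e : Tup n r) : Rep n r := fun i => toG (e i)

lemma toY_toE (A : Rep n r) : toY (toE A) = A := funext fun _ => val_toG _

lemma toE_toY {e : Tup n r} (h : ∀ i : Fin r, IsUnit (e i)) : toE (toY e) = e :=
  funext fun i => toG_val (h i)

lemma toE_inj {A B : Rep n r} (h : toE A = toE B) : A = B := by
  rw [← toY_toE A, h, toY_toE]

lemma isUnit_toE (A : Rep n r) (i : Fin r) :
    IsUnit (toE A i) := Units.isUnit (A i)

lemma continuous_toE : Continuous (toE : Rep n r → Tup n r) :=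
  continuous_pi fun i => Units.continuous_val.comp (continuous_apply i)

lemma continuousOn_toY : ContinuousOn (toY : Tup n r → Rep n r) {e | ∀ i, IsUnit (e i)} :=
  continuousOn_pi.2 fun i => continuousOn_toG.comp (continuous_apply i).continuousOn
    fun _ h => h i

lemma isOpen_units : IsOpen {e : Tup n r | ∀ i, IsUnit (e i)} := by
  simp only [Set.ofPred_forall]
  exact isOpen_iInter_of_finite fun i => by
    have h : Continuous fun e : Tup n r => e i := continuous_apply i
    exact isOpen_isUnit.preimage h

lemma isOpen_toE_image {V : Set (Rep n r)} (hV : IsOpen V) : IsOpen (toE '' V) := by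
  have := continuousOn_toY.isOpen_inter_preimage isOpen_units hV
  convert this using 1
  ext e
  constructor
  · rintro ⟨A, hA, rfl⟩
    exact ⟨isUnit_toE A, by rwa [Set.mem_preimage, toY_toE]⟩
  · rintro ⟨h1, h2⟩
    exact ⟨toY e, h2, toE_toY h1⟩

lemma toE_act (g : GLn n) (A : Rep n r) (i) :
    toE (act g A) i = g * toE A i * (g⁻¹ : GLn n) := rfl

lemma act_eq_iff {g : GLn n} {A B : Rep n r} :
    act g A = B ↔ ∀ i, (g : Matrix (Fin n) (Fin n) ℂ) * toE A i = toE B i * g := by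
  constructor
  · rintro rfl i
    rw [toE_act, mul_assoc, Units.inv_mul, mul_one]
  · intro h
    apply toE_inj
    funext i
    rw [toE_act, h, mul_assoc, Units.mul_inv, mul_one]

/-- A slice at `y` for the conjugation action, together with a contraction onto its centre: `S` is
preserved by the stabilizer of `y`, only elements of the stabilizer move a point of `S` into `S`, the
contraction `sc` commutes with the stabilizer, and points near `S` can be moved into `S` by a
continuously varying group element. -/
structure Slice (y : Rep n r) where
  /-- The underlying set. -/
  S : Set (Rep n r)
  mem : y ∈ S
  stab : ∀ h, act h y = y → ∀ s ∈ S, act h s ∈ S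
  rigid : ∀ g, ∀ s ∈ S, act g s ∈ S → act g y = y
  /-- The contraction. -/
  sc : I × Rep n r → Rep n r
  sc_cont : ContinuousOn sc (Set.univ ×ˢ S)
  sc_mem : ∀ t, ∀ s ∈ S, sc (t, s) ∈ S
  sc_zero : ∀ s ∈ S, sc (0, s) = s
  sc_one : ∀ s ∈ S, sc (1, s) = y
  sc_act : ∀ t h, act h y = y → ∀ s ∈ S, sc (t, act h s) = act h (sc (t, s))
  lift : ∀ s ∈ S, ∃ O, IsOpen O ∧ s ∈ O ∧ ∃ c : Rep n r → GLn n, ContinuousOn c O ∧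
    ∀ z ∈ O, act (c z)⁻¹ z ∈ S

/-- Balanced tuples have slices inside every invariant neighbourhood. -/
lemma exists_slice {y : Rep n r} (hy : Bal (toE y)) {V : Set (Rep n r)} (hV : IsOpen V)
    (hVi : ∀ g, ∀ z ∈ V, act g z ∈ V) (hyV : y ∈ V) : ∃ sl : Slice y, sl.S ⊆ V := by
  obtain ⟨δ₁, hδ₁, h1⟩ := intertwine hy hy
  obtain ⟨δ₂, hδ₂, h2⟩ := exists_local_section (toE y) (Nsp (toE y)) (amap (toE y) (toE y))
    (fun _ _ => rfl) (isCompl_range_Nsp _)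
  obtain ⟨δ₃, hδ₃, h3⟩ := Metric.isOpen_iff.1 (isOpen_toE_image hV) (toE y) ⟨y, hyV, rfl⟩
  obtain ⟨δ, hδ, d1, d2, d3⟩ : ∃ δ > 0, δ ≤ δ₁ ∧ δ ≤ δ₂ ∧ δ ≤ δ₃ :=
    ⟨min δ₁ (min δ₂ δ₃), lt_min hδ₁ (lt_min hδ₂ hδ₃), min_le_left _ _,
      (min_le_right _ _).trans (min_le_left _ _), (min_le_right _ _).trans (min_le_right _ _)⟩
  obtain ⟨O, c, hO, hc, hνO, hOc⟩ := h2 δ hδ d2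
  -- the points of the small affine slice are invertible and lie in `V`
  have hin : ∀ ν : Tup n r, ‖ν‖ < δ → ∃ z ∈ V, toE z = toE y + ν := by
    intro ν hν
    exact h3 (by rw [mem_ball_iff_norm]; simpa using hν.trans_le d3)
  let S0 : Set (Rep n r) := {s | toE s - toE y ∈ Nsp (toE y) ∧ ‖toE s - toE y‖ < δ}
  have hS0V : S0 ⊆ V := by
    rintro s ⟨_, hs⟩
    obtain ⟨z, hz, e⟩ := hin _ hs
    have : z = s := toE_inj (by rw [e]; abel)
    exact this ▸ hz
  let S : Set (Rep n r) := {z | ∃ h, act h y = y ∧ act h⁻¹ z ∈ S0}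
  have hS0 : S0 ⊆ S := fun s hs => ⟨1, act_one y, by rwa [inv_one, act_one]⟩
  let sc : I × Rep n r → Rep n r := fun p =>
    toY (toE y + ((1 - (p.1 : ℝ) : ℝ) : ℂ) • (toE p.2 - toE y))
  have hact : ∀ h : GLn n, act h y = y → ∀ t z, sc (t, act h z) = act h (sc (t, z)) := by
    intro h hh t z
    have e : ∀ i, (toE y + ((1 - (t : ℝ) : ℝ) : ℂ) • (toE (act h z) - toE y)) i
        = h * (toE y + ((1 - (t : ℝ) : ℝ) : ℂ) • (toE z - toE y)) i * (h⁻¹ : GLn n) := by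
      intro i
      have hh' : (h : Matrix (Fin n) (Fin n) ℂ) * toE y i * (h⁻¹ : GLn n) = toE y i := by
        rw [← toE_act, hh]
      simp only [Pi.add_apply, Pi.smul_apply, Pi.sub_apply, toE_act, mul_add, add_mul,
        smul_mul_assoc, mul_smul_comm, mul_sub, sub_mul, hh']
    funext i
    simp only [sc, toY, act]
    rw [e]
    generalize (toE y + ((1 - (t : ℝ) : ℝ) : ℂ) • (toE z - toE y)) i = m
    by_cases hm : IsUnit m
    · apply Units.ext
      rw [toG_val ((h.isUnit.mul hm).mul (h⁻¹).isUnit), Units.val_mul, Units.val_mul, toG_val hm]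
    · rw [toG, toG, dif_neg hm, dif_neg]
      · simp
      · simpa using hm
  have hscE : ∀ t, ∀ s ∈ S0, toE (sc (t, s)) = toE y + ((1 - (t : ℝ) : ℝ) : ℂ) • (toE s - toE y)
      ∧ ‖((1 - (t : ℝ) : ℝ) : ℂ) • (toE s - toE y)‖ < δ := by
    intro t s hs
    have hn : ‖((1 - (t : ℝ) : ℝ) : ℂ) • (toE s - toE y)‖ < δ := by
      refine lt_of_le_of_lt ?_ hs.2
      rw [norm_smul, Complex.norm_real, Real.norm_eq_abs, abs_of_nonneg (by linarith [t.2.2])]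
      exact mul_le_of_le_one_left (norm_nonneg _) (by linarith [t.2.1])
    obtain ⟨z, _, hz⟩ := hin _ hn
    exact ⟨toE_toY fun i => hz ▸ isUnit_toE z i, hn⟩
  have hsc0 : ∀ t, ∀ s ∈ S0, sc (t, s) ∈ S0 := by
    intro t s hs
    obtain ⟨e, hn⟩ := hscE t s hs
    refine ⟨?_, ?_⟩
    · rw [e, add_sub_cancel_left]; exact (Nsp _).smul_mem _ hs.1
    · rwa [e, add_sub_cancel_left]
  have hscS : ∀ t h s, act h y = y → act h⁻¹ s ∈ S0 → sc (t, s) = act h (sc (t, act h⁻¹ s)) := by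
    intro t h s hh hs
    rw [← hact h hh, act_act_inv]
  refine ⟨⟨S, ?_, ?_, ?_, sc, ?_, ?_, ?_, ?_, fun t h hh s _ => hact h hh t s, ?_⟩, ?_⟩
  · refine hS0 ⟨?_, ?_⟩
    · rw [sub_self]; exact (Nsp _).zero_mem
    · rw [sub_self, norm_zero]; exact hδ
  · rintro h hh s ⟨k, hk, hs⟩
    refine ⟨h * k, by rw [act_mul, hk, hh], ?_⟩
    rwa [_root_.mul_inv_rev, act_mul, act_inv_act]
  · rintro g s ⟨h, hh, hs⟩ ⟨k, hk, hgs⟩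
    have hrig : act (k⁻¹ * g * h) y = y := by
      rw [act_eq_iff]
      refine h1 _ hs.1 _ hgs.1 (hs.2.trans_le d1) (hgs.2.trans_le d1) _ fun i => ?_
      have e : act (k⁻¹ * g * h) (act h⁻¹ s) = act k⁻¹ (act g s) := by
        rw [act_mul, act_act_inv, act_mul]
      have := act_eq_iff.1 e i
      simpa using this
    have hh' := act_inv_eq hh
    have : g = k * (k⁻¹ * g * h) * h⁻¹ := by group
    rw [this, act_mul, hh', act_mul, hrig, hk]
  · -- continuity of the contraction
    refine continuousOn_toY.comp (Continuous.continuousOn ?_) ?_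
    · exact continuous_const.add ((Complex.continuous_ofReal.comp (continuous_const.sub
        (continuous_subtype_val.comp continuous_fst))).smul
          ((continuous_toE.comp continuous_snd).sub continuous_const))
    · rintro ⟨t, s⟩ ⟨-, h, hh, hs⟩ i
      obtain ⟨e, hn⟩ := hscE t _ hs
      have e2 : toE y i + ((1 - (t : ℝ) : ℝ) : ℂ) • (toE (act h⁻¹ s) i - toE y i)
        = (h⁻¹ : GLn n) * (toE y i + ((1 - (t : ℝ) : ℝ) : ℂ) • (toE s i - toE y i)) * h := by
        have hh' : ((h⁻¹ : GLn n) : Matrix (Fin n) (Fin n) ℂ) * toE y i * h = toE y i := by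
          have := toE_act h⁻¹ y i
          rw [act_inv_eq hh, inv_inv] at this
          exact this.symm
        have := toE_act h⁻¹ s i
        rw [inv_inv] at this
        rw [this]
        simp only [mul_add, add_mul, smul_mul_assoc, mul_smul_comm, mul_sub, sub_mul, hh']
      have u : IsUnit (toE (sc (t, act h⁻¹ s)) i) := isUnit_toE _ i
      rw [e] at u
      simp only [Pi.add_apply, Pi.smul_apply, Pi.sub_apply] at u ⊢
      rw [e2] at u
      simpa using u
  · rintro t s ⟨h, hh, hs⟩
    refine ⟨h, hh, ?_⟩
    rw [hscS t h s hh hs, act_inv_act]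
    exact hsc0 t _ hs
  · rintro s -
    have : toE y + ((1 - ((0 : I) : ℝ) : ℝ) : ℂ) • (toE s - toE y) = toE s := by simp
    simp only [sc, this, toY_toE]
  · rintro s -
    have : toE y + ((1 - ((1 : I) : ℝ) : ℝ) : ℂ) • (toE s - toE y) = toE y := by simp
    simp only [sc, this, toY_toE]
  · rintro s ⟨h, hh, hs⟩
    refine ⟨(fun z => toE (act h⁻¹ z)) ⁻¹' O, hO.preimage (continuous_toE.comp
      (continuous_act.comp (continuous_const.prodMk continuous_id))), ?_,
      fun z => h * toG (c (toE (act h⁻¹ z))), ?_, ?_⟩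
    · have := hνO _ hs.1 hs.2
      rwa [add_sub_cancel] at this
    · refine continuousOn_const.mul (continuousOn_toG.comp (hc.comp (continuous_toE.comp
        (continuous_act.comp (continuous_const.prodMk continuous_id))).continuousOn
          fun _ h => h) fun z hz => ?_)
      exact (hOc _ hz).1
    · intro z hz
      obtain ⟨hu, ν, hν, hn, e⟩ := hOc _ hz
      obtain ⟨w, _, hw⟩ := hin ν hn
      have : act (toG (c (toE (act h⁻¹ z))))⁻¹ (act h⁻¹ z) = w := by
        refine act_inv_eq (act_eq_iff.2 fun i => ?_)
        rw [toG_val hu, hw, e]; rfl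
      rw [_root_.mul_inv_rev, act_mul, this]
      apply hS0
      refine ⟨?_, ?_⟩
      · rw [hw, add_sub_cancel_left]; exact hν
      · rw [hw, add_sub_cancel_left]; exact hn
  · rintro s ⟨h, hh, hs⟩
    have := hVi h _ (hS0V hs)
    rwa [act_act_inv] at this

lemma e_inv {g : GLn n} {m e f : Matrix (Fin n) (Fin n) ℂ} (h : (g : Matrix (Fin n) (Fin n) ℂ) = m)
    (he : e * m = m * f) : (g⁻¹ : GLn n) * e * ((g⁻¹)⁻¹ : GLn n) = f := by
  rw [inv_inv, mul_assoc, h, he, ← h, ← mul_assoc, Units.inv_mul, one_mul]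

/-- Balanced tuples in different orbits have disjoint invariant open neighbourhoods. -/
lemma separation {y y' : Rep n r} (hy : Bal (toE y)) (hy' : Bal (toE y'))
    (hne : ∀ g, act g y ≠ y') : ∃ W W' : Set (Rep n r), IsOpen W ∧ IsOpen W' ∧
      (∀ g, ∀ z ∈ W, act g z ∈ W) ∧ (∀ g, ∀ z ∈ W', act g z ∈ W') ∧ y ∈ W ∧ y' ∈ W' ∧
      Disjoint W W' := by
  obtain ⟨δ₁, hδ₁, h1⟩ := intertwine hy hy'
  -- the saturation of a small affine slice contains an invariant open neighbourhood
  have key : ∀ y : Rep n r, Bal (toE y) → ∃ W : Set (Rep n r), IsOpen W ∧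
      (∀ g, ∀ z ∈ W, act g z ∈ W) ∧ y ∈ W ∧
      ∀ z ∈ W, ∃ g, ∃ ν ∈ Nsp (toE y), ‖ν‖ < δ₁ ∧ toE (act g z) = toE y + ν := by
    intro y hy
    obtain ⟨δ₂, hδ₂, h2⟩ := exists_local_section (toE y) (Nsp (toE y)) (amap (toE y) (toE y))
      (fun _ _ => rfl) (isCompl_range_Nsp _)
    obtain ⟨O, c, hO, hc, hνO, hOc⟩ := h2 (min δ₁ δ₂) (lt_min hδ₁ hδ₂) (min_le_right _ _)
    refine ⟨⋃ g, {z | toE (act g z) ∈ O}, isOpen_iUnion fun g => hO.preimage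
      (continuous_toE.comp (continuous_act.comp (continuous_const.prodMk continuous_id))),
      ?_, ?_, ?_⟩
    · intro g z hz
      obtain ⟨k, hk⟩ := Set.mem_iUnion.1 hz
      refine Set.mem_iUnion.2 ⟨k * g⁻¹, ?_⟩
      rwa [Set.mem_ofPred_eq, act_mul, act_inv_act]
    · refine Set.mem_iUnion.2 ⟨1, ?_⟩
      have := hνO 0 (Nsp _).zero_mem (by rw [norm_zero]; exact lt_min hδ₁ hδ₂)
      rwa [Set.mem_ofPred_eq, act_one, ← add_zero (toE y)]
    · intro z hz
      obtain ⟨k, hk⟩ := Set.mem_iUnion.1 hz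
      obtain ⟨hu, ν, hν, hn, e⟩ := hOc _ hk
      refine ⟨(toG (c (toE (act k z))))⁻¹ * k, ν, hν, hn.trans_le (min_le_left _ _), ?_⟩
      funext i
      rw [act_mul, toE_act, e_inv (toG_val hu) (e i)]
      rfl
  obtain ⟨W, hWo, hWi, hyW, hW⟩ := key y hy
  obtain ⟨W', hWo', hWi', hyW', hW'⟩ := key y' hy'
  refine ⟨W, W', hWo, hWo', hWi, hWi', hyW, hyW', Set.disjoint_left.2 fun z hz hz' => ?_⟩
  obtain ⟨g, ν, hν, hn, e⟩ := hW z hz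
  obtain ⟨g', ν', hν', hn', e'⟩ := hW' z hz'
  refine hne (g' * g⁻¹) (act_eq_iff.2 (h1 ν hν ν' hν' hn hn' _ fun i => ?_))
  have : act (g' * g⁻¹) (act g z) = act g' z := by rw [act_mul, act_inv_act]
  have := act_eq_iff.1 this i
  rwa [e, e'] at this

end RepQuot

/-! ### Minimal vectors and the semisimplification map -/

namespace RepQuot

open Matrix Topology unitInterval

/-- First-order condition for a minimum along a one-parameter group of conjugations. -/
lemma deriv_exp_conj_eq_zero {R : Type*} [NormedRing R] [NormedAlgebra ℝ R] [CompleteSpace R]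
    {r : ℕ} (L : R → ℝ) (hadd : ∀ x y, L (x + y) = L x + L y)
    (hsmul : ∀ (t : ℝ) x, L (t • x) = t * L x) (hL : Continuous L) (X : R) (a b : Fin r → R)
    (h : ∀ t : ℝ, ∑ i, L (a i * b i) ≤
      ∑ i, L (NormedSpace.exp (t • (-X)) * a i * NormedSpace.exp (t • X) * b i)) :
    ∑ i, L (-X * a i * b i + a i * X * b i) = 0 := by
  let L' : R →L[ℝ] ℝ := ⟨⟨⟨L, hadd⟩, hsmul⟩, hL⟩
  have d : HasDerivAt (fun t : ℝ => ∑ i, L (NormedSpace.exp (t • (-X)) * a i *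
      NormedSpace.exp (t • X) * b i)) (∑ i, L (-X * a i * b i + a i * X * b i)) 0 := by
    refine HasDerivAt.fun_sum fun i _ => ?_
    have e1 := hasDerivAt_exp_smul_const (𝕂 := ℝ) (-X) (0 : ℝ)
    have e2 := hasDerivAt_exp_smul_const (𝕂 := ℝ) X (0 : ℝ)
    have e3 := ((e1.mul_const (a i)).mul e2).mul_const (b i)
    have e4 := L'.hasFDerivAt.comp_hasDerivAt (0 : ℝ) e3
    exact e4.congr_deriv (by simp [add_mul, L'])
  refine IsLocalMin.hasDerivAt_eq_zero (Filter.Eventually.of_forall fun t => ?_) d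
  have := h t
  simpa using this

attribute [local instance] Matrix.frobeniusNormedRing Matrix.frobeniusNormedAlgebra

variable {n r : ℕ}

/-- Tuples of minimal norm in their orbit are balanced. -/
lemma bal_of_min {y : Rep n r} (h : ∀ g, nsq (toE y) ≤ nsq (toE (act g y))) : Bal (toE y) := by
  set X : Matrix (Fin n) (Fin n) ℂ := ∑ i, (toE y i * (toE y i)ᴴ - (toE y i)ᴴ * toE y i) with hX
  have hXh : Xᴴ = X := by
    rw [hX, conjTranspose_sum]
    refine Finset.sum_congr rfl fun i _ => ?_
    simp
  have key := deriv_exp_conj_eq_zero (R := Matrix (Fin n) (Fin n) ℂ) (fun m => (trace m).re)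
    (fun x y => by simp) (fun t x => by simp) (Complex.continuous_re.comp continuous_id.matrix_trace)
    X (fun i => (toE y i)ᴴ) (fun i => toE y i) (by
    intro t
    have hu : IsUnit (NormedSpace.exp ((t / 2) • X)) := Matrix.isUnit_exp _
    set g := hu.unit with hg
    have gv : (g : Matrix (Fin n) (Fin n) ℂ) = NormedSpace.exp ((t / 2) • X) := rfl
    have gi : ((g⁻¹ : GLn n) : Matrix (Fin n) (Fin n) ℂ) = NormedSpace.exp ((t / 2) • (-X)) := by
      rw [smul_neg, Matrix.exp_neg, Matrix.coe_units_inv, gv]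
    have hs : ∀ Z : Matrix (Fin n) (Fin n) ℂ, Zᴴ = Z →
        (NormedSpace.exp ((t / 2) • Z))ᴴ = NormedSpace.exp ((t / 2) • Z) := by
      intro Z hZ
      rw [← Matrix.exp_conjTranspose, conjTranspose_smul, hZ, star_trivial]
    have hd : ∀ Z : Matrix (Fin n) (Fin n) ℂ, NormedSpace.exp ((t / 2) • Z) *
        NormedSpace.exp ((t / 2) • Z) = NormedSpace.exp (t • Z) := by
      intro Z
      rw [← Matrix.exp_add_of_commute _ _ (Commute.refl _), ← add_smul, add_halves]
    have := h g
    have e : ∀ i, (trace ((toE (act g y) i)ᴴ * toE (act g y) i)).re =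
        (trace (NormedSpace.exp (t • (-X)) * (toE y i)ᴴ * NormedSpace.exp (t • X) * toE y i)).re := by
      intro i
      rw [toE_act, conjTranspose_mul, conjTranspose_mul, gi, gv, hs X hXh,
        hs (-X) (by rw [conjTranspose_neg, hXh]), ← hd X, ← hd (-X)]
      congr 1
      generalize NormedSpace.exp ((t / 2) • X) = p
      generalize NormedSpace.exp ((t / 2) • (-X)) = q
      generalize toE y i = m
      rw [show q * q * mᴴ * (p * p) * m = q * (q * mᴴ * p * p * m) by noncomm_ring,
        trace_mul_comm q]
      congr 1; noncomm_ring
    exact this.trans_eq (Finset.sum_congr rfl fun i _ => e i))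
  have h2 : (trace (Xᴴ * X)).re = 0 := by
    rw [hXh, ← key]
    conv_lhs => arg 1; arg 1; arg 2; rw [hX]
    rw [Finset.mul_sum, trace_sum, Complex.re_sum]
    refine Finset.sum_congr rfl fun i _ => ?_
    have e1 : trace (X * (toE y i * (toE y i)ᴴ)) = trace ((toE y i)ᴴ * X * toE y i) := by
      rw [← mul_assoc, trace_mul_comm, mul_assoc]
    have e2 : -X * (toE y i)ᴴ * toE y i = -(X * ((toE y i)ᴴ * toE y i)) := by noncomm_ring
    rw [mul_sub, trace_sub, e1, trace_add, e2, trace_neg]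
    congr 1
    ring
  have h3 : X = 0 := by
    have := eq_zero_of_nsq_eq_zero (y := fun _ : Fin 1 => X) (by simpa [nsq] using h2)
    exact congrFun this 0
  rw [hX, Finset.sum_sub_distrib, sub_eq_zero] at h3
  exact h3

lemma continuous_nsq : Continuous (nsq : Tup n r → ℝ) := by
  unfold nsq
  fun_prop

lemma continuous_toE_apply (i : Fin r) : Continuous fun A : Rep n r => toE A i :=
  (continuous_apply i).comp continuous_toE

/-- Norm bounds together with lower bounds on determinants cut out compact sets. -/
lemma isCompact_bounded (c ε : ℝ) (hε : 0 < ε) :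
    IsCompact {A : Rep n r | nsq (toE A) ≤ c ∧ ∀ i, ε ≤ ‖(toE A i).det‖} := by
  have h1 : IsCompact {e : Tup n r | nsq e ≤ c ∧ ∀ i, ε ≤ ‖(e i).det‖} := by
    have hb' : IsCompact {e : Fin r → Fin n → Fin n → ℂ | ∀ i a b, ‖e i a b‖ ≤ √c} := by
      have : IsCompact (Set.univ.pi fun _ : Fin r => Set.univ.pi fun _ : Fin n => Set.univ.pi
          fun _ : Fin n => Metric.closedBall (0 : ℂ) (√c)) :=
        isCompact_univ_pi fun i => isCompact_univ_pi fun a => isCompact_univ_pi fun b =>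
          isCompact_closedBall _ _
      convert this using 1
      ext e
      simp [Set.mem_pi]
    have hb : IsCompact {e : Tup n r | ∀ i a b, ‖e i a b‖ ≤ √c} := hb'
    refine hb.of_isClosed_subset ?_ ?_
    · refine (isClosed_le continuous_nsq continuous_const).inter ?_
      change IsClosed {e : Tup n r | ∀ i, ε ≤ ‖(e i).det‖}
      simp only [Set.ofPred_forall]
      exact isClosed_iInter fun i => isClosed_le continuous_const
        ((continuous_apply i).matrix_det.norm)
    · rintro e ⟨he, -⟩ i a b
      apply Real.le_sqrt_of_sq_le
      refine le_trans ?_ he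
      rw [nsq_eq]
      calc ‖e i a b‖ ^ 2 ≤ ∑ b, ‖e i a b‖ ^ 2 :=
            Finset.single_le_sum (f := fun b => ‖e i a b‖ ^ 2) (fun _ _ => by positivity)
              (Finset.mem_univ b)
        _ ≤ ∑ a, ∑ b, ‖e i a b‖ ^ 2 :=
            Finset.single_le_sum (f := fun a => ∑ b, ‖e i a b‖ ^ 2) (fun _ _ => by positivity)
              (Finset.mem_univ a)
        _ ≤ _ :=
            Finset.single_le_sum (f := fun i => ∑ a, ∑ b, ‖e i a b‖ ^ 2)
              (fun _ _ => by positivity) (Finset.mem_univ i)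
  have hu : ∀ e ∈ {e : Tup n r | nsq e ≤ c ∧ ∀ i, ε ≤ ‖(e i).det‖}, ∀ i, IsUnit (e i) := by
    rintro e ⟨-, he⟩ i
    rw [Matrix.isUnit_iff_isUnit_det, isUnit_iff_ne_zero, ← norm_pos_iff]
    exact hε.trans_le (he i)
  convert h1.image_of_continuousOn (continuousOn_toY.mono hu) using 1
  ext A
  constructor
  · exact fun h => ⟨toE A, h, toY_toE A⟩
  · rintro ⟨e, he, rfl⟩
    rw [Set.mem_ofPred_eq, toE_toY (hu e he)]
    exact he

lemma det_toE_act (g : GLn n) (A : Rep n r) (i) : (toE (act g A) i).det = (toE A i).det := by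
  rw [toE_act, det_units_conj]

/-- The closure of the orbit of `z` contains a balanced tuple no longer than `z`, with the same
determinants: a point of minimal length. -/
lemma exists_bal (z : Rep n r) : ∃ y ∈ closure (Set.range fun g => act g z), Bal (toE y) ∧
    nsq (toE y) ≤ nsq (toE z) ∧ ∀ i, (toE y i).det = (toE z i).det := by
  have hz : z ∈ closure (Set.range fun g => act g z) :=
    subset_closure ⟨1, act_one z⟩
  have hdet : ∀ y ∈ closure (Set.range fun g => act g z), ∀ i, (toE y i).det = (toE z i).det := by
    intro y hy i
    have : IsClosed {y : Rep n r | (toE y i).det = (toE z i).det} :=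
      isClosed_eq (continuous_toE_apply i).matrix_det continuous_const
    refine closure_minimal ?_ this hy
    rintro _ ⟨g, rfl⟩
    exact det_toE_act g z i
  obtain ⟨ε, hε, hεz⟩ : ∃ ε > 0, ∀ i, ε ≤ ‖(toE z i).det‖ := by
    have h : ∀ i, 0 < ‖(toE z i).det‖ := fun i =>
      norm_pos_iff.2 ((Matrix.isUnit_iff_isUnit_det _).1 (isUnit_toE z i)).ne_zero
    rcases isEmpty_or_nonempty (Fin r) with hr | hr
    · exact ⟨1, one_pos, fun i => isEmptyElim i⟩
    · obtain ⟨i, hi⟩ := Finite.exists_min fun i => ‖(toE z i).det‖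
      exact ⟨_, h i, hi⟩
  have hc := (isCompact_bounded (n := n) (r := r) (nsq (toE z)) ε hε).inter_right
    (isClosed_closure (s := Set.range fun g => act g z))
  obtain ⟨y, ⟨⟨hy1, hy2⟩, hy3⟩, hmin⟩ := hc.exists_isMinOn ⟨z, ⟨le_rfl, hεz⟩, hz⟩
    (continuous_nsq.comp continuous_toE).continuousOn
  refine ⟨y, hy3, bal_of_min fun g => ?_, hy1, hdet y hy3⟩
  by_cases hg : nsq (toE (act g y)) ≤ nsq (toE z)
  · have hgy : act g y ∈ closure (Set.range fun g => act g z) := by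
      refine map_mem_closure (continuous_act_left g) hy3 ?_
      rintro _ ⟨k, rfl⟩
      exact ⟨g * k, act_mul g k z⟩
    exact hmin ⟨⟨hg, fun i => by rw [hdet _ hgy]; exact hεz i⟩, hgy⟩
  · exact hy1.trans (not_le.1 hg).le

/-- An invariant open set that meets an orbit closure contains the orbit. -/
lemma mem_of_mem_closure_orbit {z y : Rep n r} (h : y ∈ closure (Set.range fun g => act g z))
    {W : Set (Rep n r)} (hW : IsOpen W) (hWi : ∀ g, ∀ z ∈ W, act g z ∈ W) (hy : y ∈ W) : z ∈ W := by
  obtain ⟨_, hx, g, rfl⟩ := mem_closure_iff.1 h W hW hy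
  have := hWi g⁻¹ _ hx
  rwa [act_inv_act] at this

/-- An orbit closure contains at most one balanced orbit. -/
lemma exists_act_eq_of_closure {z y y' : Rep n r} (hy : Bal (toE y)) (hy' : Bal (toE y'))
    (h : y ∈ closure (Set.range fun g => act g z)) (h' : y' ∈ closure (Set.range fun g => act g z)) :
    ∃ g, act g y = y' := by
  by_contra! hne
  obtain ⟨W, W', hW, hW', hWi, hWi', hyW, hyW', hd⟩ := separation hy hy' hne
  exact Set.disjoint_left.1 hd (mem_of_mem_closure_orbit h hW hWi hyW)
    (mem_of_mem_closure_orbit h' hW' hWi' hyW')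

/-- The projection to the quotient. -/
def proj (A : Rep n r) : RepQuotGL n r := Quotient.mk _ A

lemma proj_eq {A B : Rep n r} : proj A = proj B ↔ ∃ g, act g A = B := by
  unfold proj
  rw [Quotient.eq, MulAction.orbitRel_apply]
  constructor
  · rintro ⟨g, hg⟩
    refine ⟨(ConjAct.ofConjAct g)⁻¹, act_inv_eq ?_⟩
    rw [← hg]
    funext i
    exact (ConjAct.smul_def g (B i)).symm
  · rintro ⟨g, hg⟩
    refine ⟨ConjAct.toConjAct g⁻¹, ?_⟩
    rw [← act_inv_eq hg]
    funext i
    exact ConjAct.smul_def _ _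

lemma proj_act (g : GLn n) (A : Rep n r) : proj (act g A) = proj A := (proj_eq.2 ⟨g, rfl⟩).symm

lemma proj_surj (q : RepQuotGL n r) : ∃ A, proj A = q := Quotient.exists_rep q

lemma isOpenQuotientMap_proj : IsOpenQuotientMap (proj : Rep n r → RepQuotGL n r) := by
  refine ⟨proj_surj, continuous_quotient_mk', fun V hV => ?_⟩
  have : proj ⁻¹' (proj '' V) = ⋃ g : GLn n, (fun A => act g A) ⁻¹' V := by
    ext A
    simp only [Set.mem_preimage, Set.mem_image, Set.mem_iUnion]
    constructor
    · rintro ⟨B, hB, e⟩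
      obtain ⟨g, hg⟩ := proj_eq.1 e.symm
      exact ⟨g, hg ▸ hB⟩
    · rintro ⟨g, hg⟩
      exact ⟨_, hg, proj_act g A⟩
  change IsOpen (proj ⁻¹' (proj '' V))
  rw [this]
  exact isOpen_iUnion fun g => hV.preimage (continuous_act_left g)

lemma continuous_proj : Continuous (proj : Rep n r → RepQuotGL n r) := isOpenQuotientMap_proj.continuous

lemma eq_one_of_proj {A : Rep n r} (h : proj A = proj 1) : A = 1 := by
  obtain ⟨g, hg⟩ := proj_eq.1 h.symm
  rw [← hg, act_fix]

/-- The semisimplification map: a continuous self-map of the quotient moving every point `q` to a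
specialization of it, the class of a balanced tuple (a closed orbit) in the closure of the orbit
`q`. -/
lemma exists_semisimplification : ∃ ss : C(RepQuotGL n r, RepQuotGL n r),
    (∀ q, q ⤳ ss q) ∧ (∀ q, ∃ y, Bal (toE y) ∧ ss q = proj y) ∧ ss (proj 1) = proj 1 := by
  choose s hs1 hs2 hs3 hs4 using exists_bal (n := n) (r := r)
  let out : RepQuotGL n r → Rep n r := fun q => (proj_surj q).choose
  have hout : ∀ q, proj (out q) = q := fun q => (proj_surj q).choose_spec
  have hss : ∀ z, proj (s (out (proj z))) = proj (s z) := by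
    intro z
    obtain ⟨g, hg⟩ := proj_eq.1 (hout (proj z))
    have : (Set.range fun k => act k z) = Set.range fun k => act k (out (proj z)) := by
      ext x
      constructor
      · rintro ⟨k, rfl⟩; exact ⟨k * g, by beta_reduce; rw [act_mul, hg]⟩
      · rintro ⟨k, rfl⟩; exact ⟨k * g⁻¹, by beta_reduce; rw [act_mul, act_inv_eq hg]⟩
    refine proj_eq.2 (exists_act_eq_of_closure (hs2 _) (hs2 _) (z := z) ?_ (hs1 z))
    rw [this]; exact hs1 _
  refine ⟨⟨fun q => proj (s (out q)), ?_⟩, ?_, fun q => ⟨_, hs2 _, rfl⟩, ?_⟩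
  · rw [isOpenQuotientMap_proj.isQuotientMap.continuous_iff]
    have : (fun q => proj (s (out q))) ∘ proj = fun z : Rep n r => proj (s z) := funext hss
    rw [this, continuous_iff_continuousAt]
    intro z
    rw [ContinuousAt, tendsto_nhds]
    intro V hV hzV
    obtain ⟨ε, hε, hεz⟩ : ∃ ε > 0, ∀ i, ε < ‖(toE z i).det‖ := by
      have h : ∀ i, 0 < ‖(toE z i).det‖ := fun i =>
        norm_pos_iff.2 ((Matrix.isUnit_iff_isUnit_det _).1 (isUnit_toE z i)).ne_zero
      rcases isEmpty_or_nonempty (Fin r) with hr | hr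
      · exact ⟨1, one_pos, fun i => isEmptyElim i⟩
      · obtain ⟨i, hi⟩ := Finite.exists_min fun i => ‖(toE z i).det‖
        exact ⟨_, half_pos (h i), fun j => (half_lt_self (h i)).trans_le (hi j)⟩
    have hbal : IsClosed {y : Rep n r | Bal (toE y)} := by
      refine isClosed_eq ?_ ?_ <;> refine continuous_finsetSum _ fun i _ => ?_
      · exact (continuous_toE_apply i).mul (continuous_toE_apply i).matrix_conjTranspose
      · exact (continuous_toE_apply i).matrix_conjTranspose.mul (continuous_toE_apply i)
    have hC := ((isCompact_bounded (n := n) (r := r) (nsq (toE z) + 1) ε hε).inter_right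
      hbal).inter_right (hV.preimage continuous_proj).isClosed_compl
    set C := {A : Rep n r | nsq (toE A) ≤ nsq (toE z) + 1 ∧ ∀ i, ε ≤ ‖(toE A i).det‖} ∩
      {y : Rep n r | Bal (toE y)} ∩ (proj ⁻¹' V)ᶜ
    obtain ⟨W, W', hW, hWi, hW', hWi', hzW, hCW', hd⟩ : ∃ W W' : Set (Rep n r), IsOpen W ∧
        (∀ g, ∀ z ∈ W, act g z ∈ W) ∧ IsOpen W' ∧ (∀ g, ∀ z ∈ W', act g z ∈ W') ∧ s z ∈ W ∧
        C ⊆ W' ∧ Disjoint W W' := by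
      refine hC.induction_on (p := fun C => ∃ W W' : Set (Rep n r), IsOpen W ∧
        (∀ g, ∀ z ∈ W, act g z ∈ W) ∧ IsOpen W' ∧ (∀ g, ∀ z ∈ W', act g z ∈ W') ∧ s z ∈ W ∧
        C ⊆ W' ∧ Disjoint W W') ?_ ?_ ?_ ?_
      · exact ⟨Set.univ, ∅, isOpen_univ, by simp, isOpen_empty, by simp, by simp, by simp, by simp⟩
      · rintro A B hAB ⟨W, W', h1, h2, h3, h4, h5, h6, h7⟩
        exact ⟨W, W', h1, h2, h3, h4, h5, hAB.trans h6, h7⟩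
      · rintro A B ⟨W, W', h1, h2, h3, h4, h5, h6, h7⟩ ⟨U, U', k1, k2, k3, k4, k5, k6, k7⟩
        refine ⟨W ∩ U, W' ∪ U', h1.inter k1, fun g z hz => ⟨h2 g z hz.1, k2 g z hz.2⟩, h3.union k3,
          fun g z hz => hz.imp (h4 g z) (k4 g z), ⟨h5, k5⟩, Set.union_subset_union h6 k6, ?_⟩
        rw [Set.disjoint_union_right]
        exact ⟨h7.mono_left Set.inter_subset_left, k7.mono_left Set.inter_subset_right⟩
      · intro y' hy'
        have hne : ∀ g, act g (s z) ≠ y' := by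
          rintro g rfl
          refine hy'.2 ?_
          rw [Set.mem_preimage, proj_act]; exact hzV
        obtain ⟨W, W', hW, hW', hWi, hWi', hyW, hyW', hd⟩ := separation (hs2 z) hy'.1.2 hne
        exact ⟨W', mem_nhdsWithin_of_mem_nhds (hW'.mem_nhds hyW'), W, W', hW, hWi, hW', hWi', hyW,
          subset_rfl, hd⟩
    have n1 : {w : Rep n r | nsq (toE w) < nsq (toE z) + 1} ∈ 𝓝 z :=
      (isOpen_lt (continuous_nsq.comp continuous_toE) continuous_const).mem_nhds (by
        rw [Set.mem_ofPred_eq]; exact lt_add_one _)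
    have n2 : {w : Rep n r | ∀ i, ε < ‖(toE w i).det‖} ∈ 𝓝 z := by
      have : IsOpen {w : Rep n r | ∀ i, ε < ‖(toE w i).det‖} := by
        simp only [Set.ofPred_forall]
        exact isOpen_iInter_of_finite fun i => isOpen_lt continuous_const
          (continuous_toE_apply i).matrix_det.norm
      exact this.mem_nhds hεz
    have n3 : W ∈ 𝓝 z := hW.mem_nhds (mem_of_mem_closure_orbit (hs1 z) hW hWi hzW)
    filter_upwards [n1, n2, n3] with w hw1 hw2 hw3
    by_contra hwV
    have hsC : s w ∈ C := ⟨⟨⟨(hs3 w).trans hw1.le, fun i => by rw [hs4]; exact (hw2 i).le⟩, hs2 w⟩,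
      hwV⟩
    exact Set.disjoint_left.1 hd hw3 (mem_of_mem_closure_orbit (hs1 w) hW' hWi' (hCW' hsC))
  · intro q
    rw [specializes_iff_forall_open]
    intro V hV hq
    have := mem_of_mem_closure_orbit (hs1 (out q)) (hV.preimage continuous_proj)
      (fun g z hz => by rw [Set.mem_preimage, proj_act]; exact hz) hq
    rwa [Set.mem_preimage, hout] at this
  · have h1 : out (proj 1 : RepQuotGL n r) = 1 := eq_one_of_proj (hout _)
    have h2 := hs1 (1 : Rep n r)
    simp only [act_fix, Set.range_const, closure_singleton, Set.mem_singleton_iff] at h2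
    simp [h1, h2]

end RepQuot

/-! ### Good neighbourhoods -/

namespace RepQuot

open Matrix Topology unitInterval

/-- Path homotopy only depends on the underlying functions. -/
lemma homotopic_congr {X : Type*} [TopologicalSpace X] {a b a' b' : X} {p p' : Path a b}
    {q q' : Path a' b'} (h : p.Homotopic p') (e : ∀ t, q t = p t) (e' : ∀ t, q' t = p' t) :
    q.Homotopic q' := by
  obtain rfl : a' = a := by rw [← q.source, e, p.source]
  obtain rfl : b' = b := by rw [← q.target, e, p.target]
  rwa [show q = p from Path.ext (funext e), show q' = p' from Path.ext (funext e')]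

/-- An open set over which a quotient map `p : Y → Y / G` behaves, up to homotopy, like a fibration
with fibres the orbits of `G`: it is contractible, its preimage is path connected, and every loop in
the preimage is homotopic to an orbit loop `t ↦ k t • a`. -/
structure Good {G Y Q : Type*} [TopologicalSpace G] [TopologicalSpace Y] [TopologicalSpace Q]
    [One G] (p : Y → Q) (act : G → Y → Y) (U : Set Q) : Prop where
  isOpen : IsOpen U
  conn : PathConnectedSpace (p ⁻¹' U)
  contr : ContractibleSpace U
  vert : ∀ (a : p ⁻¹' U) (l : Path a a), ∃ k : Path (1 : G) 1, ∃ m : Path a a,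
    (∀ t, (m t : Y) = act (k t) a) ∧ l.Homotopic m

/-- A point with arbitrarily small good neighbourhoods. -/
def Poly {G Y Q : Type*} [TopologicalSpace G] [TopologicalSpace Y] [TopologicalSpace Q]
    [One G] (p : Y → Q) (act : G → Y → Y) (q : Q) : Prop :=
  ∀ W, IsOpen W → q ∈ W → ∃ U, Good p act U ∧ q ∈ U ∧ U ⊆ W

section
attribute [local instance] Matrix.frobeniusNormedRing Matrix.frobeniusNormedAlgebra

variable {n r : ℕ}

/-- Stabilizers are path connected, since they are complements of hypersurfaces in complex linear
spaces. -/
lemma stab_path (y : Rep n r) {h : GLn n} (hh : act h y = y) :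
    ∃ γ : Path (1 : GLn n) h, ∀ t, act (γ t) y = y := by
  let L : ℂ → Matrix (Fin n) (Fin n) ℂ := fun z => 1 - z • (1 - (h : Matrix (Fin n) (Fin n) ℂ))
  have hL : Continuous L := continuous_const.sub (continuous_id.smul continuous_const)
  let P := (1 - (h : Matrix (Fin n) (Fin n) ℂ)).charpolyRev
  have hP : ∀ z, P.eval z = (L z).det := by
    intro z
    simp only [P, Matrix.charpolyRev]
    rw [← Polynomial.coe_evalRingHom, RingHom.map_det]
    congr 1
    ext i j
    simp [L, Matrix.one_apply, apply_ite]
  have hP0 : P ≠ 0 := by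
    intro h0
    have : P.eval 0 = 1 := Matrix.eval_charpolyRev
    rw [h0, Polynomial.eval_zero] at this
    exact zero_ne_one this
  have hc : IsPathConnected ({z | P.IsRoot z}ᶜ : Set ℂ) :=
    (Polynomial.finite_setOfPred_isRoot hP0).countable.isPathConnected_compl_of_one_lt_rank
      (by rw [Complex.rank_real_complex]; exact Cardinal.one_lt_two)
  have h0 : (0 : ℂ) ∈ ({z | P.IsRoot z}ᶜ : Set ℂ) := by
    simp [Polynomial.IsRoot, hP, L]
  have h1 : (1 : ℂ) ∈ ({z | P.IsRoot z}ᶜ : Set ℂ) := by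
    have : IsUnit (h : Matrix (Fin n) (Fin n) ℂ).det := (Matrix.isUnit_iff_isUnit_det _).1 h.isUnit
    simpa [Polynomial.IsRoot, hP, L] using this
  obtain ⟨γ, hγ⟩ := hc.joinedIn 0 h0 1 h1
  have hu : ∀ t, IsUnit (L (γ t)) := by
    intro t
    have := hγ t
    rw [Set.mem_compl_iff, Set.mem_ofPred_eq, Polynomial.IsRoot, hP] at this
    exact (Matrix.isUnit_iff_isUnit_det _).2 (isUnit_iff_ne_zero.2 this)
  refine ⟨⟨⟨fun t => toG (L (γ t)), ?_⟩, ?_, ?_⟩, ?_⟩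
  · exact continuousOn_toG.comp_continuous (hL.comp γ.continuous) hu
  · change toG (L (γ 0)) = 1
    rw [γ.source]
    exact Units.ext ((toG_val (by simp [L])).trans (by simp [L]))
  · change toG (L (γ 1)) = h
    rw [γ.target]
    exact Units.ext ((toG_val (by simp [L])).trans (by simp [L]))
  · intro t
    change act (toG (L (γ t))) y = y
    rw [act_eq_iff]
    intro i
    rw [toG_val (hu t)]
    have := act_eq_iff.1 hh i
    simp only [L, sub_mul, mul_sub, smul_mul_assoc, mul_smul_comm, this, one_mul, mul_one]

end

variable {n r : ℕ}

lemma gl_path (h : GLn n) : Nonempty (Path (1 : GLn n) h) :=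
  ⟨(stab_path (1 : Rep n 1) (act_fix h)).choose⟩

namespace Slice

variable {y : Rep n r} (sl : Slice y)

/-- The saturation of the slice. -/
def T : Set (Rep n r) := {z | ∃ g, act g z ∈ sl.S}

lemma preimage_image : proj ⁻¹' (proj '' sl.S) = sl.T := by
  ext z
  constructor
  · rintro ⟨s, hs, e⟩
    obtain ⟨g, hg⟩ := proj_eq.1 e
    exact ⟨g⁻¹, by rwa [act_inv_eq hg]⟩
  · rintro ⟨g, hg⟩
    exact ⟨_, hg, proj_act _ _⟩

lemma lift_T : ∀ z ∈ sl.T, ∃ O, IsOpen O ∧ z ∈ O ∧ ∃ c : Rep n r → GLn n, ContinuousOn c O ∧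
    ∀ w ∈ O, act (c w)⁻¹ w ∈ sl.S := by
  rintro z ⟨g, hg⟩
  obtain ⟨O, hO, hs, c, hc, h⟩ := sl.lift _ hg
  refine ⟨(fun w => act g w) ⁻¹' O, hO.preimage (continuous_act_left g), hs,
    fun w => g⁻¹ * c (act g w), ?_, ?_⟩
  · exact continuousOn_const.mul (hc.comp (continuous_act_left g).continuousOn fun _ h => h)
  · intro w hw
    have := h _ hw
    rwa [_root_.mul_inv_rev, inv_inv, act_mul]

lemma isOpen_T : IsOpen sl.T := by
  rw [isOpen_iff_forall_mem_open]
  intro z hz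
  obtain ⟨O, hO, hzO, c, -, h⟩ := sl.lift_T z hz
  exact ⟨O, fun w hw => ⟨_, h w hw⟩, hO, hzO⟩

/-- A path in the saturation of the slice factors through the slice. -/
lemma factor (l : C(I, Rep n r)) (hl : ∀ t, l t ∈ sl.T) :
    ∃ g : C(I, GLn n), ∀ t, act (g t)⁻¹ (l t) ∈ sl.S := by
  choose O hO hmem c hc hcS using fun t => sl.lift_T (l t) (hl t)
  obtain ⟨t, ht0, htm, ⟨N, hN⟩, hts⟩ := exists_monotone_Icc_subset_open_cover_unitInterval
    (c := fun s => l ⁻¹' O s) (fun s => (hO s).preimage l.continuous)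
    (fun s _ => Set.mem_iUnion.2 ⟨s, hmem s⟩)
  have key : ∀ k, ∃ g : I → GLn n, ContinuousOn g (Set.Icc 0 (t k)) ∧
      ∀ x ∈ Set.Icc 0 (t k), act (g x)⁻¹ (l x) ∈ sl.S := by
    intro k
    induction k with
    | zero =>
      refine ⟨fun _ => c 0 (l 0), continuousOn_const, fun x hx => ?_⟩
      rw [ht0, Set.Icc_self, Set.mem_singleton_iff] at hx
      rw [hx]
      exact hcS 0 _ (hmem 0)
    | succ k ih =>
      obtain ⟨g, hg, hgS⟩ := ih
      obtain ⟨s, hs⟩ := hts k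
      have hk0 : (0 : I) ≤ t k := ht0 ▸ htm (Nat.zero_le k)
      have hk1 : t k ≤ t (k + 1) := htm (Nat.le_succ k)
      let h : GLn n := (c s (l (t k)))⁻¹ * g (t k)
      have hh : act h y = y := by
        refine sl.rigid _ _ (hgS (t k) ⟨hk0, le_rfl⟩) ?_
        rw [← act_mul]
        have := hcS s _ (hs ⟨le_rfl, hk1⟩)
        simpa [h, mul_assoc] using this
      refine ⟨fun x => if x ≤ t k then g x else c s (l x) * h, ?_, ?_⟩
      · rw [← Set.Icc_union_Icc_eq_Icc hk0 hk1]
        refine ContinuousOn.union_of_isClosed ?_ ?_ isClosed_Icc isClosed_Icc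
        · exact hg.congr fun x hx => if_pos hx.2
        · have : ContinuousOn (fun x => c s (l x) * h) (Set.Icc (t k) (t (k + 1))) :=
            ((hc s).comp l.continuous.continuousOn hs).mul continuousOn_const
          refine this.congr fun x hx => ?_
          rcases hx.1.eq_or_lt with e | e
          · simp [← e, h]
          · exact if_neg e.not_ge
      · intro x hx
        by_cases hxk : x ≤ t k
        · simp only [if_pos hxk]; exact hgS x ⟨hx.1, hxk⟩
        · simp only [if_neg hxk]
          rw [_root_.mul_inv_rev, act_mul]
          exact sl.stab _ (act_inv_eq hh) _ (hcS s _ (hs ⟨(not_le.1 hxk).le, hx.2⟩))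
  obtain ⟨g, hg, hgS⟩ := key N
  rw [hN N le_rfl] at hg hgS
  have hI : ∀ x : I, x ∈ Set.Icc (0 : I) 1 := fun x => ⟨x.2.1, x.2.2⟩
  exact ⟨⟨g, continuousOn_univ.1 (hg.mono fun x _ => hI x)⟩, fun x => hgS x (hI x)⟩

/-- The slice is contractible. -/
lemma contractible : ContractibleSpace sl.S := by
  rw [contractible_iff_id_nullhomotopic]
  refine ⟨⟨y, sl.mem⟩, ⟨⟨⟨fun q => ⟨sl.sc (q.1, q.2), sl.sc_mem _ _ q.2.2⟩, ?_⟩, ?_, ?_⟩⟩⟩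
  · exact (sl.sc_cont.comp_continuous (f := fun q : I × sl.S => (q.1, (q.2 : Rep n r)))
      (by fun_prop) fun q => ⟨trivial, q.2.2⟩).subtype_mk _
  · intro s; exact Subtype.ext (sl.sc_zero _ s.2)
  · intro s; exact Subtype.ext (sl.sc_one _ s.2)

lemma y_mem_T : y ∈ sl.T := ⟨1, by rw [act_one]; exact sl.mem⟩

lemma act_mem_T (g : GLn n) {z : Rep n r} (hz : z ∈ sl.T) : act g z ∈ sl.T := by
  obtain ⟨k, hk⟩ := hz
  exact ⟨k * g⁻¹, by rwa [act_mul, act_inv_act]⟩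

lemma subset_T {z : Rep n r} (hz : z ∈ sl.S) : z ∈ sl.T := ⟨1, by rwa [act_one]⟩

/-- The saturation of the slice is path connected. -/
lemma pathConnected : IsPathConnected sl.T := by
  refine ⟨y, sl.y_mem_T, fun {z} hz => JoinedIn.symm ?_⟩
  obtain ⟨g, hg⟩ := id hz
  obtain ⟨γ⟩ := gl_path g
  have h1 : JoinedIn sl.T z (act g z) := by
    refine ⟨⟨⟨fun t => act (γ t) z, γ.continuous.act continuous_const⟩,
      (congrArg (act · z) γ.source).trans (act_one z), congrArg (act · z) γ.target⟩,
      fun t => sl.act_mem_T _ hz⟩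
  have h2 : JoinedIn sl.T (act g z) y := by
    refine ⟨⟨⟨fun t => sl.sc (t, act g z), ?_⟩, sl.sc_zero _ hg, sl.sc_one _ hg⟩,
      fun t => sl.subset_T (sl.sc_mem _ _ hg)⟩
    exact sl.sc_cont.comp_continuous (by fun_prop) fun t => ⟨trivial, hg⟩
  exact h1.trans h2

/-- Every loop in the saturation of the slice is homotopic to an orbit loop: factor it as `g • s`
with `g` a path in the group and `s` a path in the slice, close both factors up inside the
stabilizer of `y`, and contract `s`. -/
lemma vert (a : sl.T) (l : Path a a) : ∃ k : Path (1 : GLn n) 1, ∃ m : Path a a,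
    (∀ t, (m t : Rep n r) = act (k t) a) ∧ l.Homotopic m := by
  obtain ⟨g, hg⟩ := sl.factor ⟨fun t => (l t : Rep n r), by fun_prop⟩ fun t => (l t).2
  change ∀ t, act (g t)⁻¹ (l t : Rep n r) ∈ sl.S at hg
  let s : I → sl.S := fun t => ⟨act (g t)⁻¹ (l t : Rep n r), hg t⟩
  have hs : Continuous s :=
    (g.continuous.inv.act (by fun_prop)).subtype_mk _
  have e1 : act ((g 1)⁻¹ * g 0) (s 0 : Rep n r) = (s 1 : Rep n r) := by
    simp only [s, Path.source, Path.target]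
    rw [act_mul, act_act_inv]
  have hh : act ((g 1)⁻¹ * g 0) y = y := sl.rigid _ _ (s 0).2 (by rw [e1]; exact (s 1).2)
  obtain ⟨κ, hκ⟩ := stab_path y hh
  let m : GLn n × sl.S → sl.T := fun q => ⟨act q.1 q.2, sl.act_mem_T _ (sl.subset_T q.2.2)⟩
  have hm : Continuous m :=
    (continuous_fst.act (by fun_prop)).subtype_mk _
  have hκS : ∀ t, act (κ t)⁻¹ (s 1 : Rep n r) ∈ sl.S :=
    fun t => sl.stab _ (act_inv_eq (hκ t)) _ (s 1).2
  let γ₁ : Path (g 0) (g 1) := ⟨g, rfl, rfl⟩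
  let γ₂ : Path (g 1) (g 0) := ⟨⟨fun t => g 1 * κ t, by fun_prop⟩, by simp, by simp⟩
  let s₁ : Path (s 0) (s 1) := ⟨⟨s, hs⟩, rfl, rfl⟩
  let s₂ : Path (s 1) (s 0) := ⟨⟨fun t => ⟨act (κ t)⁻¹ (s 1 : Rep n r), hκS t⟩,
      (κ.continuous.inv.act continuous_const).subtype_mk _⟩,
    Subtype.ext (by simp [act_one]), Subtype.ext (by
      change act (κ 1)⁻¹ (s 1 : Rep n r) = s 0
      rw [κ.target]; exact act_inv_eq e1)⟩
  have := sl.contractible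
  have hnull : (s₁.trans s₂).Homotopic (Path.refl _) := SimplyConnectedSpace.paths_homotopic _ _
  have hπ : ((γ₁.trans γ₂).prod (s₁.trans s₂)).Homotopic ((γ₁.trans γ₂).prod (Path.refl _)) :=
    ⟨Path.Homotopic.prodHomotopy (Path.Homotopy.refl _) hnull.some⟩
  have hl : l.Homotopic (l.trans (Path.refl a)) := ⟨(Path.Homotopy.transRefl l).symm⟩
  have ha : act (g 0) (s 0 : Rep n r) = a := by
    simp only [s, Path.source, act_act_inv]
  have hprod : ∀ t, act ((γ₁.trans γ₂) t) ((s₁.trans s₂) t : Rep n r)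
      = ((l.trans (Path.refl a)) t : Rep n r) := by
    intro t
    simp only [Path.trans_apply]
    split_ifs with ht
    · exact act_act_inv _ _
    · change act (g 1 * κ _) (act (κ _)⁻¹ (act (g 1)⁻¹ (l 1 : Rep n r))) = (a : Rep n r)
      rw [act_mul, act_act_inv, act_act_inv, l.target]
  refine ⟨⟨⟨fun t => (γ₁.trans γ₂) t * (g 0)⁻¹, by fun_prop⟩, by simp, by simp⟩,
    ⟨⟨fun t => m ((γ₁.trans γ₂) t, s 0), hm.comp (by fun_prop)⟩, ?_, ?_⟩, ?_,
    hl.trans (homotopic_congr (hπ.map ⟨m, hm⟩) ?_ ?_)⟩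
  · exact Subtype.ext ((congrArg (act · (s 0 : Rep n r)) (γ₁.trans γ₂).source).trans ha)
  · exact Subtype.ext ((congrArg (act · (s 0 : Rep n r)) (γ₁.trans γ₂).target).trans ha)
  · intro t
    change act _ _ = act (_ * _) _
    rw [act_mul, ← ha, act_inv_act]
  · intro t
    exact Subtype.ext (hprod t).symm
  · intro t; rfl

/-- The image of the slice in the quotient is contractible. -/
lemma contractible_image : ContractibleSpace (proj '' sl.S) := by
  have hwell : ∀ t : I, ∀ s ∈ sl.S, ∀ s' ∈ sl.S, proj s = proj s' →
      proj (sl.sc (t, s)) = proj (sl.sc (t, s')) := by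
    intro t s hs s' hs' e
    obtain ⟨g, rfl⟩ := proj_eq.1 e
    rw [sl.sc_act t g (sl.rigid g s hs hs') s hs, proj_act]
  choose s hs hms using fun u : proj '' sl.S => u.2
  let C : I × (proj '' sl.S) → proj '' sl.S := fun q => ⟨proj (sl.sc (q.1, s q.2)), _, sl.sc_mem _ _ (hs _), rfl⟩
  have hC : ∀ t (u : proj '' sl.S), ∀ z ∈ sl.S, proj z = u → (C (t, u) : RepQuotGL n r) = proj (sl.sc (t, z)) :=
    fun t u z hz e => hwell t _ (hs u) z hz ((hms u).trans e.symm)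
  let p : proj ⁻¹' (proj '' sl.S) → proj '' sl.S := (proj '' sl.S).restrictPreimage proj
  have hp : IsOpenQuotientMap p := ⟨(Set.restrictPreimage_surjective _ proj_surj),
    continuous_proj.restrictPreimage, isOpenQuotientMap_proj.isOpenMap.restrictPreimage _⟩
  have hcont : Continuous C := by
    rw [← (IsOpenQuotientMap.id.prodMap hp).continuous_comp_iff]
    refine Continuous.subtype_mk (f := fun q : I × proj ⁻¹' (proj '' sl.S) =>
      proj (sl.sc (q.1, s (p q.2)))) ?_ _
    rw [continuous_iff_continuousAt]
    rintro ⟨t₀, z₀, hz₀⟩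
    obtain ⟨O, hO, hzO, c, hc, hcS⟩ := sl.lift_T z₀ (by rwa [← preimage_image])
    have hopen : IsOpen ((fun q : I × proj ⁻¹' (proj '' sl.S) => (q.2 : Rep n r)) ⁻¹' O) :=
      hO.preimage (by fun_prop)
    have hact : ContinuousOn (fun z => act (c z)⁻¹ z) O := by
      rw [continuousOn_iff_continuous_domRestrict] at hc ⊢
      exact hc.inv.act continuous_subtype_val
    have h1 : ContinuousOn (fun q : I × proj ⁻¹' (proj '' sl.S) =>
        proj (sl.sc (q.1, act (c q.2)⁻¹ q.2)))
        ((fun q : I × proj ⁻¹' (proj '' sl.S) => (q.2 : Rep n r)) ⁻¹' O) := by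
      refine continuous_proj.comp_continuousOn (sl.sc_cont.comp ?_ fun q hq => ⟨trivial, hcS _ hq⟩)
      exact continuous_fst.continuousOn.prodMk
        (hact.comp (f := fun q : I × proj ⁻¹' (proj '' sl.S) => (q.2 : Rep n r))
          (by fun_prop) fun _ h => h)
    refine (h1.congr fun q hq => ?_).continuousAt (hopen.mem_nhds hzO)
    exact hC q.1 (p q.2) _ (hcS _ hq) (proj_act _ _)
  rw [contractible_iff_id_nullhomotopic]
  refine ⟨⟨proj y, y, sl.mem, rfl⟩, ⟨⟨⟨C, hcont⟩, ?_, ?_⟩⟩⟩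
  · intro u; exact Subtype.ext (by change proj _ = _; rw [sl.sc_zero _ (hs u), hms]; rfl)
  · intro u; exact Subtype.ext (by change proj _ = proj y; rw [sl.sc_one _ (hs u)])

lemma good : Good (proj : Rep n r → RepQuotGL n r) act (proj '' sl.S) where
  isOpen := by
    rw [← isOpenQuotientMap_proj.isQuotientMap.isOpen_preimage, preimage_image]
    exact sl.isOpen_T
  conn := by
    rw [preimage_image]; exact isPathConnected_iff_pathConnectedSpace.1 sl.pathConnected
  contr := sl.contractible_image
  vert := by
    rw [preimage_image]; exact sl.vert

end Slice

/-- Classes of balanced tuples have arbitrarily small good neighbourhoods, the images of slices. -/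
lemma poly_of_bal {y : Rep n r} (hy : Bal (toE y)) :
    Poly (proj : Rep n r → RepQuotGL n r) act (proj y) := by
  intro W hW hyW
  obtain ⟨sl, hsl⟩ := exists_slice hy (hW.preimage continuous_proj)
    (fun g z hz => by rwa [Set.mem_preimage, proj_act]) hyW
  exact ⟨_, sl.good, ⟨y, sl.mem, rfl⟩, Set.image_subset_iff.2 hsl⟩

end RepQuot

/-! ### Filling squares and cubes -/

namespace RepQuot

open Topology unitInterval

/-- The point `x / 2` of the unit interval. -/
noncomputable def lo (x : I) : I := ⟨(x : ℝ) / 2, by linarith [x.2.1], by linarith [x.2.2]⟩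

/-- The point `(1 + x) / 2` of the unit interval. -/
noncomputable def hi (x : I) : I := ⟨(1 + (x : ℝ)) / 2, by linarith [x.2.1], by linarith [x.2.2]⟩

lemma trans_lo {X : Type*} [TopologicalSpace X] {a b c : X} (p : Path a b) (q : Path b c) (x : I) :
    (p.trans q) (lo x) = p x := by
  rw [Path.trans_apply, dif_pos (by simp only [lo]; linarith [x.2.2])]
  congr 1; ext; simp only [lo]; ring

lemma trans_hi {X : Type*} [TopologicalSpace X] {a b c : X} (p : Path a b) (q : Path b c) (x : I) :
    (p.trans q) (hi x) = q x := by
  rw [Path.trans_apply]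
  split_ifs with h
  · obtain rfl : x = 0 := Subtype.ext (by
      have := x.2.1; simp only [hi] at h; simp only [Set.Icc.coe_zero]; linarith)
    rw [q.source]
    convert p.target using 2
    ext; simp [hi]
  · congr 1; ext; simp only [hi]; ring

/-- A homotopy of paths between the two ways around a square fills the square. -/
lemma square_fill {W : Type*} [TopologicalSpace W] {a b c d : W} {l : Path a c} {t : Path c d}
    {m : Path a b} {r : Path b d} (h : (m.trans r).Homotopic (l.trans t)) :
    ∃ F : C(I × I, W), (∀ x, F (x, 0) = m x) ∧ (∀ x, F (x, 1) = t x) ∧ (∀ y, F (0, y) = l y) ∧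
      ∀ y, F (1, y) = r y := by
  obtain ⟨H⟩ := h
  -- the bigon `[0, 1]²` with the edges `τ = 0` and `τ = 1` collapsed is the square
  have hb : ∀ u τ : I, (0 : ℝ) ≤ τ + min (τ : ℝ) (1 - τ) * (1 - 2 * u) ∧
      (τ : ℝ) + min (τ : ℝ) (1 - τ) * (1 - 2 * u) ≤ 1 ∧
      (0 : ℝ) ≤ τ - min (τ : ℝ) (1 - τ) * (1 - 2 * u) ∧
      (τ : ℝ) - min (τ : ℝ) (1 - τ) * (1 - 2 * u) ≤ 1 := by
    intro u τ
    have h1 := u.2.1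
    have h2 := u.2.2
    have h3 := τ.2.1
    have h4 := τ.2.2
    have h5 := min_le_left (τ : ℝ) (1 - τ)
    have h6 := min_le_right (τ : ℝ) (1 - τ)
    have h7 : 0 ≤ min (τ : ℝ) (1 - τ) := le_min h3 (by linarith)
    refine ⟨?_, ?_, ?_, ?_⟩ <;> nlinarith
  let q : I × I → I × I := fun p => (⟨_, (hb p.1 p.2).1, (hb p.1 p.2).2.1⟩,
    ⟨_, (hb p.1 p.2).2.2.1, (hb p.1 p.2).2.2.2⟩)
  have hq : Continuous q := by
    refine Continuous.prodMk (Continuous.subtype_mk ?_ _) (Continuous.subtype_mk ?_ _) <;> fun_prop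
  have hsurj : Function.Surjective q := by
    rintro ⟨x, y⟩
    have hx0 := x.2.1
    have hx1 := x.2.2
    have hy0 := y.2.1
    have hy1 := y.2.2
    let τ : I := ⟨((x : ℝ) + y) / 2, by linarith, by linarith⟩
    have hm0 : 0 ≤ min (τ : ℝ) (1 - τ) := le_min τ.2.1 (by linarith [τ.2.2])
    have hm1 : |(x : ℝ) - y| / 2 ≤ min (τ : ℝ) (1 - τ) := by
      refine le_min ?_ ?_ <;> simp only [τ] <;> cases abs_cases ((x : ℝ) - y) <;> linarith
    rcases hm0.eq_or_lt with h0 | h0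
    · refine ⟨(0, τ), ?_⟩
      have h9 : (x : ℝ) = y := by
        have := abs_nonneg ((x : ℝ) - y)
        exact sub_eq_zero.1 (abs_eq_zero.1 (by linarith))
      ext
      · simp only [q, ← h0, τ]; linarith
      · simp only [q, ← h0, τ]; linarith
    · have hd : |((x : ℝ) - y) / 2 / min (τ : ℝ) (1 - τ)| ≤ 1 := by
        rw [abs_div, abs_of_pos h0, div_le_one h0, abs_div, abs_two]; exact hm1
      obtain ⟨hd1, hd2⟩ := abs_le.1 hd
      have e : min (τ : ℝ) (1 - τ) * (((x : ℝ) - y) / 2 / min (τ : ℝ) (1 - τ)) = ((x : ℝ) - y) / 2 := by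
        field_simp
      refine ⟨(⟨(1 - ((x : ℝ) - y) / 2 / min (τ : ℝ) (1 - τ)) / 2, by linarith, by linarith⟩, τ), ?_⟩
      ext
      · simp only [q]
        rw [show (1 - 2 * ((1 - ((x : ℝ) - y) / 2 / min (τ : ℝ) (1 - τ)) / 2))
          = ((x : ℝ) - y) / 2 / min (τ : ℝ) (1 - τ) by ring, e]
        simp only [τ]; ring
      · simp only [q]
        rw [show (1 - 2 * ((1 - ((x : ℝ) - y) / 2 / min (τ : ℝ) (1 - τ)) / 2))
          = ((x : ℝ) - y) / 2 / min (τ : ℝ) (1 - τ) by ring, e]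
        simp only [τ]; ring
  have hquot : IsQuotientMap q := hq.isClosedMap.isQuotientMap hq hsurj
  have hfib : ∀ p p' : I × I, q p = q p' → H p = H p' := by
    rintro ⟨u, τ⟩ ⟨u', τ'⟩ e
    have e1 := congrArg (fun p : I × I => (p.1 : ℝ)) e
    have e2 := congrArg (fun p : I × I => (p.2 : ℝ)) e
    simp only [q] at e1 e2
    obtain rfl : τ = τ' := Subtype.ext (by linarith)
    have e3 : min (τ : ℝ) (1 - τ) * ((u : ℝ) - u') = 0 := by linarith
    rcases mul_eq_zero.1 e3 with h | h
    · rcases min_choice (τ : ℝ) (1 - τ) with h' | h'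
      · obtain rfl : τ = 0 := Subtype.ext (by rw [← h', h]; rfl)
        simp
      · obtain rfl : τ = 1 := Subtype.ext (by
          have : (1 : ℝ) - τ = 0 := by rw [← h', h]
          simp only [Set.Icc.coe_one]; linarith)
        simp
    · obtain rfl : u = u' := Subtype.ext (sub_eq_zero.1 h)
      rfl
  let F := hquot.lift (f := ⟨q, hq⟩) (H : C(I × I, W)) hfib
  have hF : ∀ p, F (q p) = H p := fun p => DFunLike.congr_fun (hquot.lift_comp (f := ⟨q, hq⟩) (H : C(I × I, W)) hfib) p
  have m1 : ∀ x : I, min ((lo x : I) : ℝ) (1 - lo x) = lo x := fun x =>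
    min_eq_left (by simp only [lo]; linarith [x.2.2])
  have m2 : ∀ x : I, min ((hi x : I) : ℝ) (1 - hi x) = 1 - hi x := fun x =>
    min_eq_right (by simp only [hi]; linarith [x.2.1])
  refine ⟨F, fun x => ?_, fun x => ?_, fun x => ?_, fun x => ?_⟩
  · have : q (0, lo x) = (x, 0) := by
      ext <;> simp only [q, m1] <;> simp only [lo, Set.Icc.coe_zero] <;> ring
    rw [← this, hF, H.apply_zero]; exact trans_lo _ _ _
  · have : q (1, hi x) = (x, 1) := by
      ext <;> simp only [q, m2] <;> simp only [hi, Set.Icc.coe_one] <;> ring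
    rw [← this, hF, H.apply_one]; exact trans_hi _ _ _
  · have : q (1, lo x) = (0, x) := by
      ext <;> simp only [q, m1] <;> simp only [lo, Set.Icc.coe_zero, Set.Icc.coe_one] <;> ring
    rw [← this, hF, H.apply_one]; exact trans_lo _ _ _
  · have : q (0, hi x) = (1, x) := by
      ext <;> simp only [q, m2] <;> simp only [hi, Set.Icc.coe_zero, Set.Icc.coe_one] <;> ring
    rw [← this, hF, H.apply_zero]; exact trans_hi _ _ _

/-- A map defined on the boundary of a cube extends to the cube when the target is contractible:
cone off the boundary with a contraction. -/
lemma cube_fill {U : Type*} [TopologicalSpace U] [ContractibleSpace U] (B : I × I × I → U)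
    (h1 : Continuous fun p : I × I => B (0, p.1, p.2)) (h2 : Continuous fun p : I × I => B (1, p.1, p.2))
    (h3 : Continuous fun p : I × I => B (p.1, 0, p.2)) (h4 : Continuous fun p : I × I => B (p.1, 1, p.2))
    (h5 : Continuous fun p : I × I => B (p.1, p.2, 0)) (h6 : Continuous fun p : I × I => B (p.1, p.2, 1)) :
    ∃ K : C(I × I × I, U), ∀ z : I × I × I, (z.1 = 0 ∨ z.1 = 1 ∨ z.2.1 = 0 ∨ z.2.1 = 1 ∨
      z.2.2 = 0 ∨ z.2.2 = 1) → K z = B z := by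
  obtain ⟨u₀, ⟨c⟩⟩ := id_nullhomotopic U
  let D : Set (I × I × I) := {z | z.1 = 0 ∨ z.1 = 1 ∨ z.2.1 = 0 ∨ z.2.1 = 1 ∨ z.2.2 = 0 ∨ z.2.2 = 1}
  have hD : D = {z | z.1 = 0} ∪ ({z | z.1 = 1} ∪ ({z | z.2.1 = 0} ∪ ({z | z.2.1 = 1} ∪
    ({z | z.2.2 = 0} ∪ {z | z.2.2 = 1})))) := by
    ext z; simp [D]
  have c1 : IsClosed {z : I × I × I | z.1 = 0} := isClosed_eq (by fun_prop) (by fun_prop)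
  have c2 : IsClosed {z : I × I × I | z.1 = 1} := isClosed_eq (by fun_prop) (by fun_prop)
  have c3 : IsClosed {z : I × I × I | z.2.1 = 0} := isClosed_eq (by fun_prop) (by fun_prop)
  have c4 : IsClosed {z : I × I × I | z.2.1 = 1} := isClosed_eq (by fun_prop) (by fun_prop)
  have c5 : IsClosed {z : I × I × I | z.2.2 = 0} := isClosed_eq (by fun_prop) (by fun_prop)
  have c6 : IsClosed {z : I × I × I | z.2.2 = 1} := isClosed_eq (by fun_prop) (by fun_prop)
  have hDc : IsClosed D := by
    rw [hD]; exact c1.union (c2.union (c3.union (c4.union (c5.union c6))))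
  have hB : ContinuousOn B D := by
    rw [hD]
    refine ContinuousOn.union_of_isClosed ?_ (ContinuousOn.union_of_isClosed ?_
      (ContinuousOn.union_of_isClosed ?_ (ContinuousOn.union_of_isClosed ?_
      (ContinuousOn.union_of_isClosed ?_ ?_ c5 c6) c4 (c5.union c6)) c3 (c4.union (c5.union c6)))
      c2 (c3.union (c4.union (c5.union c6)))) c1 (c2.union (c3.union (c4.union (c5.union c6))))
    · exact (h1.comp (f := fun z : I × I × I => (z.2.1, z.2.2)) (by fun_prop)).continuousOn.congr
        fun z hz => congrArg B (Prod.ext hz rfl)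
    · exact (h2.comp (f := fun z : I × I × I => (z.2.1, z.2.2)) (by fun_prop)).continuousOn.congr
        fun z hz => congrArg B (Prod.ext hz rfl)
    · exact (h3.comp (f := fun z : I × I × I => (z.1, z.2.2)) (by fun_prop)).continuousOn.congr
        fun z hz => congrArg B (Prod.ext rfl (Prod.ext hz rfl))
    · exact (h4.comp (f := fun z : I × I × I => (z.1, z.2.2)) (by fun_prop)).continuousOn.congr
        fun z hz => congrArg B (Prod.ext rfl (Prod.ext hz rfl))
    · exact (h5.comp (f := fun z : I × I × I => (z.1, z.2.1)) (by fun_prop)).continuousOn.congr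
        fun z hz => congrArg B (Prod.ext rfl (Prod.ext rfl hz))
    · exact (h6.comp (f := fun z : I × I × I => (z.1, z.2.1)) (by fun_prop)).continuousOn.congr
        fun z hz => congrArg B (Prod.ext rfl (Prod.ext rfl hz))
  have : CompactSpace D := isCompact_iff_compactSpace.1 hDc.isCompact
  -- the cube is the closed ball of radius `1 / 2` in the sup norm
  let v : I × I × I → ℝ × ℝ × ℝ := fun z => ((z.1 : ℝ) - 1 / 2, (z.2.1 : ℝ) - 1 / 2, (z.2.2 : ℝ) - 1 / 2)
  let w : ℝ × ℝ × ℝ → I × I × I := fun e => (Set.projIcc 0 1 zero_le_one (e.1 + 1 / 2),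
    Set.projIcc 0 1 zero_le_one (e.2.1 + 1 / 2), Set.projIcc 0 1 zero_le_one (e.2.2 + 1 / 2))
  have hv : Continuous v := by fun_prop
  have hw : Continuous w := by
    have := continuous_projIcc (a := (0 : ℝ)) (b := 1) (h := zero_le_one)
    fun_prop
  have hwv : ∀ z, w (v z) = z := by intro z; simp [w, v, Set.projIcc_val]
  have hvn : ∀ z, ‖v z‖ ≤ 1 / 2 := by
    intro z
    have habs : ∀ x : I, |(x : ℝ) - 1 / 2| ≤ 1 / 2 := fun x =>
      abs_le.2 ⟨by linarith [x.2.1], by linarith [x.2.2]⟩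
    simp only [Prod.norm_def, v, Real.norm_eq_abs]
    exact max_le (habs _) (max_le (habs _) (habs _))
  have hvw : ∀ e, ‖e‖ ≤ 1 / 2 → v (w e) = e := by
    intro e he
    have hp : ∀ x : ℝ, |x| ≤ 1 / 2 → ((Set.projIcc (0 : ℝ) 1 zero_le_one (x + 1 / 2) : I) : ℝ) - 1 / 2 = x := by
      intro x hx
      obtain ⟨hx1, hx2⟩ := abs_le.1 hx
      rw [Set.projIcc_of_mem _ (by constructor <;> linarith)]
      simp
    simp only [Prod.norm_def, Real.norm_eq_abs, max_le_iff] at he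
    exact Prod.ext (hp _ he.1) (Prod.ext (hp _ he.2.1) (hp _ he.2.2))
  have hface : ∀ x : I, |(x : ℝ) - 1 / 2| = 1 / 2 ↔ x = 0 ∨ x = 1 := by
    intro x
    constructor
    · intro h
      rcases abs_cases ((x : ℝ) - 1 / 2) with ⟨h', _⟩ | ⟨h', _⟩
      · right; ext; simp only [Set.Icc.coe_one]; linarith
      · left; ext; simp only [Set.Icc.coe_zero]; linarith
    · rintro (rfl | rfl) <;> norm_num
  have hvD : ∀ z, z ∈ D ↔ ‖v z‖ = 1 / 2 := by
    intro z
    have h0 := hvn z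
    simp only [Prod.norm_def, v, Real.norm_eq_abs] at h0 ⊢
    simp only [max_le_iff] at h0
    have : z ∈ D ↔ (z.1 = 0 ∨ z.1 = 1) ∨ (z.2.1 = 0 ∨ z.2.1 = 1) ∨ (z.2.2 = 0 ∨ z.2.2 = 1) := by
      simp only [D, Set.mem_ofPred_eq]; tauto
    rw [this, ← hface, ← hface, ← hface]
    constructor
    · rintro (h | h | h)
      · rw [h, max_eq_left (max_le h0.2.1 h0.2.2)]
      · rw [h, max_eq_left h0.2.2, max_eq_right h0.1]
      · rw [h, max_eq_right h0.2.1, max_eq_right h0.1]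
    · intro h
      rcases max_choice |(z.1 : ℝ) - 1 / 2| (max |(z.2.1 : ℝ) - 1 / 2| |(z.2.2 : ℝ) - 1 / 2|) with h' | h'
      · left; rw [← h', h]
      · rcases max_choice |(z.2.1 : ℝ) - 1 / 2| |(z.2.2 : ℝ) - 1 / 2| with h'' | h''
        · right; left; rw [← h'', ← h', h]
        · right; right; rw [← h'', ← h', h]
  let q : I × D → I × I × I := fun p => w ((p.1 : ℝ) • v p.2)
  have hvq : ∀ p, v (q p) = (p.1 : ℝ) • v p.2 := by
    intro p
    refine hvw _ ?_
    rw [norm_smul, Real.norm_eq_abs, abs_of_nonneg p.1.2.1]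
    exact (mul_le_of_le_one_left (norm_nonneg _) p.1.2.2).trans (hvn _)
  have hnq : ∀ p : I × D, ‖v (q p)‖ = (p.1 : ℝ) / 2 := by
    intro p
    rw [hvq, norm_smul, (hvD _).1 p.2.2, Real.norm_eq_abs, abs_of_nonneg p.1.2.1]; ring
  have hqc : Continuous q := hw.comp (by fun_prop)
  have hsurj : Function.Surjective q := by
    intro z
    have h0 := norm_nonneg (v z)
    rcases h0.eq_or_lt with h | h
    · refine ⟨(0, ⟨(0, 0, 0), Or.inl rfl⟩), ?_⟩
      rw [← hwv z]
      simp only [q, norm_eq_zero.1 h.symm]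
      simp
    · have hn : ‖(1 / (2 * ‖v z‖)) • v z‖ = 1 / 2 := by
        rw [norm_smul, Real.norm_eq_abs, abs_of_pos (by positivity)]; field_simp
      refine ⟨(⟨2 * ‖v z‖, by positivity, by linarith [hvn z]⟩,
        ⟨w ((1 / (2 * ‖v z‖)) • v z), (hvD _).2 (by rw [hvw _ hn.le, hn])⟩), ?_⟩
      simp only [q]
      rw [hvw _ hn.le, smul_smul, mul_one_div_cancel (by positivity), one_smul, hwv]
  have hquot : IsQuotientMap q := hqc.isClosedMap.isQuotientMap hqc hsurj
  let H : C(I × D, U) := ⟨fun p => c (σ p.1, B p.2), c.continuous.comp (by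
    have : Continuous fun z : D => B z := continuousOn_iff_continuous_domRestrict.1 hB
    exact (continuous_symm.comp continuous_fst).prodMk (this.comp continuous_snd))⟩
  have hfib : ∀ p p' : I × D, q p = q p' → H p = H p' := by
    rintro ⟨ρ, z⟩ ⟨ρ', z'⟩ e
    have e1 := hnq (ρ, z)
    rw [e, hnq] at e1
    obtain rfl : ρ' = ρ := Subtype.ext (by simp only at e1; linarith)
    have e2 := hvq (ρ', z)
    rw [e, hvq] at e2
    by_cases hρ : (ρ' : ℝ) = 0
    · obtain rfl : ρ' = 0 := Subtype.ext hρ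
      change c (σ 0, _) = c (σ 0, _)
      rw [symm_zero, c.apply_one, c.apply_one]; rfl
    · have := smul_right_injective _ hρ e2
      have : z = z' := Subtype.ext (by rw [← hwv z, ← hwv z', this])
      rw [this]
  refine ⟨hquot.lift (f := ⟨q, hqc⟩) H hfib, fun z hz => ?_⟩
  have e : q (1, ⟨z, hz⟩) = z := by simp only [q, Set.Icc.coe_one, one_smul, hwv]
  have e' := DFunLike.congr_fun (hquot.lift_comp (f := ⟨q, hqc⟩) H hfib) (1, ⟨z, hz⟩)
  change hquot.lift (f := ⟨q, hqc⟩) H hfib (q (1, ⟨z, hz⟩)) = c (σ 1, B z) at e'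
  rw [e, symm_one, c.apply_zero] at e'
  exact e'

end RepQuot

/-! ### Gluing along a grid -/

namespace RepQuot

open Topology unitInterval

/-- Concatenation of finitely many paths with matching endpoints, parametrized on the real line. -/
lemma glue_real {X : Type*} [TopologicalSpace X] (g : ℕ → C(I, X)) (h : ∀ i, g i 1 = g (i + 1) 0) (N : ℕ) :
    ∃ G : C(ℝ, X), (∀ i < N, ∀ t : I, G (i + t) = g i t) ∧ ∀ x : ℝ, N ≤ x → G x = g N 0 := by
  induction N with
  | zero => exact ⟨ContinuousMap.const _ (g 0 0), by simp, by simp⟩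
  | succ N ih =>
    obtain ⟨G, hG, hN⟩ := ih
    have hp := continuous_projIcc (a := (0 : ℝ)) (b := 1) (h := zero_le_one)
    let G' : C(ℝ, X) := ⟨fun x => if x ≤ N then G x else g N (Set.projIcc 0 1 zero_le_one (x - N)),
      Continuous.if_le G.continuous ((g N).continuous.comp (hp.comp (by fun_prop))) continuous_id
        continuous_const (by
          rintro x rfl
          rw [hN _ le_rfl, sub_self, Set.projIcc_left]; rfl)⟩
    have hG' : ∀ x, G' x = if x ≤ N then G x else g N (Set.projIcc 0 1 zero_le_one (x - N)) := fun _ => rfl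
    refine ⟨G', fun i hi t => ?_, fun x hx => ?_⟩
    · rw [hG']
      rcases Nat.lt_succ_iff_lt_or_eq.1 hi with hi' | rfl
      · have : (i : ℝ) + 1 ≤ N := by exact_mod_cast hi'
        rw [if_pos (by linarith [t.2.2]), hG i hi' t]
      · split_ifs with h0
        · obtain rfl : t = 0 := Subtype.ext (le_antisymm (by simpa using h0) t.2.1)
          rw [hN _ (by simp)]
        · rw [add_sub_cancel_left, Set.projIcc_val]
    · push_cast at hx
      rw [hG', if_neg (by linarith), Set.projIcc_of_right_le _ (by linarith)]
      exact h N

/-- Finitely many consecutive paths can be concatenated with equal speed. -/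
lemma glue {X : Type*} [TopologicalSpace X] (g : ℕ → C(I, X)) (h : ∀ i, g i 1 = g (i + 1) 0) (N : ℕ) :
    ∃ G : C(I, X), ∀ i < N, ∀ t x : I, (x : ℝ) * N = i + t → G x = g i t := by
  obtain ⟨G, hG, -⟩ := glue_real g h N
  refine ⟨⟨fun x => G (x * N), by fun_prop⟩, fun i hi t x e => ?_⟩
  rw [← hG i hi t, ← e]; rfl

/-- Every point of the unit interval lies in one of the `N` intervals of length `1 / N`. -/
lemma exists_cell {N : ℕ} (hN : 0 < N) (x : I) : ∃ i < N, ∃ t : I, (x : ℝ) * N = i + t := by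
  have hN' : (0 : ℝ) < N := by exact_mod_cast hN
  by_cases hx : (x : ℝ) = 1
  · refine ⟨N - 1, by omega, 1, ?_⟩
    rw [hx, Nat.cast_sub hN]; simp
  · have h0 : 0 ≤ (x : ℝ) * N := mul_nonneg x.2.1 hN'.le
    refine ⟨⌊(x : ℝ) * N⌋₊, (Nat.floor_lt h0).2 ?_, ⟨x * N - ⌊(x : ℝ) * N⌋₊, ?_, ?_⟩, ?_⟩
    · have := lt_of_le_of_ne x.2.2 hx
      nlinarith
    · linarith [Nat.floor_le h0]
    · linarith [Nat.lt_floor_add_one ((x : ℝ) * N)]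
    · simp

/-- A grid of squares with matching edges glues to one square. -/
lemma glue_grid {X : Type*} [TopologicalSpace X] (g : ℕ → ℕ → C(I × I, X))
    (h1 : ∀ i j t, g i j (1, t) = g (i + 1) j (0, t)) (h2 : ∀ i j s, g i j (s, 1) = g i (j + 1) (s, 0))
    {N : ℕ} (hN : 0 < N) : ∃ G : C(I × I, X), ∀ i < N, ∀ j < N, ∀ s t x y : I, (x : ℝ) * N = i + s →
      (y : ℝ) * N = j + t → G (x, y) = g i j (s, t) := by
  have h (i : ℕ) := glue (fun j => ((g i j).comp ContinuousMap.prodSwap).curry) (fun j => by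
    ext s; exact h2 i j s) N
  choose R hR using h
  obtain ⟨G, hG⟩ := glue (fun i => (((R i).uncurry).comp ContinuousMap.prodSwap).curry) (fun i => by
    ext y
    obtain ⟨j, hj, t, e⟩ := exists_cell hN y
    change R i y 1 = R (i + 1) y 0
    rw [hR i j hj t y e, hR (i + 1) j hj t y e]
    exact h1 i j t) N
  refine ⟨G.uncurry, fun i hi j hj s t x y ex ey => ?_⟩
  change G x y = _
  rw [hG i hi s x ex]
  change R i y s = _
  rw [hR i j hj t y ey]; rfl

end RepQuot

/-! ### Lifting paths up to homotopy -/

namespace RepQuot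

open Topology unitInterval

/-- Homotopy of paths relative to the endpoints, through paths inside a set `S`. -/
def HomIn {X : Type*} [TopologicalSpace X] (S : Set X) (f g : I → X) : Prop :=
  ∃ H : C(I × I, X), (∀ s, H (0, s) = f s) ∧ (∀ s, H (1, s) = g s) ∧ (∀ t, H (t, 0) = f 0) ∧
    (∀ t, H (t, 1) = f 1) ∧ ∀ z, H z ∈ S

/-- The corestriction of a path to a set containing it. -/
def pathIn {X : Type*} [TopologicalSpace X] {S : Set X} (f : C(I, X)) (h : ∀ s, f s ∈ S) {a b : S}
    (ha : f 0 = a) (hb : f 1 = b) : Path a b where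
  toFun s := ⟨f s, h s⟩
  source' := Subtype.ext ha
  target' := Subtype.ext hb

lemma homIn_of_homotopic {X : Type*} [TopologicalSpace X] {S : Set X} {a b : S} {γ δ : Path a b}
    (h : γ.Homotopic δ) : HomIn S (fun s => (γ s : X)) (fun s => (δ s : X)) := by
  obtain ⟨H⟩ := h
  exact ⟨⟨fun z => (H z : X), by fun_prop⟩, fun s => by simp, fun s => by simp, fun t => by simp,
    fun t => by simp, fun z => (H z).2⟩

lemma homotopic_of_homIn {X : Type*} [TopologicalSpace X] {S : Set X} {f g : C(I, X)} (h : HomIn S f g)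
    (hf : ∀ s, f s ∈ S) (hg : ∀ s, g s ∈ S) {a b : S} (ha : f 0 = a) (hb : f 1 = b) (ha' : g 0 = a)
    (hb' : g 1 = b) : (pathIn f hf ha hb).Homotopic (pathIn g hg ha' hb') := by
  obtain ⟨H, h1, h2, h3, h4, h5⟩ := h
  refine ⟨⟨⟨⟨fun z => ⟨H z, h5 z⟩, by fun_prop⟩, fun s => Subtype.ext (h1 s),
    fun s => Subtype.ext (h2 s)⟩, ?_⟩⟩
  rintro t s (rfl | rfl)
  · exact Subtype.ext (h3 t)
  · exact Subtype.ext (h4 t)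

lemma trans_symm_trans {X : Type*} [TopologicalSpace X] {a b c : X} (P : Path a b) (R : Path a c) :
    (P.trans (P.symm.trans R)).Homotopic R := by
  refine Path.Homotopic.trans ⟨(Path.Homotopy.transAssoc P P.symm R).symm⟩ ?_
  exact Path.Homotopic.trans (Path.Homotopic.hcomp ⟨(Path.Homotopy.reflTransSymm P).symm⟩
    (Path.Homotopic.refl R)) ⟨Path.Homotopy.reflTrans R⟩

/-- If both ends of a homotopy are constant paths at `q₀`, it can be replaced by a constant one. -/
lemma HomIn.exists_homotopy {X : Type*} [TopologicalSpace X] {S : Set X} {f g : I → X} (h : HomIn S f g)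
    (q₀ : X) : ∃ H : C(I × I, X), (∀ s, H (0, s) = f s) ∧ (∀ s, H (1, s) = g s) ∧ (∀ t, H (t, 0) = f 0) ∧
      (∀ t, H (t, 1) = f 1) ∧ (∀ z, H z ∈ S) ∧ ((∀ s, f s = q₀) → (∀ s, g s = q₀) → ∀ z, H z = q₀) := by
  obtain ⟨H, h1, h2, h3, h4, h5⟩ := h
  by_cases hc : (∀ s, f s = q₀) ∧ ∀ s, g s = q₀
  · refine ⟨ContinuousMap.const _ q₀, fun s => (hc.1 s).symm, fun s => (hc.2 s).symm,
      fun s => (hc.1 _).symm, fun s => (hc.1 _).symm, fun z => ?_, fun _ _ _ => rfl⟩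
    rw [ContinuousMap.const_apply, ← hc.1 0, ← h1]
    exact h5 _
  · exact ⟨H, h1, h2, h3, h4, h5, fun e e' => (hc ⟨e, e'⟩).elim⟩

/-- Dependent choice: one-step extensions give an infinite sequence. -/
lemma exists_seq_of_step {α : Type*} (P : ℕ → α → Prop) (R : ℕ → α → α → Prop) (h0 : ∃ w, P 0 w)
    (hs : ∀ i w, P i w → ∃ w', P (i + 1) w' ∧ R i w w') :
    ∃ w : ℕ → α, (∀ i, P i (w i)) ∧ ∀ i, R i (w i) (w (i + 1)) := by
  obtain ⟨w0, h0⟩ := h0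
  choose nx h1 h2 using hs
  let w : ∀ i, {w : α // P i w} := fun i => Nat.rec ⟨w0, h0⟩ (fun i w => ⟨nx i w.1 w.2, h1 i w.1 w.2⟩) i
  exact ⟨fun i => (w i).1, fun i => (w i).2, fun i => h2 i (w i).1 (w i).2⟩

variable {G Y Q : Type*} [TopologicalSpace G] [One G] [TopologicalSpace Y] [TopologicalSpace Q]
  {p : Y → Q} {act : G → Y → Y}

/-- A path in a good set lifts, up to homotopy, to a path with prescribed endpoints: the preimage is
path connected and the set is contractible. -/
lemma local_lift (hp : Continuous p) {U V : Set Q} (hU : Good p act U) (hUV : U ⊆ V) (a b : p ⁻¹' V)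
    {u v : V} (γ : Path u v) (hγ : ∀ s, (γ s : Q) ∈ U) (ha : p a = u) (hb : p b = v) :
    ∃ e : Path a b, ∃ m : Path u v, (∀ s, (m s : Q) = p (e s)) ∧ m.Homotopic γ := by
  have := hU.conn
  have := hU.contr
  have ha' : p a ∈ U := by rw [ha, ← γ.source]; exact hγ 0
  have hb' : p b ∈ U := by rw [hb, ← γ.target]; exact hγ 1
  let e := PathConnectedSpace.somePath (⟨a, ha'⟩ : p ⁻¹' U) ⟨b, hb'⟩
  let e' : Path a b := pathIn (S := p ⁻¹' V) ⟨fun s => (e s : Y), by fun_prop⟩ (fun s => hUV (e s).2)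
    (by simp) (by simp)
  have hpe : Continuous fun s => p (e s) := hp.comp (by fun_prop)
  let m : Path u v := pathIn (S := V) ⟨fun s => p (e s), hpe⟩ (fun s => hUV (e s).2)
    (by simp [ha]) (by simp [hb])
  have hu : (u : Q) ∈ U := ha ▸ ha'
  have hv : (v : Q) ∈ U := hb ▸ hb'
  let mU : Path (⟨u, hu⟩ : U) ⟨v, hv⟩ := pathIn (S := U) ⟨fun s => p (e s), hpe⟩ (fun s => (e s).2)
    (by simp [ha]) (by simp [hb])
  let gU : Path (⟨u, hu⟩ : U) ⟨v, hv⟩ := pathIn (S := U) ⟨fun s => (γ s : Q), by fun_prop⟩ hγ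
    (by simp) (by simp)
  have h := SimplyConnectedSpace.paths_homotopic mU gU
  refine ⟨e', m, fun s => rfl, ?_⟩
  exact homotopic_congr (h.map ⟨Set.inclusion hUV, continuous_inclusion hUV⟩) (fun t => rfl) fun t => rfl

/-- Lifting of paths up to homotopy, by subdividing into pieces inside good sets. -/
lemma lift_path_aux (hp : Continuous p) (hps : Function.Surjective p) {V : Set Q} (hV : IsOpen V)
    (a b : p ⁻¹' V) {u v : V} (γ : Path u v) (hγ : ∀ s, Poly p act (γ s : Q)) (ha : p a = u) (hb : p b = v) :
    ∃ e : Path a b, ∃ m : Path u v, (∀ s, (m s : Q) = p (e s)) ∧ m.Homotopic γ := by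
  choose U hU1 hU2 hU3 using fun s => hγ s V hV (γ s).2
  obtain ⟨t, t0, tm, ⟨N, hN⟩, ht⟩ := exists_monotone_Icc_subset_open_cover_unitInterval
    (c := fun s : I => {x : I | (γ x : Q) ∈ U s})
    (fun s => (hU1 s).isOpen.preimage (by fun_prop)) (fun s _ => Set.mem_iUnion.2 ⟨s, hU2 s⟩)
  have key : ∀ k, ∀ y : p ⁻¹' V, p y = γ (t k) → ∃ e : Path a y, ∃ m : Path (γ 0) (γ (t k)),
      (∀ s, (m s : Q) = p (e s)) ∧ m.Homotopic (γ.subpath 0 (t k)) := by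
    intro k
    induction k with
    | zero =>
      intro y hy
      refine local_lift hp (hU1 0) (hU3 0) a y (γ.subpath 0 (t 0)) (fun s => ?_) (by simpa using ha) hy
      have : (γ.subpath 0 (t 0)) s ∈ γ '' Set.Icc 0 (t 0) := by
        rw [← Path.range_subpath_of_le _ _ _ (by rw [t0])]; exact ⟨s, rfl⟩
      obtain ⟨x, hx, e⟩ := this
      rw [t0] at hx
      rw [← e, show x = 0 from le_antisymm hx.2 hx.1]
      exact hU2 0
    | succ k ih =>
      intro y hy
      obtain ⟨z, hz⟩ := hps (γ (t k))
      obtain ⟨e, m, hm, hm'⟩ := ih ⟨z, by rw [Set.mem_preimage, hz]; exact (γ (t k)).2⟩ hz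
      obtain ⟨i, hi⟩ := ht k
      obtain ⟨e', m', hn, hn'⟩ := local_lift hp (hU1 i) (hU3 i)
        ⟨z, by rw [Set.mem_preimage, hz]; exact (γ (t k)).2⟩ y (γ.subpath (t k) (t (k + 1))) (fun s => by
          have : (γ.subpath (t k) (t (k + 1))) s ∈ γ '' Set.Icc (t k) (t (k + 1)) := by
            rw [← Path.range_subpath_of_le _ _ _ (tm (Nat.le_succ k))]; exact ⟨s, rfl⟩
          obtain ⟨x, hx, ex⟩ := this
          rw [← ex]; exact hi hx) hz hy
      refine ⟨e.trans e', m.trans m', fun s => ?_, ?_⟩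
      · simp only [Path.trans_apply]
        split_ifs
        · exact hm _
        · exact hn _
      · exact (hm'.hcomp hn').trans ⟨Path.Homotopy.subpathTransSubpath γ _ _ _⟩
  obtain ⟨e, m, hm, hm'⟩ := key N b (by rw [hN N le_rfl, γ.target]; exact hb)
  have h1 : t N = 1 := hN N le_rfl
  refine ⟨e, m.cast (by simp) (by simp [h1]), hm, ?_⟩
  refine homotopic_congr hm' (fun _ => rfl) fun s => ?_
  have : ∀ x, x = (1 : I) → (γ.subpath 0 x) s = γ s := by
    rintro x rfl
    simp
  exact (this _ h1).symm

/-- Path lifting up to homotopy along `p`, with prescribed endpoints, inside an open set. Constant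
paths at a point with a single preimage lift to constant paths. -/
lemma lift_path (hp : Continuous p) (hps : Function.Surjective p) {y₀ : Y} (hy₀ : ∀ y, p y = p y₀ → y = y₀)
    {V : Set Q} (hV : IsOpen V) (a b : Y) (γ : C(I, Q)) (hγV : ∀ s, γ s ∈ V)
    (hγ : ∀ s, Poly p act (γ s : Q)) (ha : p a = γ 0) (hb : p b = γ 1) :
    ∃ e : C(I, Y), e 0 = a ∧ e 1 = b ∧ HomIn V γ (fun s => p (e s)) ∧
      ((∀ s, γ s = p y₀) → ∀ s, e s = y₀) := by
  by_cases hc : ∀ s, γ s = p y₀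
  · obtain rfl := hy₀ a (by rw [ha, hc])
    obtain rfl := hy₀ b (by rw [hb, hc])
    refine ⟨ContinuousMap.const _ b, rfl, rfl, ?_, fun _ _ => rfl⟩
    exact ⟨ContinuousMap.const _ (p b), fun s => (hc s).symm, fun s => rfl, fun s => (hc _).symm,
      fun s => (hc _).symm, fun z => by rw [ContinuousMap.const_apply, ← hc 0]; exact hγV 0⟩
  · obtain ⟨e, m, hm, hm'⟩ := lift_path_aux (V := V) hp hps hV ⟨a, by rw [Set.mem_preimage, ha]; exact hγV 0⟩
      ⟨b, by rw [Set.mem_preimage, hb]; exact hγV 1⟩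
      (pathIn γ hγV (a := ⟨γ 0, hγV 0⟩) (b := ⟨γ 1, hγV 1⟩) rfl rfl) hγ ha hb
    refine ⟨⟨fun s => (e s : Y), by fun_prop⟩, by simp, by simp, ?_, fun h => (hc h).elim⟩
    have := homIn_of_homotopic hm'.symm
    simp only [hm] at this
    exact this

/-- Completing three sides of a square, inside the preimage of a good set `U`, by a lift (up to
homotopy in `V`) of a given path: two lifts of the same path differ, up to homotopy, by a loop of `G`
acting on the endpoint. -/
lemma lift_square (hp : Continuous p) (hps : Function.Surjective p)
    (hpa : ∀ g y, p (act g y) = p y)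
    {y₀ : Y} (hy₀ : ∀ y, p y = p y₀ → y = y₀)
    {U V : Set Q} (hU : Good p act U) (hV : IsOpen V) (hVU : V ⊆ U) (l b t : C(I, Y))
    (hl : ∀ s, p (l s) ∈ U) (hb : ∀ s, p (b s) ∈ U) (ht : ∀ s, p (t s) ∈ U)
    (hbl : b 0 = l 0) (htl : t 0 = l 1) (γ : C(I, Q)) (hγV : ∀ s, γ s ∈ V)
    (hγ : ∀ s, Poly p act (γ s : Q)) (ha : p (b 1) = γ 0) (hb' : p (t 1) = γ 1) :
    ∃ r : C(I, Y), (r 0 = b 1 ∧ r 1 = t 1 ∧ HomIn V γ (fun s => p (r s)) ∧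
      ((∀ s, γ s = p y₀) → ∀ s, r s = y₀)) ∧
      ∃ F : C(I × I, Y), (∀ x, F (x, 0) = b x) ∧ (∀ x, F (x, 1) = t x) ∧ (∀ y, F (0, y) = l y) ∧
        (∀ y, F (1, y) = r y) ∧ ∀ z, p (F z) ∈ U := by
  obtain ⟨e, e0, e1, he, hec⟩ := lift_path (act := act) hp hps hy₀ hV (b 1) (t 1) γ hγV hγ ha hb'
  have heV : ∀ s, p (e s) ∈ V := by
    obtain ⟨H, h1, h2, h3, h4, h5⟩ := he
    intro s
    have := h5 (1, s)
    rwa [h2] at this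
  let A : p ⁻¹' U := ⟨l 0, hl 0⟩
  let B : p ⁻¹' U := ⟨b 1, hb 1⟩
  let C : p ⁻¹' U := ⟨l 1, hl 1⟩
  let D : p ⁻¹' U := ⟨t 1, ht 1⟩
  let L : Path A C := pathIn (S := p ⁻¹' U) l hl rfl rfl
  let Bt : Path A B := pathIn (S := p ⁻¹' U) b hb hbl rfl
  let T : Path C D := pathIn (S := p ⁻¹' U) t ht htl rfl
  let E : Path B D := pathIn (S := p ⁻¹' U) e (fun s => hVU (heV s)) e0 e1
  obtain ⟨k, m, hm, hm'⟩ := hU.vert D (E.symm.trans (Bt.symm.trans (L.trans T)))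
  -- the corrected right side is homotopic to the composite of the three other sides
  have hEm : (Bt.trans (E.trans m)).Homotopic (L.trans T) :=
    ((Path.Homotopic.refl Bt).hcomp (((Path.Homotopic.refl E).hcomp hm'.symm).trans
      (trans_symm_trans E _))).trans (trans_symm_trans Bt _)
  have hmp : ∀ s, p (m s) = γ 1 := fun s => by rw [hm, hpa, hb']
  obtain ⟨F, F1, F2, F3, F4⟩ := square_fill hEm
  refine ⟨⟨fun s => ((E.trans m) s : Y), by fun_prop⟩, ⟨by simp [B], by simp [D], ?_, fun hc s => ?_⟩,
    ⟨fun z => (F z : Y), by fun_prop⟩, fun x => congrArg Subtype.val (F1 x), fun x => congrArg Subtype.val (F2 x),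
    fun x => congrArg Subtype.val (F3 x), fun x => congrArg Subtype.val (F4 x), fun z => (F z).2⟩
  · let Γ : Path (⟨γ 0, hγV 0⟩ : V) ⟨γ 1, hγV 1⟩ := pathIn γ hγV rfl rfl
    let Pe : Path (⟨γ 0, hγV 0⟩ : V) ⟨γ 1, hγV 1⟩ := pathIn ⟨fun s => p (e s), hp.comp e.continuous⟩ heV
      (by simp [e0, ha]) (by simp [e1, hb'])
    have h1 : Γ.Homotopic Pe := homotopic_of_homIn (g := ⟨fun s => p (e s), hp.comp e.continuous⟩) he _ _ _ _ _ _
    have h2 := homIn_of_homotopic (h1.trans ⟨(Path.Homotopy.transRefl Pe).symm⟩)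
    refine cast (congrArg (HomIn V _) (funext fun s => ?_)) h2
    simp only [Path.trans_apply, ContinuousMap.coe_mk]
    split_ifs
    · rfl
    · exact (hmp _).symm
  · have h : ∀ s, (m s : Y) = y₀ := fun s => hy₀ _ (by rw [hmp, hc])
    simp only [Path.trans_apply, ContinuousMap.coe_mk]
    split_ifs
    · exact hec hc _
    · exact h _

/-- Two squares in a contractible set, joined by compatible homotopies along the four edges, are
homotopic by a homotopy extending the given ones. -/
lemma cube_in {U : Set Q} [ContractibleSpace U] (φ F L R B T : C(I × I, Q)) (hφ : ∀ z, φ z ∈ U)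
    (hF : ∀ z, F z ∈ U) (hL : ∀ z, L z ∈ U) (hR : ∀ z, R z ∈ U) (hB : ∀ z, B z ∈ U) (hT : ∀ z, T z ∈ U)
    (L0 : ∀ y, L (0, y) = φ (0, y)) (L1 : ∀ y, L (1, y) = F (0, y))
    (R0 : ∀ y, R (0, y) = φ (1, y)) (R1 : ∀ y, R (1, y) = F (1, y))
    (B0 : ∀ x, B (0, x) = φ (x, 0)) (B1 : ∀ x, B (1, x) = F (x, 0))
    (T0 : ∀ x, T (0, x) = φ (x, 1)) (T1 : ∀ x, T (1, x) = F (x, 1))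
    (LB : ∀ s, L (s, 0) = B (s, 0)) (LT : ∀ s, L (s, 1) = T (s, 0))
    (RB : ∀ s, R (s, 0) = B (s, 1)) (RT : ∀ s, R (s, 1) = T (s, 1)) :
    ∃ K : C(I × I × I, Q), (∀ z, K (0, z) = φ z) ∧ (∀ z, K (1, z) = F z) ∧
      (∀ s y, K (s, 0, y) = L (s, y)) ∧ (∀ s y, K (s, 1, y) = R (s, y)) ∧
      (∀ s x, K (s, x, 0) = B (s, x)) ∧ (∀ s x, K (s, x, 1) = T (s, x)) := by
  classical
  let D : I × I × I → Q := fun z => if z.1 = 0 then φ z.2 else if z.1 = 1 then F z.2 else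
    if z.2.1 = 0 then L (z.1, z.2.2) else if z.2.1 = 1 then R (z.1, z.2.2) else
    if z.2.2 = 0 then B (z.1, z.2.1) else T (z.1, z.2.1)
  have hD : ∀ z, D z ∈ U := by
    intro z
    simp only [D]
    split_ifs
    exacts [hφ _, hF _, hL _, hR _, hB _, hT _]
  have d1 : ∀ x y, D (0, x, y) = φ (x, y) := fun x y => by simp [D]
  have d2 : ∀ x y, D (1, x, y) = F (x, y) := fun x y => by simp [D]
  have d3 : ∀ s y, D (s, 0, y) = L (s, y) := fun s y => by
    by_cases h0 : s = 0
    · rw [h0, d1, L0]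
    by_cases h1 : s = 1
    · rw [h1, d2, L1]
    simp [D, h0, h1]
  have d4 : ∀ s y, D (s, 1, y) = R (s, y) := fun s y => by
    by_cases h0 : s = 0
    · rw [h0, d1, R0]
    by_cases h1 : s = 1
    · rw [h1, d2, R1]
    simp [D, h0, h1]
  have d5 : ∀ s x, D (s, x, 0) = B (s, x) := fun s x => by
    by_cases h2 : x = 0
    · rw [h2, d3, LB]
    by_cases h3 : x = 1
    · rw [h3, d4, RB]
    by_cases h0 : s = 0
    · rw [h0, d1, B0]
    by_cases h1 : s = 1
    · rw [h1, d2, B1]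
    simp [D, h0, h1, h2, h3]
  have d6 : ∀ s x, D (s, x, 1) = T (s, x) := fun s x => by
    by_cases h2 : x = 0
    · rw [h2, d3, LT]
    by_cases h3 : x = 1
    · rw [h3, d4, RT]
    by_cases h0 : s = 0
    · rw [h0, d1, T0]
    by_cases h1 : s = 1
    · rw [h1, d2, T1]
    simp [D, h0, h1, h2, h3]
  obtain ⟨K, hK⟩ := cube_fill (U := U) (fun z => ⟨D z, hD z⟩)
    (Continuous.subtype_mk (by simp only [d1]; fun_prop) _) (Continuous.subtype_mk (by simp only [d2]; fun_prop) _)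
    (Continuous.subtype_mk (by simp only [d3]; fun_prop) _) (Continuous.subtype_mk (by simp only [d4]; fun_prop) _)
    (Continuous.subtype_mk (by simp only [d5]; fun_prop) _) (Continuous.subtype_mk (by simp only [d6]; fun_prop) _)
  refine ⟨⟨fun z => (K z : Q), by fun_prop⟩, fun z => ?_, fun z => ?_, fun s y => ?_, fun s y => ?_,
    fun s x => ?_, fun s x => ?_⟩ <;> rw [ContinuousMap.coe_mk, hK _ (by simp)]
  exacts [d1 _ _, d2 _ _, d3 _ _, d4 _ _, d5 _ _, d6 _ _]

end RepQuot

/-! ### Lifting squares up to homotopy -/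

namespace RepQuot

open Topology unitInterval

/-- The boundary of the unit square. -/
def bd : Set (I × I) := {z | z.1 = 0 ∨ z.1 = 1 ∨ z.2 = 0 ∨ z.2 = 1}

/-- The parametrization of the `i`-th of `N` equal subintervals, constant at `1` from `i = N` on. -/
noncomputable def cell (N i : ℕ) : C(I, I) :=
  ⟨fun s => Set.projIcc 0 1 zero_le_one ((i + s : ℝ) / N), continuous_projIcc.comp (by fun_prop)⟩

lemma cell_one (N i : ℕ) : cell N i 1 = cell N (i + 1) 0 := by simp [cell]

lemma cell_zero (N : ℕ) : cell N 0 0 = 0 := by simp [cell]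

lemma cell_of_le {N i : ℕ} (hN : 0 < N) (h : N ≤ i) (s : I) : cell N i s = 1 := by
  have hN' : (0 : ℝ) < N := by exact_mod_cast hN
  refine Set.projIcc_of_right_le zero_le_one ?_
  rw [le_div_iff₀ hN']
  have : (N : ℝ) ≤ i := by exact_mod_cast h
  linarith [s.2.1]

lemma cell_eq {N i : ℕ} (hN : 0 < N) {s x : I} (e : (x : ℝ) * N = i + s) : cell N i s = x := by
  have hN' : (0 : ℝ) < N := by exact_mod_cast hN
  change Set.projIcc 0 1 zero_le_one ((i + s : ℝ) / N) = x
  rw [← e, mul_div_cancel_right₀ _ hN'.ne', Set.projIcc_val]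

lemma dist_cell {N : ℕ} (i : ℕ) (hN : 0 < N) (s : I) : dist (cell N i s) (cell N i 0) ≤ 1 / N := by
  have hN' : (0 : ℝ) < N := by exact_mod_cast hN
  rw [Subtype.dist_eq, Real.dist_eq]
  refine (Set.abs_projIcc_sub_projIcc zero_le_one).trans ?_
  rw [← sub_div, abs_div, abs_of_pos hN']
  gcongr
  rw [show (i + s : ℝ) - (i + (0 : I)) = s by simp, abs_of_nonneg s.2.1]
  exact s.2.2

variable {G Y Q : Type*} [TopologicalSpace G] [One G] [TopologicalSpace Y] [TopologicalSpace Q]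
  {p : Y → Q} {act : G → Y → Y}

/-- The grid is subordinate to a cover by good sets once it is fine enough. -/
lemma exists_grid (f : C(I × I, Q)) (hf : ∀ z, Poly p act (f z)) :
    ∃ N : ℕ, 0 < N ∧ ∃ U : ℕ → ℕ → Set Q, (∀ i j, Good p act (U i j)) ∧
      ∀ i j s t, f (cell N i s, cell N j t) ∈ U i j := by
  choose V hV1 hV2 hV3 using fun z => hf z Set.univ isOpen_univ trivial
  obtain ⟨δ, hδ, h⟩ := lebesgue_number_lemma_of_metric (isCompact_univ (X := I × I))
    (c := fun z => f ⁻¹' V z) (fun z => (hV1 z).isOpen.preimage f.continuous)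
    (fun z _ => Set.mem_iUnion.2 ⟨z, hV2 z⟩)
  obtain ⟨n, hn⟩ := exists_nat_one_div_lt hδ
  have hN : 0 < n + 1 := n.succ_pos
  choose k hk using fun z => h z trivial
  refine ⟨n + 1, hN, fun i j => V (k (cell (n + 1) i 0, cell (n + 1) j 0)), fun i j => hV1 _,
    fun i j s t => hk _ ?_⟩
  rw [Metric.mem_ball, Prod.dist_eq]
  have hn' : (1 : ℝ) / ((n + 1 : ℕ) : ℝ) < δ := by exact_mod_cast hn
  exact max_lt ((dist_cell i hN s).trans_lt hn') ((dist_cell j hN t).trans_lt hn')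

/-- Lifting squares: if every point of `Q` on the square `f` has small good neighbourhoods, and the
boundary goes to a point with a single preimage `y₀`, then `f` is homotopic rel boundary to a square
that lifts to `Y`. -/
theorem lift_map_square (hp : Continuous p) (hps : Function.Surjective p)
    (hpa : ∀ g y, p (act g y) = p y) {y₀ : Y} (hy₀ : ∀ y, p y = p y₀ → y = y₀)
    (f : C(I × I, Q)) (hf : ∀ z, Poly p act (f z)) (hbd : ∀ z ∈ bd, f z = p y₀) :
    ∃ F : C(I × I, Y), (∀ z ∈ bd, F z = y₀) ∧ f.HomotopicRel ⟨fun z => p (F z), hp.comp F.continuous⟩ bd := by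
  obtain ⟨N, hN, U, hU, hfU⟩ := exists_grid (p := p) (act := act) f hf
  let c := cell N
  choose a ha using fun i j => hps (f (c i 0, c j 0))
  let γh : ℕ → ℕ → C(I, Q) := fun i j => ⟨fun s => f (c i s, c j 0), by fun_prop⟩
  let γw : ℕ → ℕ → C(I, Q) := fun i j => ⟨fun t => f (c i 0, c j t), by fun_prop⟩
  have hγh : ∀ i j s, γh i j s ∈ U i j ∩ U i (j - 1) := by
    intro i j s
    refine ⟨hfU i j s 0, ?_⟩
    cases j with
    | zero => exact hfU i 0 s 0
    | succ j =>
      have := hfU i j s 1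
      rwa [cell_one] at this
  have hγw : ∀ i j s, γw (i + 1) j s ∈ U (i + 1) j ∩ U i j := by
    intro i j s
    refine ⟨hfU (i + 1) j 0 s, ?_⟩
    have := hfU i j 1 s
    rwa [cell_one] at this
  -- horizontal edges
  choose h h0 h1 hH hc using fun i j => lift_path (act := act) hp hps hy₀
    ((hU i j).isOpen.inter (hU i (j - 1)).isOpen) (a i j) (a (i + 1) j) (γh i j) (hγh i j)
    (fun s => hf _) (ha i j) (by rw [ha, ← cell_one]; rfl)
  have hhU : ∀ i j s, p (h i j s) ∈ U i j ∩ U i (j - 1) := by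
    intro i j s
    obtain ⟨H, e1, e2, e3, e4, e5⟩ := hH i j
    have := e5 (1, s)
    rwa [e2] at this
  -- vertical edges, one column at a time
  have hcol : ∀ j, ∃ w : ℕ → C(I, Y), (∀ i, w i 0 = a i j ∧ w i 1 = a i (j + 1) ∧
      HomIn (U i j ∩ U (i - 1) j) (γw i j) (fun s => p (w i s)) ∧
      ((∀ s, γw i j s = p y₀) → ∀ s, w i s = y₀)) ∧ ∀ i, ∃ F : C(I × I, Y),
        (∀ x, F (x, 0) = h i j x) ∧ (∀ x, F (x, 1) = h i (j + 1) x) ∧ (∀ y, F (0, y) = w i y) ∧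
        (∀ y, F (1, y) = w (i + 1) y) ∧ ∀ z, p (F z) ∈ U i j := by
    intro j
    refine exists_seq_of_step (α := C(I, Y)) (fun i w => w 0 = a i j ∧ w 1 = a i (j + 1) ∧
      HomIn (U i j ∩ U (i - 1) j) (γw i j) (fun s => p (w s)) ∧
      ((∀ s, γw i j s = p y₀) → ∀ s, w s = y₀)) (fun i w w' => ∃ F : C(I × I, Y),
        (∀ x, F (x, 0) = h i j x) ∧ (∀ x, F (x, 1) = h i (j + 1) x) ∧ (∀ y, F (0, y) = w y) ∧
        (∀ y, F (1, y) = w' y) ∧ ∀ z, p (F z) ∈ U i j) ?_ ?_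
    · exact lift_path (act := act) hp hps hy₀ ((hU 0 j).isOpen.inter (hU (0 - 1) j).isOpen)
        (a 0 j) (a 0 (j + 1)) (γw 0 j) (fun s => ⟨hfU 0 j 0 s, hfU 0 j 0 s⟩) (fun s => hf _) (ha 0 j)
        (by rw [ha, ← cell_one]; rfl)
    · rintro i w ⟨w0, w1, wH, wc⟩
      have hwU : ∀ s, p (w s) ∈ U i j := by
        intro s
        obtain ⟨H, e1, e2, e3, e4, e5⟩ := wH
        have := (e5 (1, s)).1
        rwa [e2] at this
      obtain ⟨r, ⟨r0, r1, r2, r3⟩, hF⟩ := lift_square hp hps hpa hy₀ (hU i j)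
        ((hU (i + 1) j).isOpen.inter (hU i j).isOpen) Set.inter_subset_right w (h i j) (h i (j + 1)) hwU
        (fun s => (hhU i j s).1) (fun s => (hhU i (j + 1) s).2) (by rw [h0, w0]) (by rw [h0, w1])
        (γw (i + 1) j) (hγw i j) (fun s => hf _) (by rw [h1, ha]; rfl)
        (by rw [h1, ha, ← cell_one N j]; rfl)
      exact ⟨r, ⟨by rw [r0, h1], by rw [r1, h1], r2, r3⟩, hF⟩
  choose w hw hF using hcol
  choose F FB FT FL FR FU using hF
  obtain ⟨FF, hFF⟩ := glue_grid (fun i j => F j i) (fun i j t => by rw [FR, FL])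
    (fun i j s => by rw [FT, FB]) hN
  -- homotopies along the edges, constant wherever possible
  choose Hh hh1 hh2 hh3 hh4 hh5 hh6 using fun i j => (hH i j).exists_homotopy (p y₀)
  choose Hw hw1 hw2 hw3 hw4 hw5 hw6 using fun i j => (hw j i).2.2.1.exists_homotopy (p y₀)
  have hK : ∀ i j, ∃ K : C(I × I × I, Q), (∀ z, K (0, z) = f (c i z.1, c j z.2)) ∧
      (∀ z, K (1, z) = p (F j i z)) ∧
      (∀ s y, K (s, 0, y) = Hw i j (s, y)) ∧ (∀ s y, K (s, 1, y) = Hw (i + 1) j (s, y)) ∧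
      (∀ s x, K (s, x, 0) = Hh i j (s, x)) ∧ (∀ s x, K (s, x, 1) = Hh i (j + 1) (s, x)) := by
    intro i j
    have := (hU i j).contr
    refine cube_in (U := U i j) ⟨fun z => f (c i z.1, c j z.2), by fun_prop⟩
      ⟨fun z => p (F j i z), hp.comp (by fun_prop)⟩ _ _ _ _ (fun z => hfU i j _ _) (fun z => FU j i z)
      (fun z => (hw5 i j z).1) (fun z => (hw5 (i + 1) j z).2) (fun z => (hh5 i j z).1)
      (fun z => (hh5 i (j + 1) z).2) ?_ ?_ ?_ ?_ ?_ ?_ ?_ ?_ ?_ ?_ ?_ ?_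
    · intro y; rw [hw1]; rfl
    · intro y; rw [hw2]; simp only [ContinuousMap.coe_mk, FL]
    · intro y; rw [hw1]; simp only [ContinuousMap.coe_mk, γw, c, cell_one]
    · intro y; rw [hw2]; simp only [ContinuousMap.coe_mk, FR]
    · intro y; rw [hh1]; rfl
    · intro y; rw [hh2]; simp only [ContinuousMap.coe_mk, FB]
    · intro y; rw [hh1]; simp only [ContinuousMap.coe_mk, γh, c, cell_one]
    · intro y; rw [hh2]; simp only [ContinuousMap.coe_mk, FT]
    · intro s; rw [hw3, hh3]; rfl
    · intro s; rw [hw4, hh3]; simp only [ContinuousMap.coe_mk, γw, γh, c, cell_one]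
    · intro s; rw [hw3, hh4]; simp only [ContinuousMap.coe_mk, γw, γh, c, cell_one]
    · intro s; rw [hw4, hh4]; simp only [ContinuousMap.coe_mk, γw, γh, c, cell_one]
  choose K K0 K1 KL KR KB KT using hK
  obtain ⟨KK, hKK⟩ := glue_grid (X := C(I, Q))
    (fun i j => ((K i j).comp (ContinuousMap.prodSwap : C((I × I) × I, I × I × I))).curry)
    (fun i j t => by ext s; exact (KR i j s t).trans (KL (i + 1) j s t).symm)
    (fun i j s => by ext t; exact (KT i j t s).trans (KB i (j + 1) t s).symm) hN
  have hKK' : ∀ i < N, ∀ j < N, ∀ s t x y : I, (x : ℝ) * N = i + s → (y : ℝ) * N = j + t →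
      ∀ τ, KK (x, y) τ = K i j (τ, s, t) := by
    intro i hi j hj s t x y ex ey τ
    rw [hKK i hi j hj s t x y ex ey]; rfl
  have hN1 : ((1 : I) : ℝ) * N = (N - 1 : ℕ) + (1 : I) := by
    rw [Nat.cast_sub hN]; simp
  have hN0 : ((0 : I) : ℝ) * N = (0 : ℕ) + (0 : I) := by simp
  have hN2 : N - 1 + 1 = N := Nat.sub_add_cancel hN
  have hN3 : N - 1 < N := Nat.sub_lt hN one_pos
  -- the edges on the boundary of the square are constant
  have w0 : ∀ j s, γw 0 j s = p y₀ := fun j s => hbd _ (Or.inl (cell_zero N))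
  have wN : ∀ j s, γw N j s = p y₀ := fun j s => hbd _ (Or.inr (Or.inl (cell_of_le hN le_rfl _)))
  have hb0 : ∀ i s, γh i 0 s = p y₀ := fun i s => hbd _ (Or.inr (Or.inr (Or.inl (cell_zero N))))
  have hbN : ∀ i s, γh i N s = p y₀ := fun i s => hbd _ (Or.inr (Or.inr (Or.inr (cell_of_le hN le_rfl _))))
  refine ⟨FF, ?_, ⟨⟨⟨⟨fun z => KK z.2 z.1, by fun_prop⟩, ?_, ?_⟩, ?_⟩⟩⟩
  · rintro ⟨x, y⟩ hz
    obtain ⟨i, hi, s, ex⟩ := exists_cell hN x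
    obtain ⟨j, hj, t, ey⟩ := exists_cell hN y
    rcases hz with rfl | rfl | rfl | rfl
    · rw [hFF 0 hN j hj 0 t _ _ hN0 ey, FL, (hw j 0).2.2.2 (w0 j)]
    · rw [hFF (N - 1) hN3 j hj 1 t _ _ hN1 ey, FR, hN2, (hw j N).2.2.2 (wN j)]
    · rw [hFF i hi 0 hN s 0 _ _ ex hN0, FB, hc i 0 (hb0 i)]
    · rw [hFF i hi (N - 1) hN3 s 1 _ _ ex hN1, FT, hN2, hc i N (hbN i)]
  · rintro ⟨x, y⟩
    obtain ⟨i, hi, s, ex⟩ := exists_cell hN x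
    obtain ⟨j, hj, t, ey⟩ := exists_cell hN y
    change KK (x, y) 0 = _
    rw [hKK' i hi j hj s t x y ex ey, K0, cell_eq hN ex, cell_eq hN ey]
  · rintro ⟨x, y⟩
    obtain ⟨i, hi, s, ex⟩ := exists_cell hN x
    obtain ⟨j, hj, t, ey⟩ := exists_cell hN y
    change KK (x, y) 1 = p (FF (x, y))
    rw [hKK' i hi j hj s t x y ex ey, K1, hFF i hi j hj s t x y ex ey]
  · rintro τ ⟨x, y⟩ hz
    obtain ⟨i, hi, s, ex⟩ := exists_cell hN x
    obtain ⟨j, hj, t, ey⟩ := exists_cell hN y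
    rw [hbd _ hz]
    change KK (x, y) τ = _
    rcases hz with rfl | rfl | rfl | rfl
    · rw [hKK' 0 hN j hj 0 t _ _ hN0 ey, KL]
      exact hw6 0 j (w0 j) (fun s => by rw [(hw j 0).2.2.2 (w0 j)]) _
    · rw [hKK' (N - 1) hN3 j hj 1 t _ _ hN1 ey, KR, hN2]
      exact hw6 N j (wN j) (fun s => by rw [(hw j N).2.2.2 (wN j)]) _
    · rw [hKK' i hi 0 hN s 0 _ _ ex hN0, KB]
      exact hh6 i 0 (hb0 i) (fun s => by rw [hc i 0 (hb0 i)]) _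
    · rw [hKK' i hi (N - 1) hN3 s 1 _ _ ex hN1, KT, hN2]
      exact hh6 i N (hbN i) (fun s => by rw [hc i N (hbN i)]) _

end RepQuot

/-! ### Free homotopies of squares, base points and products -/

namespace RepQuot

open Topology unitInterval

/-- The property of being constant on the boundary of the square. -/
def BdConst {X : Type*} [TopologicalSpace X] (f : C(I × I, X)) : Prop := ∀ z ∈ bd, ∀ w ∈ bd, f z = f w

/-- A homotopy rel boundary is in particular constant on the boundary at each time. -/
lemma bdHom_of_rel {X : Type*} [TopologicalSpace X] {f g : C(I × I, X)} (h : f.HomotopicRel g bd)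
    (hf : BdConst f) : f.HomotopicWith g BdConst := by
  obtain ⟨H⟩ := h
  refine ⟨⟨H.toHomotopy, fun t z hz w hw => ?_⟩⟩
  have h1 := H.prop t z hz
  have h2 := H.prop t w hw
  exact h1.trans ((hf z hz w hw).trans h2.symm)

/-- If every value of `f` specializes to the corresponding value of `g`, then jumping from `f` to `g`
at the end of the unit interval is continuous. -/
lemma bdHom_of_specializes {X : Type*} [TopologicalSpace X] {f g : C(I × I, X)} (h : ∀ z, f z ⤳ g z)
    (hf : BdConst f) (hg : BdConst g) : f.HomotopicWith g BdConst := by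
  classical
  have hc : Continuous fun p : I × (I × I) => if p.1 = 1 then g p.2 else f p.2 := by
    refine continuous_def.2 fun V hV => ?_
    have : (fun p : I × (I × I) => if p.1 = 1 then g p.2 else f p.2) ⁻¹' V =
        ({p | p.1 ≠ 1} ∩ {p | f p.2 ∈ V}) ∪ {p | g p.2 ∈ V} := by
      ext ⟨t, z⟩
      have := (h z).mem_open hV
      by_cases ht : t = 1 <;> simp [ht]
      exact this
    rw [this]
    exact ((isOpen_ne_fun continuous_fst continuous_const).inter
      (hV.preimage (f.continuous.comp continuous_snd))).union
      (hV.preimage (g.continuous.comp continuous_snd))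
  refine ⟨⟨⟨⟨_, hc⟩, fun z => if_neg zero_ne_one, fun z => if_pos rfl⟩, fun t z hz w hw => ?_⟩⟩
  change (if t = 1 then g z else f z) = if t = 1 then g w else f w
  rw [hf z hz w hw, hg z hz w hw]

/-- Expansion of the square by the factor `1 + t` about its centre, one coordinate. -/
noncomputable def ex (t x : I) : ℝ := (1 + (t : ℝ)) * ((x : ℝ) - 1 / 2) + 1 / 2

/-- The expanded point, clamped to the square. -/
noncomputable def exc (t : I) (z : I × I) : I × I :=
  (Set.projIcc 0 1 zero_le_one (ex t z.1), Set.projIcc 0 1 zero_le_one (ex t z.2))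

/-- Twice the distance by which the expanded point leaves the square (negative inside). -/
noncomputable def exd (t : I) (z : I × I) : ℝ :=
  2 * max |ex t z.1 - 1 / 2| |ex t z.2 - 1 / 2| - 1

lemma continuous_exc : Continuous fun p : I × (I × I) => exc p.1 p.2 := by
  have := continuous_projIcc (a := (0 : ℝ)) (b := 1) (h := zero_le_one)
  unfold exc ex
  fun_prop

lemma continuous_exd : Continuous fun p : I × (I × I) => exd p.1 p.2 := by
  unfold exd ex
  fun_prop

lemma abs_sub_half (x : I) : |(x : ℝ) - 1 / 2| ≤ 1 / 2 :=
  abs_le.2 ⟨by linarith [x.2.1], by linarith [x.2.2]⟩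

lemma abs_ex (t x : I) : |ex t x - 1 / 2| = (1 + t) * |(x : ℝ) - 1 / 2| := by
  rw [ex, add_sub_cancel_right, abs_mul, abs_of_nonneg (by linarith [t.2.1])]

lemma exd_le (t : I) (z : I × I) : exd t z ≤ t := by
  have h1 := mul_le_mul_of_nonneg_left (abs_sub_half z.1) (by linarith [t.2.1] : 0 ≤ 1 + (t : ℝ))
  have h2 := mul_le_mul_of_nonneg_left (abs_sub_half z.2) (by linarith [t.2.1] : 0 ≤ 1 + (t : ℝ))
  rw [exd, abs_ex, abs_ex]
  have := max_le h1 h2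
  linarith

lemma abs_sub_half_of_bd {z : I × I} (hz : z ∈ bd) :
    max |(z.1 : ℝ) - 1 / 2| |(z.2 : ℝ) - 1 / 2| = 1 / 2 := by
  have h1 := abs_sub_half z.1
  have h2 := abs_sub_half z.2
  rcases hz with h | h | h | h
  · rw [max_eq_left] <;> rw [h] <;> norm_num [h2]
  · rw [max_eq_left] <;> rw [h] <;> norm_num [h2]
  · rw [max_eq_right] <;> rw [h] <;> norm_num [h1]
  · rw [max_eq_right] <;> rw [h] <;> norm_num [h1]

lemma exd_of_bd {t : I} {z : I × I} (hz : z ∈ bd) : exd t z = t := by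
  rw [exd, abs_ex, abs_ex, ← mul_max_of_nonneg _ _ (by linarith [t.2.1] : 0 ≤ 1 + (t : ℝ)),
    abs_sub_half_of_bd hz]
  ring

lemma proj_of_le_abs {u : ℝ} (h : 1 / 2 ≤ |u - 1 / 2|) :
    Set.projIcc (0 : ℝ) 1 zero_le_one u = 0 ∨ Set.projIcc (0 : ℝ) 1 zero_le_one u = 1 := by
  rcases le_abs.1 h with h | h
  · exact Or.inr (Set.projIcc_of_right_le _ (by linarith))
  · exact Or.inl (Set.projIcc_of_le_left _ (by linarith))

lemma exc_mem_bd {t : I} {z : I × I} (h : 0 ≤ exd t z) : exc t z ∈ bd := by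
  have h' : 1 / 2 ≤ max |ex t z.1 - 1 / 2| |ex t z.2 - 1 / 2| := by rw [exd] at h; linarith
  rcases le_max_iff.1 h' with h | h
  · rcases proj_of_le_abs h with h | h
    · exact Or.inl h
    · exact Or.inr (Or.inl h)
  · rcases proj_of_le_abs h with h | h
    · exact Or.inr (Or.inr (Or.inl h))
    · exact Or.inr (Or.inr (Or.inr h))

lemma exc_zero (z : I × I) : exc 0 z = z := by
  simp [exc, ex, Set.projIcc_val]

lemma exd_zero (z : I × I) : exd 0 z ≤ 0 := exd_le 0 z

/-- A free null-homotopy of a square, constant on the boundary at each time, yields a null-homotopy rel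
boundary. -/
lemma null_of_bdHom {X : Type*} [TopologicalSpace X] {f : C(I × I, X)} {x c : X} (hf : ∀ z ∈ bd, f z = x)
    (h : f.HomotopicWith (ContinuousMap.const _ c) BdConst) :
    f.HomotopicRel (ContinuousMap.const _ x) bd := by
  obtain ⟨H⟩ := h
  have hp := continuous_projIcc (a := (0 : ℝ)) (b := 1) (h := zero_le_one)
  -- the track of the boundary, and its value at the remaining points
  have hτ : ∀ t, ∀ z ∈ bd, ∀ w ∈ bd, H (t, z) = H (t, w) := fun t z hz w hw => H.prop t z hz w hw
  have h0 : ((0, 0) : I × I) ∈ bd := Or.inl rfl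
  let θ : I → I × I → I := fun t z => Set.projIcc 0 1 zero_le_one ((t : ℝ) - max (exd t z) 0)
  have hθ : Continuous fun p : I × (I × I) => θ p.1 p.2 := by
    have := continuous_exd
    exact hp.comp (by fun_prop)
  have hθbd : ∀ t, ∀ z ∈ bd, θ t z = 0 := by
    intro t z hz
    simp only [θ]
    rw [exd_of_bd hz, max_eq_left t.2.1, sub_self, Set.projIcc_left]; rfl
  let g : C(I × I, X) := ⟨fun z => H (θ 1 z, (0, 0)),
    H.continuous.comp ((hθ.comp (by fun_prop : Continuous fun z : I × I => ((1 : I), z))).prodMk continuous_const)⟩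
  have h1 : f.HomotopicRel g bd := by
    refine ⟨⟨⟨⟨fun p => H (θ p.1 p.2, exc p.1 p.2), H.continuous.comp (hθ.prodMk continuous_exc)⟩, ?_, ?_⟩, ?_⟩⟩
    · intro z
      have : θ 0 z = 0 := by
        simp only [θ]
        rw [max_eq_right (exd_zero z)]; simp
      change H (θ 0 z, exc 0 z) = f z
      rw [this, exc_zero, H.apply_zero]
    · intro z
      change H (θ 1 z, exc 1 z) = H (θ 1 z, (0, 0))
      rcases le_total 0 (exd 1 z) with h | h
      · exact hτ _ _ (exc_mem_bd h) _ h0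
      · have : θ 1 z = 1 := by
          simp only [θ]
          rw [max_eq_right h]; simp
        rw [this, H.apply_one, H.apply_one]; rfl
    · intro t z hz
      change H (θ t z, exc t z) = f z
      rw [hθbd t z hz, H.apply_zero, hf z hz, hf _ (exc_mem_bd (by rw [exd_of_bd hz]; exact t.2.1))]
  refine h1.trans ⟨⟨⟨⟨fun p => H (σ p.1 * θ 1 p.2, (0, 0)), ?_⟩, ?_, ?_⟩, ?_⟩⟩
  · have := hθ.comp (by fun_prop : Continuous fun p : I × (I × I) => ((1 : I), p.2))
    have h2 : Continuous fun p : I × (I × I) => θ 1 p.2 := this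
    exact H.continuous.comp (((continuous_symm.comp continuous_fst).mul h2).prodMk continuous_const)
  · intro z
    change H (σ 0 * θ 1 z, (0, 0)) = H (θ 1 z, (0, 0))
    rw [symm_zero, one_mul]
  · intro z
    change H (σ 1 * θ 1 z, (0, 0)) = x
    rw [symm_one, zero_mul, H.apply_zero, hf _ h0]
  · intro t z hz
    change H (σ t * θ 1 z, (0, 0)) = H (θ 1 z, (0, 0))
    rw [hθbd 1 z hz, mul_zero]

/-- Moving the base point along a path. -/
lemma exists_collar {X : Type*} [TopologicalSpace X] {f : C(I × I, X)} {x y : X} (hf : ∀ z ∈ bd, f z = x)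
    (α : Path x y) : ∃ f' : C(I × I, X), (∀ z ∈ bd, f' z = y) ∧ f.HomotopicWith f' BdConst := by
  classical
  have hp := continuous_projIcc (a := (0 : ℝ)) (b := 1) (h := zero_le_one)
  let M : C(I × (I × I), X) := ⟨fun p => if exd p.1 p.2 ≤ 0 then f (exc p.1 p.2) else
      α (Set.projIcc 0 1 zero_le_one (exd p.1 p.2)),
    Continuous.if_le (f.continuous.comp continuous_exc) (α.continuous.comp (hp.comp continuous_exd))
      continuous_exd continuous_const fun p h => by
        rw [hf _ (exc_mem_bd h.ge), h, Set.projIcc_left]; exact α.source.symm⟩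
  have hM : ∀ t z, M (t, z) = if exd t z ≤ 0 then f (exc t z) else
      α (Set.projIcc 0 1 zero_le_one (exd t z)) := fun _ _ => rfl
  have hbd : ∀ t, ∀ z ∈ bd, M (t, z) = α t := by
    intro t z hz
    rw [hM, exd_of_bd hz, Set.projIcc_val]
    split_ifs with h
    · obtain rfl : t = 0 := Subtype.ext (le_antisymm h t.2.1)
      rw [exc_zero, hf z hz, α.source]
    · rfl
  refine ⟨⟨fun z => M (1, z), by fun_prop⟩, fun z hz => ?_, ⟨⟨⟨M, fun z => ?_, fun z => rfl⟩, fun t z hz w hw => ?_⟩⟩⟩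
  · exact (hbd 1 z hz).trans α.target
  · change M (0, z) = f z
    rw [hM, if_pos (exd_zero z), exc_zero]
  · exact (hbd t z hz).trans (hbd t w hw).symm

/-- Null-homotopies for two factors give one for the pointwise product: in a topological monoid a
product of two squares is homotopic to their concatenation. -/
lemma null_mul {Y X : Type*} [TopologicalSpace Y] [Monoid Y] [ContinuousMul Y] [TopologicalSpace X]
    (Φ : C(Y, X)) {F₁ F₂ : C(I × I, Y)} (h1 : ∀ z ∈ bd, F₁ z = 1) (h2 : ∀ z ∈ bd, F₂ z = 1)
    (n1 : (Φ.comp F₁).HomotopicRel (ContinuousMap.const _ (Φ 1)) bd)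
    (n2 : (Φ.comp F₂).HomotopicRel (ContinuousMap.const _ (Φ 1)) bd) :
    (Φ.comp (F₁ * F₂)).HomotopicRel (ContinuousMap.const _ (Φ 1)) bd := by
  classical
  have hp := continuous_projIcc (a := (0 : ℝ)) (b := 1) (h := zero_le_one)
  let L : I → I → I := fun t x => Set.projIcc 0 1 zero_le_one ((1 + t) * x)
  let R : I → I → I := fun t x => Set.projIcc 0 1 zero_le_one ((1 + t) * x - t)
  have hL : Continuous fun p : I × I => L p.1 p.2 := hp.comp (by fun_prop)
  have hR : Continuous fun p : I × I => R p.1 p.2 := hp.comp (by fun_prop)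
  have hL0 : ∀ t, L t 0 = 0 := fun t => by simp [L]
  have hL1 : ∀ t, L t 1 = 1 := fun t => Set.projIcc_of_right_le _ (by simp [t.2.1])
  have hR0 : ∀ t, R t 0 = 0 := fun t => Set.projIcc_of_le_left _ (by simp [t.2.1])
  have hR1 : ∀ t, R t 1 = 1 := fun t => by simp [R]
  have hL2 : ∀ x : I, 1 / 2 ≤ (x : ℝ) → L 1 x = 1 := fun x hx =>
    Set.projIcc_of_right_le _ (by simp only [Set.Icc.coe_one]; linarith)
  have hR2 : ∀ x : I, (x : ℝ) ≤ 1 / 2 → R 1 x = 0 := fun x hx =>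
    Set.projIcc_of_le_left _ (by simp only [Set.Icc.coe_one]; linarith)
  have e0 : ∀ (F : C(I × I, Y)) (hF : ∀ z ∈ bd, F z = 1) y, F (0, y) = 1 := fun F hF y => hF _ (Or.inl rfl)
  have e1 : ∀ (F : C(I × I, Y)) (hF : ∀ z ∈ bd, F z = 1) y, F (1, y) = 1 := fun F hF y =>
    hF _ (Or.inr (Or.inl rfl))
  have c1 : Continuous fun p : I × (I × I) => F₁ (L p.1 p.2.1, p.2.2) * F₂ (R p.1 p.2.1, p.2.2) :=
    (F₁.continuous.comp ((hL.comp (by fun_prop : Continuous fun p : I × (I × I) => (p.1, p.2.1))).prodMk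
      (by fun_prop))).mul
    (F₂.continuous.comp ((hR.comp (by fun_prop : Continuous fun p : I × (I × I) => (p.1, p.2.1))).prodMk
      (by fun_prop)))
  let G : C(I × I, X) := ⟨fun z => Φ (F₁ (L 1 z.1, z.2) * F₂ (R 1 z.1, z.2)),
    Φ.continuous.comp (c1.comp (by fun_prop : Continuous fun z : I × I => ((1 : I), z)))⟩
  have s1 : (Φ.comp (F₁ * F₂)).HomotopicRel G bd := by
    refine ⟨⟨⟨⟨fun p => Φ (F₁ (L p.1 p.2.1, p.2.2) * F₂ (R p.1 p.2.1, p.2.2)), Φ.continuous.comp c1⟩,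
      fun z => ?_, fun z => rfl⟩, fun t z hz => ?_⟩⟩
    · have l : L 0 z.1 = z.1 := by simp [L, Set.projIcc_val]
      have r : R 0 z.1 = z.1 := by simp [R, Set.projIcc_val]
      simp only [l, r]; rfl
    · change Φ (F₁ (L t z.1, z.2) * F₂ (R t z.1, z.2)) = Φ (F₁ z * F₂ z)
      rw [h1 z hz, h2 z hz]
      obtain ⟨x, y⟩ := z
      rcases hz with h | h | h | h <;> simp only at h <;> subst h
      · simp only [hL0, hR0, e0 _ h1, e0 _ h2]
      · simp only [hL1, hR1, e1 _ h1, e1 _ h2]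
      · rw [h1 _ (Or.inr (Or.inr (Or.inl rfl))), h2 _ (Or.inr (Or.inr (Or.inl rfl)))]
      · rw [h1 _ (Or.inr (Or.inr (Or.inr rfl))), h2 _ (Or.inr (Or.inr (Or.inr rfl)))]
  obtain ⟨N1⟩ := n1
  obtain ⟨N2⟩ := n2
  have b1 : ∀ t, ∀ z ∈ bd, N1 (t, z) = Φ 1 := fun t z hz => N1.eq_snd t hz
  have b2 : ∀ t, ∀ z ∈ bd, N2 (t, z) = Φ 1 := fun t z hz => N2.eq_snd t hz
  refine s1.trans ⟨⟨⟨⟨fun p => if (p.2.1 : ℝ) ≤ 1 / 2 then N1 (p.1, (L 1 p.2.1, p.2.2)) else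
    N2 (p.1, (R 1 p.2.1, p.2.2)), ?_⟩, fun z => ?_, fun z => ?_⟩, fun t z hz => ?_⟩⟩
  · refine Continuous.if_le ?_ ?_ (by fun_prop) continuous_const fun p hx => ?_
    · exact N1.continuous.comp (continuous_fst.prodMk ((hL.comp
        (by fun_prop : Continuous fun p : I × (I × I) => ((1 : I), p.2.1))).prodMk (by fun_prop)))
    · exact N2.continuous.comp (continuous_fst.prodMk ((hR.comp
        (by fun_prop : Continuous fun p : I × (I × I) => ((1 : I), p.2.1))).prodMk (by fun_prop)))
    · rw [hL2 _ hx.ge, hR2 _ hx.le, b1 _ _ (Or.inr (Or.inl rfl)), b2 _ _ (Or.inl rfl)]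
  · change (if (z.1 : ℝ) ≤ 1 / 2 then N1 (0, (L 1 z.1, z.2)) else N2 (0, (R 1 z.1, z.2))) =
      Φ (F₁ (L 1 z.1, z.2) * F₂ (R 1 z.1, z.2))
    split_ifs with h
    · rw [N1.apply_zero, hR2 _ h, e0 _ h2, mul_one]; rfl
    · rw [N2.apply_zero, hL2 _ (not_le.1 h).le, e1 _ h1, one_mul]; rfl
  · change (if (z.1 : ℝ) ≤ 1 / 2 then N1 (1, (L 1 z.1, z.2)) else N2 (1, (R 1 z.1, z.2))) = Φ 1
    rw [N1.apply_one, N2.apply_one]; exact ite_self _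
  · change (if (z.1 : ℝ) ≤ 1 / 2 then N1 (t, (L 1 z.1, z.2)) else N2 (t, (R 1 z.1, z.2))) =
      Φ (F₁ (L 1 z.1, z.2) * F₂ (R 1 z.1, z.2))
    have l : (L 1 z.1, z.2) ∈ bd := by
      rcases hz with h | h | h | h
      · exact Or.inl (by rw [h, hL0])
      · exact Or.inr (Or.inl (by rw [h, hL1]))
      · exact Or.inr (Or.inr (Or.inl h))
      · exact Or.inr (Or.inr (Or.inr h))
    have r : (R 1 z.1, z.2) ∈ bd := by
      rcases hz with h | h | h | h
      · exact Or.inl (by rw [h, hR0])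
      · exact Or.inr (Or.inl (by rw [h, hR1]))
      · exact Or.inr (Or.inr (Or.inl h))
      · exact Or.inr (Or.inr (Or.inr h))
    rw [b1 _ _ l, b2 _ _ r, h1 _ l, h2 _ r, mul_one]
    exact ite_self _

end RepQuot

/-! ### Single matrices: degeneration to the diagonal -/

namespace RepQuot

open Matrix Topology unitInterval

variable {n r : ℕ}

/-- Every complex endomorphism is lower triangular in a suitable basis. -/
lemma exists_tri_basis (d : ℕ) : ∀ (V : Type) [AddCommGroup V] [Module ℂ V] [FiniteDimensional ℂ V]
    (_ : Module.finrank ℂ V = d) (f : V →ₗ[ℂ] V),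
    ∃ b : Module.Basis (Fin d) ℂ V, ∀ i j, i < j → b.repr (f (b j)) i = 0 := by
  induction d with
  | zero =>
    intro V _ _ _ h f
    exact ⟨Module.finBasisOfFinrankEq ℂ V h, fun i => i.elim0⟩
  | succ d ih =>
    intro V _ _ _ h f
    have : Nontrivial (Module.Dual ℂ V) := by
      apply Module.nontrivial_of_finrank_pos (R := ℂ)
      rw [Subspace.dual_finrank_eq, h]; omega
    obtain ⟨c, hc⟩ := Module.End.exists_eigenvalue (Module.Dual.transpose (R := ℂ) f)
    obtain ⟨φ, hφ⟩ := hc.exists_hasEigenvector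
    have hφ1 : ∀ v, φ (f v) = c * φ v := fun v => by
      have := LinearMap.congr_fun hφ.apply_eq_smul v
      exact this
    have hN : ∀ v ∈ LinearMap.ker φ, f v ∈ LinearMap.ker φ := fun v hv => by
      rw [LinearMap.mem_ker] at *
      rw [hφ1, hv, mul_zero]
    obtain ⟨y, hy⟩ : ∃ y, φ y ≠ 0 := by
      by_contra! h0
      exact hφ.2 (LinearMap.ext h0)
    have hdim : Module.finrank ℂ (LinearMap.ker φ) = d := by
      have := Module.Dual.finrank_ker_add_one_of_ne_zero hφ.2
      omega
    obtain ⟨b, hb⟩ := ih _ hdim (f.restrict hN)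
    refine ⟨Module.Basis.mkFinCons y b ?_ ?_, ?_⟩
    · intro c x hx h0
      have := congrArg φ h0
      rw [LinearMap.mem_ker] at hx
      simpa [hx, hy] using this
    · intro z
      refine ⟨-(φ z / φ y), ?_⟩
      rw [LinearMap.mem_ker, map_add, map_smul, smul_eq_mul]
      field_simp
      ring
    · set b' := Module.Basis.mkFinCons y b _ _ with hb'
      have hs : ∀ k, b' k.succ = b k := fun k => by simp [hb']
      intro i j hij
      obtain ⟨j, rfl⟩ := Fin.exists_succ_eq.2 (Fin.ne_zero_of_lt hij)
      have e1 : f (b' j.succ) = ∑ k, b.repr (f.restrict hN (b j)) k • b' k.succ := by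
        have := congrArg (Submodule.subtype _) (b.sum_repr (f.restrict hN (b j)))
        simp only [map_sum, map_smul, Submodule.subtype_apply] at this
        simp only [hs]
        rw [this]; rfl
      rw [e1, map_sum, Finsupp.finsetSum_apply]
      refine Finset.sum_eq_zero fun k _ => ?_
      rw [map_smul, Finsupp.smul_apply, b'.repr_self, Finsupp.single_apply]
      split_ifs with hk
      · subst hk
        rw [hb k j (Fin.succ_lt_succ_iff.1 hij), zero_smul]
      · simp

/-- Every invertible matrix is conjugate to a lower triangular one. -/
lemma exists_tri (A : GLn n) : ∃ h : GLn n, ∀ i j, i < j →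
    ((h * A * h⁻¹ : GLn n) : Matrix (Fin n) (Fin n) ℂ) i j = 0 := by
  obtain ⟨b, hb⟩ := exists_tri_basis n (Fin n → ℂ) (by simp) (Matrix.toLin' A.val)
  let e := Pi.basisFun ℂ (Fin n)
  let h : GLn n := ⟨b.toMatrix e, e.toMatrix b, b.toMatrix_mul_toMatrix_flip e,
    e.toMatrix_mul_toMatrix_flip b⟩
  refine ⟨h, fun i j hij => ?_⟩
  have : ((h * A * h⁻¹ : GLn n) : Matrix (Fin n) (Fin n) ℂ) =
      LinearMap.toMatrix b b (Matrix.toLin' A.val) := by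
    rw [← basis_toMatrix_mul_linearMap_toMatrix_mul_basis_toMatrix b e b e]
    rw [LinearMap.toMatrix_eq_toMatrix', LinearMap.toMatrix'_toLin']
    rfl
  rw [this, LinearMap.toMatrix_apply]
  exact hb i j hij

/-- A continuous self-map moving every point to a specialization, with values the classes of
balanced tuples, takes the same value at points related by specialization. -/
lemma ss_eq_of_specializes {ss : C(RepQuotGL n r, RepQuotGL n r)}
    (hss : ∀ q, ∃ y, Bal (toE y) ∧ ss q = proj y) {q q' : RepQuotGL n r} (h : q ⤳ q') :
    ss q = ss q' := by
  obtain ⟨y, hy, e⟩ := hss q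
  obtain ⟨y', hy', e'⟩ := hss q'
  have hs := h.map ss.continuous
  rw [e, e'] at hs ⊢
  by_contra hne
  obtain ⟨W, W', hW, hW', hWi, hWi', hyW, hyW', hd⟩ := separation hy hy'
    fun g hg => hne (proj_eq.2 ⟨g, hg⟩)
  obtain ⟨v, hv, hvy⟩ := hs.mem_open (isOpenQuotientMap_proj.isOpenMap _ hW') ⟨y', hyW', rfl⟩
  obtain ⟨g, hg⟩ := proj_eq.1 hvy
  exact Set.disjoint_left.1 hd hyW (hg ▸ hWi' g v hv)

lemma act_mulSingle (j : Fin r) (g A : GLn n) :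
    act g (Pi.mulSingle j A : Rep n r) = Pi.mulSingle j (g * A * g⁻¹) := by
  funext i
  by_cases h : i = j
  · subst h; simp [act]
  · simp [act, Pi.mulSingle_eq_of_ne h]

lemma continuous_mulSingle_GL (j : Fin r) :
    Continuous fun A : GLn n => (Pi.mulSingle j A : Rep n r) :=
  continuous_const.update j continuous_id

lemma proj_conj (j : Fin r) (g A : GLn n) :
    proj (Pi.mulSingle j (g * A * g⁻¹) : Rep n r) = proj (Pi.mulSingle j A) := by
  rw [← act_mulSingle, proj_act]

lemma charpoly_conj (g A : GLn n) :
    ((g * A * g⁻¹ : GLn n) : Matrix (Fin n) (Fin n) ℂ).charpoly = A.val.charpoly :=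
  by
  rw [Units.val_mul, Units.val_mul, coe_units_inv]
  exact charpoly_units_conj g A.val

/-- A lower triangular matrix degenerates to its diagonal within its conjugacy class. -/
lemma tri_specializes (j : Fin r) (T : GLn n) (hT : ∀ i k, i < k → T.val i k = 0) :
    IsUnit (diagonal T.val.diag) ∧
    proj (Pi.mulSingle j T : Rep n r) ⤳ proj (Pi.mulSingle j (toG (diagonal T.val.diag))) := by
  let M : ℂ → Matrix (Fin n) (Fin n) ℂ := fun δ => Matrix.of fun a b =>
    if b ≤ a then T.val a b * δ ^ ((a : ℕ) - b) else 0
  have hlow : ∀ δ, (M δ)ᵀ.IsUpperTriangular := fun δ a b hab => by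
    simp only [M, transpose_apply, of_apply]
    exact if_neg (not_le.2 hab)
  have hdet : ∀ δ, (M δ).det = ∏ i, T.val i i := fun δ => by
    rw [← det_transpose, det_of_isUpperTriangular (hlow δ)]
    simp [M]
  have hM1 : M 1 = T.val := by
    ext a b
    simp only [M, of_apply, one_pow, mul_one]
    split_ifs with h
    · rfl
    · exact (hT a b (not_le.1 h)).symm
  have hM0 : M 0 = diagonal T.val.diag := by
    ext a b
    simp only [M, of_apply, diagonal_apply, diag_apply]
    rcases lt_trichotomy a b with h | h | h
    · rw [if_neg (not_le.2 h), if_neg h.ne]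
    · subst h; simp
    · rw [if_pos h.le, if_neg h.ne', zero_pow (by have : b.val < a.val := h; omega), mul_zero]
  have hu : ∀ δ, IsUnit (M δ) := fun δ => by
    rw [isUnit_iff_isUnit_det, hdet, ← hdet 1, hM1, ← isUnit_iff_isUnit_det]
    exact T.isUnit
  have hMc : Continuous M := by
    refine continuous_matrix fun a b => ?_
    simp only [M, of_apply]
    split_ifs
    · fun_prop
    · fun_prop
  have hc : Continuous fun δ => toG (M δ) :=
    continuousOn_toG.comp_continuous hMc hu
  have hconj : ∀ δ ≠ 0, ∃ g : GLn n, toG (M δ) = g * T * g⁻¹ := by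
    intro δ hδ
    let D : Matrix (Fin n) (Fin n) ℂ := diagonal fun a : Fin n => δ ^ (a : ℕ)
    have hD : IsUnit D := by
      rw [isUnit_iff_isUnit_det, det_diagonal, isUnit_iff_ne_zero]
      exact Finset.prod_ne_zero_iff.2 fun a _ => pow_ne_zero _ hδ
    refine ⟨toG D, ?_⟩
    rw [eq_mul_inv_iff_mul_eq]
    refine Units.ext ?_
    rw [Units.val_mul, Units.val_mul, toG_val hD, toG_val (hu δ)]
    ext a b
    simp only [D, mul_diagonal, diagonal_mul, M, of_apply]
    split_ifs with h
    · rw [mul_assoc, ← pow_add, Nat.sub_add_cancel h, mul_comm]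
    · rw [hT a b (not_le.1 h)]; simp
  rw [← hM0]
  refine ⟨hu 0, specializes_iff_forall_open.2 fun W hW h0 => ?_⟩
  have hopen : IsOpen {δ | proj (Pi.mulSingle j (toG (M δ)) : Rep n r) ∈ W} :=
    hW.preimage (continuous_proj.comp ((continuous_mulSingle_GL j).comp hc))
  obtain ⟨δ, hδ, hδ0⟩ := (dense_compl_singleton (0 : ℂ)).inter_open_nonempty _ hopen ⟨0, h0⟩
  obtain ⟨g, hg⟩ := hconj δ hδ0
  rw [Set.mem_ofPred_eq, hg, proj_conj] at hδ
  exact hδ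

/-- Every conjugacy class degenerates to the class of a diagonal matrix with the same
characteristic polynomial. -/
lemma exists_diag_specializes (j : Fin r) (A : GLn n) : ∃ d : Fin n → ℂ,
    IsUnit (diagonal d) ∧ A.val.charpoly = ∏ i, (Polynomial.X - Polynomial.C (d i)) ∧
    proj (Pi.mulSingle j A : Rep n r) ⤳ proj (Pi.mulSingle j (toG (diagonal d))) := by
  obtain ⟨h, hT⟩ := exists_tri A
  obtain ⟨h1, h2⟩ := tri_specializes (r := r) j _ hT
  refine ⟨_, h1, ?_, by rwa [proj_conj] at h2⟩
  rw [← charpoly_conj h A, ← charpoly_transpose, charpoly_of_isUpperTriangular]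
  · rfl
  · exact fun a b hab => hT b a hab

lemma proj_diag_perm (j : Fin r) {d : Fin n → ℂ} (τ : Equiv.Perm (Fin n))
    (hd : IsUnit (diagonal d)) (hd' : IsUnit (diagonal (d ∘ τ))) :
    proj (Pi.mulSingle j (toG (diagonal (d ∘ τ))) : Rep n r) =
      proj (Pi.mulSingle j (toG (diagonal d))) := by
  have hP : IsUnit (τ.permMatrix ℂ) := by
    rw [isUnit_iff_isUnit_det, det_permutation]
    rcases Int.units_eq_one_or (Equiv.Perm.sign τ) with h | h <;> rw [h] <;> simp
  have : toG (diagonal (d ∘ τ)) = toG (τ.permMatrix ℂ) * toG (diagonal d) * (toG (τ.permMatrix ℂ))⁻¹ := by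
    rw [eq_mul_inv_iff_mul_eq]
    refine Units.ext ?_
    rw [Units.val_mul, Units.val_mul, toG_val hP, toG_val hd, toG_val hd']
    ext a b
    simp only [mul_diagonal, diagonal_mul, Equiv.Perm.permMatrix, PEquiv.toMatrix_apply,
      Equiv.toPEquiv_apply, Option.mem_some_iff, Function.comp]
    split_ifs with h
    · subst h; ring
    · ring
  rw [this, proj_conj]

lemma exists_perm_of_map_eq {d d' : Fin n → ℂ}
    (h : Finset.univ.val.map d = Finset.univ.val.map d') : ∃ τ : Equiv.Perm (Fin n), d = d' ∘ τ := by
  classical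
  have hc : ∀ c, Nonempty ({i // d i = c} ≃ {i // d' i = c}) := fun c => by
    refine ⟨Fintype.equivOfCardEq ?_⟩
    have := congrArg (Multiset.count c) h
    rw [Multiset.count_map, Multiset.count_map] at this
    rw [Fintype.card_subtype, Fintype.card_subtype]
    simpa [Finset.card, eq_comm] using this
  exact ⟨Equiv.ofFiberEquiv fun c => (hc c).some,
    funext fun i => (Equiv.ofFiberEquiv_map (fun c => (hc c).some) i).symm⟩

/-- The semisimplification of the class of a single matrix depends only on its characteristic
polynomial. -/
lemma ss_eq_of_charpoly {ss : C(RepQuotGL n r, RepQuotGL n r)}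
    (hss : ∀ q, ∃ y, Bal (toE y) ∧ ss q = proj y) (j : Fin r) {A B : GLn n}
    (h : A.val.charpoly = B.val.charpoly) :
    ss (proj (Pi.mulSingle j A)) = ss (proj (Pi.mulSingle j B)) := by
  obtain ⟨d, hd, hdA, hdS⟩ := exists_diag_specializes (r := r) j A
  obtain ⟨d', hd', hdB, hdS'⟩ := exists_diag_specializes (r := r) j B
  rw [ss_eq_of_specializes hss hdS, ss_eq_of_specializes hss hdS']
  rw [hdA, hdB] at h
  have hm : (Finset.univ.val.map d) = Finset.univ.val.map d' := by
    have := congrArg Polynomial.roots h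
    rwa [Polynomial.roots_prod _ _ (Finset.prod_ne_zero_iff.2 fun i _ => Polynomial.X_sub_C_ne_zero _),
      Polynomial.roots_prod _ _ (Finset.prod_ne_zero_iff.2 fun i _ => Polynomial.X_sub_C_ne_zero _),
      Multiset.bind_congr fun i _ => Polynomial.roots_X_sub_C (d i),
      Multiset.bind_congr fun i _ => Polynomial.roots_X_sub_C (d' i),
      Multiset.bind_singleton, Multiset.bind_singleton] at this
  obtain ⟨τ, hτ⟩ := exists_perm_of_map_eq hm
  subst hτ
  rw [proj_diag_perm j τ hd' hd]

end RepQuot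

/-! ### Companion matrices and null-homotopies -/

namespace RepQuot

open Matrix Topology unitInterval

variable {n r : ℕ}

/-- The companion matrix of `X ^ n + ∑ i, c i * X ^ i`. -/
def comp (c : Fin n → ℂ) : Matrix (Fin n) (Fin n) ℂ := Matrix.of fun i j =>
  if (j : ℕ) + 1 = n then - c i else if (i : ℕ) = j + 1 then 1 else 0

lemma continuous_comp : Continuous (comp : (Fin n → ℂ) → _) := by
  refine continuous_matrix fun i j => ?_
  simp only [comp, of_apply]
  split_ifs
  · exact (continuous_apply i).neg
  · exact continuous_const
  · exact continuous_const

/-- The companion matrix is the matrix of multiplication by the root in `ℂ[X]/(p)`. -/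
lemma comp_charpoly_of_monic {p : Polynomial ℂ} (hp : p.Monic) (hd : p.natDegree = n) :
    (comp fun i : Fin n => p.coeff i).charpoly = p := by
  subst hd
  have h0 : p ≠ 0 := hp.ne_zero
  let pb := AdjoinRoot.powerBasis' hp
  have hm : minpoly ℂ (AdjoinRoot.root p) = p := by
    rw [AdjoinRoot.minpoly_root h0, hp.leadingCoeff]; simp
  have h1 := charpoly_leftMulMatrix pb
  rw [pb.leftMulMatrix, PowerBasis.minpolyGen_eq] at h1
  have h2 : minpoly ℂ pb.gen = p := hm
  rw [h2] at h1
  exact h1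

lemma comp_charpoly (B : Matrix (Fin n) (Fin n) ℂ) :
    (comp fun i : Fin n => B.charpoly.coeff i).charpoly = B.charpoly :=
  comp_charpoly_of_monic (charpoly_monic B) (by rw [charpoly_natDegree_eq_dim, Fintype.card_fin])

lemma comp_isUnit (hn : 0 < n) (c : Fin n → ℂ) (h : c ⟨0, hn⟩ ≠ 0) : IsUnit (comp c) := by
  let q : Polynomial ℂ := ∑ i : Fin n, Polynomial.C (c i) * Polynomial.X ^ (i : ℕ)
  have hq : q.degree < n := Polynomial.degree_sum_fin_lt c
  have hqc : ∀ i : Fin n, q.coeff i = c i := fun i => by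
    simp [q, Polynomial.coeff_X_pow, Fin.val_inj]
  have hp := Polynomial.monic_X_pow_add hq
  have hd : (Polynomial.X ^ n + q).natDegree = n := by
    apply Polynomial.natDegree_eq_of_degree_eq_some
    rw [Polynomial.degree_add_eq_left_of_degree_lt] <;> simp [hq]
  have hc : (fun i : Fin n => (Polynomial.X ^ n + q).coeff i) = c := by
    funext i
    rw [Polynomial.coeff_add, hqc, Polynomial.coeff_X_pow, if_neg (by omega), zero_add]
  have := comp_charpoly_of_monic hp hd
  rw [hc] at this
  rw [isUnit_iff_isUnit_det, det_eq_sign_charpoly_coeff, this, isUnit_iff_ne_zero]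
  have h0 := congrFun hc ⟨0, hn⟩
  simp only at h0
  rw [h0]
  exact mul_ne_zero (pow_ne_zero _ (by norm_num)) h

lemma coeff_zero_ne (A : GLn n) : A.val.charpoly.coeff 0 ≠ 0 := by
  intro h
  have := (isUnit_iff_isUnit_det _).1 A.isUnit
  rw [det_eq_sign_charpoly_coeff, h, mul_zero] at this
  exact not_isUnit_zero this

lemma continuous_coeff (k : ℕ) :
    Continuous fun A : Matrix (Fin n) (Fin n) ℂ => A.charpoly.coeff k := by
  have : (fun A : Matrix (Fin n) (Fin n) ℂ => A.charpoly.coeff k) = fun A =>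
      MvPolynomial.eval (fun ij : Fin n × Fin n => A ij.1 ij.2)
        ((charpoly.univ ℂ (Fin n)).coeff k) := by
    funext A
    have := charpoly.univ_coeff_eval₂Hom (R := ℂ) (Fin n) (f := RingHom.id ℂ)
      (fun ij : Fin n × Fin n => A ij.1 ij.2) k
    exact this.symm
  rw [this]
  refine (MvPolynomial.continuous_eval _).comp ?_
  exact continuous_pi fun ij => continuous_id.matrix_elem _ _

/-- A continuous logarithm that vanishes on the boundary, by lifting along the covering map `exp`. -/
lemma exists_log (g : C(I × I, ℂ)) (hg : ∀ z, g z ≠ 0) (hbd : ∀ z ∈ bd, g z = 1) :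
    ∃ ℓ : C(I × I, ℂ), (∀ z, Complex.exp (ℓ z) = g z) ∧ ∀ z ∈ bd, ℓ z = 0 := by
  have h00 : g (0, 0) = 1 := hbd _ (Or.inl rfl)
  have : ContractibleSpace I := (convex_Icc (0 : ℝ) 1).contractibleSpace ⟨0, by simp⟩
  have : LocallyPathConnectedSpace I := (convex_Icc (0 : ℝ) 1).locallyPathConnectedSpace
  obtain ⟨ℓ, ⟨h0, hℓ⟩, -⟩ := Complex.isCoveringMapOn_exp.existsUnique_continuousMap_lifts g
    (a₀ := (0, 0)) (e₀ := 0) (by rw [h00, Complex.exp_zero]) (fun z => hg z)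
  have hℓ' : ∀ z, Complex.exp (ℓ z) = g z := fun z => congrFun hℓ z
  -- a lift that vanishes at one end of a side vanishes on the whole side
  have side : ∀ γ : C(I, I × I), (∀ t, γ t ∈ bd) → ∀ t₀, ℓ (γ t₀) = 0 → ∀ t, ℓ (γ t) = 0 := by
    intro γ hγ t₀ h0 t
    have := Complex.isCoveringMap_exp.eq_of_comp_eq (g₁ := fun t => ℓ (γ t)) (g₂ := fun _ : I => 0)
      (by fun_prop) (by fun_prop) (by
        funext t
        refine Subtype.ext ?_
        simp only [Function.comp, hℓ', Complex.exp_zero]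
        exact hbd _ (hγ t)) t₀ h0
    exact congrFun this t
  have s1 := side ⟨fun t => (0, t), by fun_prop⟩ (fun t => Or.inl rfl) 0 h0
  have s2 := side ⟨fun t => (t, 0), by fun_prop⟩ (fun t => Or.inr (Or.inr (Or.inl rfl))) 0 h0
  have s3 := side ⟨fun t => (1, t), by fun_prop⟩ (fun t => Or.inr (Or.inl rfl)) 0 (s2 1)
  have s4 := side ⟨fun t => (t, 1), by fun_prop⟩ (fun t => Or.inr (Or.inr (Or.inr rfl))) 0 (s1 1)
  refine ⟨ℓ, hℓ', ?_⟩
  rintro ⟨a, b⟩ (h | h | h | h) <;> dsimp only at h <;> subst h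
  · exact s1 b
  · exact s3 b
  · exact s2 a
  · exact s4 a

/-- A square of tuples that is trivial on the boundary and in all coordinates but one becomes
null-homotopic after semisimplification. -/
lemma single_null (hn : 0 < n) {ss : C(RepQuotGL n r, RepQuotGL n r)}
    (hss : ∀ q, ∃ y, Bal (toE y) ∧ ss q = proj y) (Φ : C(Rep n r, RepQuotGL n r))
    (hΦ : ∀ A, Φ A = ss (proj A)) (j : Fin r) (F : C(I × I, GLn n)) (hF : ∀ z ∈ bd, F z = 1) :
    (⟨fun z => Φ (Pi.mulSingle j (F z)),
      Φ.continuous.comp ((continuous_mulSingle_GL j).comp F.continuous)⟩ :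
        C(I × I, RepQuotGL n r)).HomotopicRel (ContinuousMap.const _ (Φ 1)) bd := by
  let k (A : GLn n) (i : ℕ) : ℂ := A.val.charpoly.coeff i
  have hk : ∀ i, Continuous fun z => k (F z) i := fun i =>
    (continuous_coeff i).comp (Units.continuous_val.comp F.continuous)
  obtain ⟨ℓ, hℓ, hℓ0⟩ := exists_log ⟨fun z => k (F z) 0 / k 1 0, (hk 0).div_const _⟩
    (fun z => div_ne_zero (coeff_zero_ne _) (coeff_zero_ne _))
    (fun z hz => by
      simp only [ContinuousMap.coe_mk, hF z hz]
      exact div_self (coeff_zero_ne 1))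
  let c (p : I × (I × I)) (i : Fin n) : ℂ := if (i : ℕ) = 0 then
    k 1 0 * Complex.exp ((1 - ((p.1 : ℝ) : ℂ)) * ℓ p.2) else
    (1 - ((p.1 : ℝ) : ℂ)) * k (F p.2) i + ((p.1 : ℝ) : ℂ) * k 1 i
  have hcc : Continuous c := by
    refine continuous_pi fun i => ?_
    simp only [c]
    have hki : Continuous fun p : I × (I × I) => k (F p.2) i := (hk i).comp continuous_snd
    have ht : Continuous fun p : I × (I × I) => ((p.1 : ℝ) : ℂ) := by fun_prop
    split_ifs
    · fun_prop
    · exact ((continuous_const.sub ht).mul hki).add (ht.mul continuous_const)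
  have hcu : ∀ p, IsUnit (comp (c p)) := fun p => by
    refine comp_isUnit hn _ ?_
    simp only [c, if_true]
    exact mul_ne_zero (coeff_zero_ne 1) (Complex.exp_ne_zero _)
  have key : ∀ p (B : GLn n), (∀ i : Fin n, c p i = k B i) →
      Φ (Pi.mulSingle j (toG (comp (c p)))) = Φ (Pi.mulSingle j B) := fun p B h => by
    rw [hΦ, hΦ]
    refine ss_eq_of_charpoly hss j ?_
    rw [toG_val (hcu p), funext h]
    exact comp_charpoly B.val
  have hc0 : ∀ z (i : Fin n), c (0, z) i = k (F z) i := fun z i => by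
    simp only [c]
    split_ifs with h
    · have := hℓ z
      simp only [ContinuousMap.coe_mk] at this
      simp only [Set.Icc.coe_zero, Complex.ofReal_zero, sub_zero, one_mul, this, h]
      exact mul_div_cancel₀ _ (coeff_zero_ne 1)
    · simp
  have hc1 : ∀ z (i : Fin n), c (1, z) i = k 1 i := fun z i => by
    simp only [c]
    split_ifs with h <;> simp [h]
  have hcb : ∀ t, ∀ z ∈ bd, ∀ i : Fin n, c (t, z) i = k 1 i := fun t z hz i => by
    simp only [c]
    split_ifs with h
    · simp [hℓ0 z hz, h]
    · rw [hF z hz]; ring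
  have h1 : Φ (Pi.mulSingle j (1 : GLn n)) = Φ 1 := by rw [Pi.mulSingle_one]
  refine ⟨⟨⟨⟨fun p => Φ (Pi.mulSingle j (toG (comp (c p)))), ?_⟩, ?_, ?_⟩, ?_⟩⟩
  · exact Φ.continuous.comp ((continuous_mulSingle_GL j).comp
      (continuousOn_toG.comp_continuous (continuous_comp.comp hcc) hcu))
  · exact fun z => key _ _ (hc0 z)
  · exact fun z => (key _ _ (hc1 z)).trans h1
  · intro t z hz
    exact (key _ _ (hcb t z hz)).trans (by simp only [ContinuousMap.coe_mk, hF z hz])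

/-- Squares of tuples with trivial boundary become null-homotopic after semisimplification. -/
lemma tuple_null (hn : 0 < n) {ss : C(RepQuotGL n r, RepQuotGL n r)}
    (hss : ∀ q, ∃ y, Bal (toE y) ∧ ss q = proj y) (Φ : C(Rep n r, RepQuotGL n r))
    (hΦ : ∀ A, Φ A = ss (proj A)) (F : C(I × I, Rep n r)) (hF : ∀ z ∈ bd, F z = 1) :
    (Φ.comp F).HomotopicRel (ContinuousMap.const _ (Φ 1)) bd := by
  have main : ∀ (s : Finset (Fin r)) (F : C(I × I, Rep n r)), (∀ z ∈ bd, F z = 1) →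
      (∀ z, ∀ i ∉ s, F z i = 1) →
      (Φ.comp F).HomotopicRel (ContinuousMap.const _ (Φ 1)) bd := by
    intro s
    induction s using Finset.induction_on with
    | empty =>
      intro F _ h
      have : F = ContinuousMap.const _ 1 := by
        ext1 z; funext i; exact h z i (Finset.notMem_empty i)
      subst this
      exact ContinuousMap.HomotopicRel.refl _
    | insert j s hj ih =>
      intro F hF h
      have hFj : Continuous fun z => F z j := (continuous_apply j).comp F.continuous
      let F₁ : C(I × I, Rep n r) := ⟨fun z => Function.update (F z) j 1,
        F.continuous.update j continuous_const⟩
      let F₂ : C(I × I, Rep n r) := ⟨fun z => Pi.mulSingle j (F z j),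
        (continuous_mulSingle_GL j).comp hFj⟩
      have e : F = F₁ * F₂ := by
        ext1 z
        funext i
        by_cases hi : i = j
        · subst hi; simp [F₁, F₂]
        · simp [F₁, F₂, hi]
      have b1 : ∀ z ∈ bd, F₁ z = 1 := fun z hz => by
        simp only [F₁, ContinuousMap.coe_mk, hF z hz]
        exact Function.update_eq_self j (1 : Rep n r)
      have b2 : ∀ z ∈ bd, F₂ z = 1 := fun z hz => by
        simp only [F₂, ContinuousMap.coe_mk, hF z hz]
        exact Pi.mulSingle_one j
      rw [e]
      refine null_mul Φ b1 b2 (ih F₁ b1 fun z i hi => ?_)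
        (single_null hn hss Φ hΦ j ⟨fun z => F z j, hFj⟩ fun z hz => by
          simp only [ContinuousMap.coe_mk, hF z hz]; rfl)
      by_cases hij : i = j
      · subst hij; simp [F₁]
      · simp only [F₁, ContinuousMap.coe_mk, Function.update_of_ne hij]
        exact h z i (by simp [hij, hi])
  exact main Finset.univ F hF fun z i hi => absurd (Finset.mem_univ i) hi

end RepQuot

/-! ### Triviality of the second homotopy group -/

namespace RepQuot

open Topology unitInterval

variable {n r : ℕ}

/-- The quotient is path connected, because `GL_n(ℂ)` is. -/
lemma exists_path (q : RepQuotGL n r) : Nonempty (Path q (proj 1)) := by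
  obtain ⟨A, rfl⟩ := proj_surj q
  have γ i : Path (1 : GLn n) (A i) := (gl_path (A i)).some
  let Γ : Path (1 : Rep n r) A := ⟨⟨fun t i => γ i t, by fun_prop⟩, by funext i; simp, by funext i; simp⟩
  exact ⟨(Γ.map continuous_proj).symm⟩

lemma bdConst_of_eq {X : Type*} [TopologicalSpace X] {f : C(I × I, X)} {x : X}
    (h : ∀ z ∈ bd, f z = x) : BdConst f := fun z hz w hw => (h z hz).trans (h w hw).symm

/-- Squares in the quotient with constant boundary are null-homotopic relative to the boundary. -/
theorem square_null (hn : 0 < n) {x : RepQuotGL n r} (f : C(I × I, RepQuotGL n r))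
    (hf : ∀ z ∈ bd, f z = x) : f.HomotopicRel (ContinuousMap.const _ x) bd := by
  obtain ⟨ss, hs1, hs2, hs3⟩ := exists_semisimplification (n := n) (r := r)
  obtain ⟨α⟩ := exists_path x
  obtain ⟨f', hf', h1⟩ := exists_collar hf α
  have hb2 : ∀ z ∈ bd, (ss.comp f') z = proj 1 := fun z hz => by
    rw [ContinuousMap.comp_apply, hf' z hz, hs3]
  have h2 : f'.HomotopicWith (ss.comp f') BdConst :=
    bdHom_of_specializes (fun z => hs1 _) (bdConst_of_eq hf') (bdConst_of_eq hb2)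
  obtain ⟨F, hF, h3⟩ := lift_map_square (p := (proj : Rep n r → RepQuotGL n r)) (act := act)
    continuous_proj proj_surj proj_act (y₀ := 1) (fun A h => eq_one_of_proj h) (ss.comp f')
    (fun z => by
      obtain ⟨y, hy, e⟩ := hs2 (f' z)
      rw [ContinuousMap.comp_apply, e]
      exact poly_of_bal hy) hb2
  have h3' := bdHom_of_rel h3 (bdConst_of_eq hb2)
  let Φ : C(Rep n r, RepQuotGL n r) := ss.comp ⟨proj, continuous_proj⟩
  have hb3 : ∀ z ∈ bd, proj (F z) = proj (1 : Rep n r) := fun z hz => by rw [hF z hz]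
  have hb4 : ∀ z ∈ bd, (Φ.comp F) z = proj (1 : Rep n r) := fun z hz => by
    simp [Φ, hF z hz, hs3]
  have h4 : (⟨fun z => proj (F z), continuous_proj.comp F.continuous⟩ :
      C(I × I, RepQuotGL n r)).HomotopicWith (Φ.comp F) BdConst :=
    bdHom_of_specializes (fun z => hs1 _) (bdConst_of_eq hb3) (bdConst_of_eq hb4)
  have h5 := bdHom_of_rel (tuple_null hn hs2 Φ (fun _ => rfl) F hF) (bdConst_of_eq hb4)
  exact null_of_bdHom hf ((((h1.trans h2).trans h3').trans h4).trans h5)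

end RepQuot

/-- For every `n ≥ 1` and `r ≥ 1`, the quotient of `GL_n(ℂ)^r` by diagonal conjugation has
trivial second homotopy group at every basepoint. -/
theorem pi2_repQuot_generalLinear_trivial (n r : ℕ) (hn : 1 ≤ n) (hr : 1 ≤ r)
    (x : RepQuotGL n r) :
    Subsingleton (HomotopyGroup (Fin 2) (RepQuotGL n r) x) := by
  open unitInterval in
  let e : C(Fin 2 → I, I × I) := ⟨fun p => (p 0, p 1), by fun_prop⟩
  let e' : C(I × I, Fin 2 → I) := ⟨fun z => ![z.1, z.2], by
    refine continuous_pi fun i => ?_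
    fin_cases i
    · exact continuous_fst
    · exact continuous_snd⟩
  have hee : ∀ p, e' (e p) = p := fun p => by
    funext i
    fin_cases i <;> rfl
  have hb : ∀ p ∈ Cube.boundary (Fin 2), e p ∈ RepQuot.bd := by
    rintro p ⟨i, hi⟩
    fin_cases i
    · rcases hi with h | h
      · exact Or.inl h
      · exact Or.inr (Or.inl h)
    · rcases hi with h | h
      · exact Or.inr (Or.inr (Or.inl h))
      · exact Or.inr (Or.inr (Or.inr h))
  have hb' : ∀ z ∈ RepQuot.bd, e' z ∈ Cube.boundary (Fin 2) := by
    rintro z (h | h | h | h)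
    · exact ⟨0, Or.inl h⟩
    · exact ⟨0, Or.inr h⟩
    · exact ⟨1, Or.inl h⟩
    · exact ⟨1, Or.inr h⟩
  have key : ∀ f : GenLoop (Fin 2) (RepQuotGL n r) x, GenLoop.Homotopic f GenLoop.const := by
    intro f
    obtain ⟨H⟩ := RepQuot.square_null hn (f.1.comp e') (x := x) fun z hz => f.2 _ (hb' z hz)
    refine ⟨⟨⟨⟨fun p => H (p.1, e p.2), by fun_prop⟩, fun p => ?_, fun p => ?_⟩, ?_⟩⟩
    · exact (H.apply_zero _).trans (congrArg f.1 (hee p))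
    · exact H.apply_one _
    · intro t p hp
      exact (H.prop t _ (hb p hp)).trans (congrArg f.1 (hee p))
  refine ⟨fun a b => ?_⟩
  induction a using Quotient.inductionOn with | _ a
  induction b using Quotient.inductionOn with | _ b
  exact Quotient.sound ((key a).trans (key b).symm)
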